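/- arXiv:1710.09287 — 3 statements merged into one kernel-verified Lean document; each statement's English description precedes it below -/
import Mathlib

section
/- Let ω ⊂ ℝ^d be a nonempty open connected set and v : ℝ^d → ℝ^d a Lipschitz, uniformly bounded vector field. Let μ⁰, μ¹ be compactly supported probability measures on ℝ^d, absolutely continuous with respect to the Lebesgue measure, satisfying the geometric condition. Then there exists T > 0 such that for every ε > 0 there exists a control u : ℝ^d × ℝ⁺ → ℝ^d with 𝟙_ω u uniformly bounded, Lipschitz in space and measurable in time, such that the (unique) solution μ of ∂_t μ + ∇·((v + 𝟙_ω u) μ) = 0, μ(0) = μ⁰, given by μ(t) = Φ_t^{v+𝟙_ω u} # μ⁰, satisfies W₁(μ(T), μ¹) ≤ ε. -/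
open MeasureTheory Set
open scoped ENNReal NNReal

noncomputable section

/-- The Euclidean space `ℝ^d`. -/
abbrev Euc (d : ℕ) := EuclideanSpace ℝ (Fin d)

/-- The support of a Borel measure: points all of whose open neighborhoods have
positive measure. -/
def msupport {d : ℕ} (μ : Measure (Euc d)) : Set (Euc d) :=
  {x | ∀ U : Set (Euc d), IsOpen U → x ∈ U → 0 < μ U}

/-- `Φ` is the flow of the (time-dependent) vector field `w`, in the Carathéodory
(integral) sense: `Φ t x = x + ∫₀ᵗ w (Φ s x) s ds`. -/
def IsFlow {d : ℕ} (w : Euc d → ℝ → Euc d) (Φ : ℝ → Euc d → Euc d) : Prop :=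
  ∀ x t, Φ t x = x + ∫ s in (0:ℝ)..t, w (Φ s x) s

/-- Wasserstein distance `W₁`, as an infimum over couplings. -/
def W1 {d : ℕ} (μ ν : Measure (Euc d)) : ℝ≥0∞ :=
  ⨅ (π : Measure (Euc d × Euc d)) (_ : π.map Prod.fst = μ) (_ : π.map Prod.snd = ν),
    ∫⁻ q, edist q.1 q.2 ∂π

/-- A vector field uniformly bounded, Lipschitz in space and measurable in time. -/
def IsRegularField {d : ℕ} (w : Euc d → ℝ → Euc d) : Prop :=
  (∃ C : ℝ, ∀ x t, ‖w x t‖ ≤ C) ∧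
  (∃ K : ℝ≥0, ∀ t : ℝ, LipschitzWith K fun x => w x t) ∧
  ∀ x, Measurable fun t => w x t


structure IsTraj {d : ℕ} (w : Euc d → ℝ → Euc d) (T : ℝ) (γ : ℝ → Euc d) : Prop where
  cont : ContinuousOn γ (Icc 0 T)
  eq : ∀ t ∈ Icc 0 T, γ t = γ 0 + ∫ s in (0:ℝ)..t, w (γ s) s

lemma reg_meas {d : ℕ} {w : Euc d → ℝ → Euc d} (hw : IsRegularField w) :
    Measurable (Function.uncurry w) := by
  obtain ⟨K, hK⟩ := hw.2.1
  exact measurable_uncurry_of_continuous_of_measurable (u := w) (fun t => (hK t).continuous) hw.2.2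

lemma reg_integrableOn {d : ℕ} {w : Euc d → ℝ → Euc d} (hw : IsRegularField w) {γ : ℝ → Euc d}
    {S : Set ℝ} (hS : volume S ≠ ∞) (hγ : AEMeasurable γ (volume.restrict S)) :
    IntegrableOn (fun s => w (γ s) s) S := by
  obtain ⟨C, hC⟩ := hw.1
  have : AEMeasurable (fun s => Function.uncurry w (γ s, s)) (volume.restrict S) :=
    (reg_meas hw).comp_aemeasurable (hγ.prodMk aemeasurable_id)
  exact ⟨this.aestronglyMeasurable, HasFiniteIntegral.restrict_of_bounded (C := C) hS.lt_top
    (Filter.Eventually.of_forall fun s => hC _ _)⟩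

lemma reg_intervalIntegrable {d : ℕ} {w : Euc d → ℝ → Euc d} (hw : IsRegularField w)
    {γ : ℝ → Euc d} {T : ℝ} (hγ : ContinuousOn γ (Icc 0 T)) {a b : ℝ} (ha : a ∈ Icc 0 T)
    (hb : b ∈ Icc 0 T) : IntervalIntegrable (fun s => w (γ s) s) volume a b := by
  have h : IntegrableOn (fun s => w (γ s) s) (Icc 0 T) :=
    reg_integrableOn hw (by simp) (hγ.aemeasurable measurableSet_Icc)
  rw [intervalIntegrable_iff]
  exact h.mono_set (uIoc_subset_uIcc.trans (by
    intro s hs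
    rcases hs with ⟨h1, h2⟩
    exact ⟨le_trans (le_inf ha.1 hb.1) h1, le_trans h2 (sup_le ha.2 hb.2)⟩))

lemma int_gronwall {f : ℝ → ℝ} {T K δ : ℝ} (hf : ContinuousOn f (Icc 0 T)) (hK : 0 ≤ K)
    (h : ∀ t ∈ Icc 0 T, f t ≤ δ + K * ∫ s in (0:ℝ)..t, f s) :
    ∀ t ∈ Icc 0 T, f t ≤ δ * Real.exp (K * t) := by
  intro t ht
  have hT : 0 ≤ T := ht.1.trans ht.2
  -- extend f continuously
  set g : ℝ → ℝ := IccExtend hT (domRestrict (Icc 0 T) f) with hg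
  have hgc : Continuous g := continuous_IccExtend_iff.2 (continuousOn_iff_continuous_domRestrict.1 hf)
  have hgf : ∀ s ∈ Icc 0 T, g s = f s := fun s hs => by
    rw [hg, IccExtend_of_mem hT _ hs]; rfl
  have hint : ∀ t ∈ Icc 0 T, ∫ s in (0:ℝ)..t, f s = ∫ s in (0:ℝ)..t, g s := by
    intro t ht
    apply intervalIntegral.integral_congr
    intro s hs
    rw [uIcc_of_le ht.1] at hs
    exact (hgf s ⟨hs.1, hs.2.trans ht.2⟩).symm
  set G : ℝ → ℝ := fun t => δ + K * ∫ s in (0:ℝ)..t, g s with hG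
  have hGd : ∀ t, HasDerivAt G (K * g t) t := fun t =>
    ((hgc.integral_hasStrictDerivAt 0 t).hasDerivAt.const_mul K).const_add δ
  have key := le_gronwallBound_of_liminf_deriv_right_le (f := G) (f' := fun t => K * g t)
    (δ := δ) (K := K) (ε := 0) (a := 0) (b := T)
    (fun t _ => (hGd t).continuousAt.continuousWithinAt)
    (fun x _ r hr => (hGd x).hasDerivWithinAt.liminf_right_slope_le hr) (by simp [hG]) (by
      intro x hx
      have hx' : x ∈ Icc 0 T := ⟨hx.1, hx.2.le⟩
      have := h x hx'
      rw [hint x hx', ← hgf x hx'] at this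
      simp only [add_zero]
      exact mul_le_mul_of_nonneg_left this hK) t ht
  rw [gronwallBound_ε0, sub_zero] at key
  refine le_trans ?_ key
  rw [hG]
  simp only
  rw [← hint t ht]
  exact h t ht

lemma traj_lip {d : ℕ} {w : Euc d → ℝ → Euc d} (hw : IsRegularField w) {K : ℝ≥0}
    (hK : ∀ t : ℝ, LipschitzWith K fun x => w x t) {T : ℝ} {γ₁ γ₂ : ℝ → Euc d}
    (h1 : IsTraj w T γ₁) (h2 : IsTraj w T γ₂) :
    ∀ t ∈ Icc 0 T, ‖γ₁ t - γ₂ t‖ ≤ ‖γ₁ 0 - γ₂ 0‖ * Real.exp (K * t) := by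
  apply int_gronwall (h1.cont.sub h2.cont).norm K.2
  intro t ht
  have h0 : (0:ℝ) ∈ Icc 0 T := ⟨le_rfl, ht.1.trans ht.2⟩
  have i1 := reg_intervalIntegrable hw h1.cont h0 ht
  have i2 := reg_intervalIntegrable hw h2.cont h0 ht
  have e : γ₁ t - γ₂ t = (γ₁ 0 - γ₂ 0) + ∫ s in (0:ℝ)..t, (w (γ₁ s) s - w (γ₂ s) s) := by
    rw [intervalIntegral.integral_sub i1 i2]
    rw [h1.eq t ht, h2.eq t ht]
    abel
  have ic : IntervalIntegrable (fun s => ‖γ₁ s - γ₂ s‖) volume 0 t := by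
    apply ContinuousOn.intervalIntegrable
    rw [uIcc_of_le ht.1]
    exact (h1.cont.sub h2.cont).norm.mono (Icc_subset_Icc le_rfl ht.2)
  calc ‖γ₁ t - γ₂ t‖ ≤ ‖γ₁ 0 - γ₂ 0‖ + ‖∫ s in (0:ℝ)..t, (w (γ₁ s) s - w (γ₂ s) s)‖ := by
        conv_lhs => rw [e]
        exact norm_add_le _ _
    _ ≤ ‖γ₁ 0 - γ₂ 0‖ + ∫ s in (0:ℝ)..t, ‖w (γ₁ s) s - w (γ₂ s) s‖ := by
        gcongr
        exact intervalIntegral.norm_integral_le_integral_norm ht.1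
    _ ≤ ‖γ₁ 0 - γ₂ 0‖ + ∫ s in (0:ℝ)..t, K * ‖γ₁ s - γ₂ s‖ := by
        gcongr
        apply intervalIntegral.integral_mono_on ht.1 (i1.sub i2).norm (ic.const_mul _)
        intro s _
        exact (hK s).norm_sub_le _ _
    _ = _ := by rw [intervalIntegral.integral_const_mul]; rfl

lemma traj_unique {d : ℕ} {w : Euc d → ℝ → Euc d} (hw : IsRegularField w)
    {T : ℝ} {γ₁ γ₂ : ℝ → Euc d}
    (h1 : IsTraj w T γ₁) (h2 : IsTraj w T γ₂) (h0 : γ₁ 0 = γ₂ 0) :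
    ∀ t ∈ Icc 0 T, γ₁ t = γ₂ t := by
  obtain ⟨K, hK⟩ := hw.2.1
  intro t ht
  have := traj_lip hw hK h1 h2 t ht
  rw [h0, sub_self, norm_zero, zero_mul] at this
  exact sub_eq_zero.1 (norm_le_zero_iff.1 this)

lemma traj_sub {d : ℕ} {w : Euc d → ℝ → Euc d} (hw : IsRegularField w)
    {T : ℝ} {γ : ℝ → Euc d} (h : IsTraj w T γ) {a b : ℝ} (ha : a ∈ Icc 0 T) (hb : b ∈ Icc 0 T) :
    γ b - γ a = ∫ s in a..b, w (γ s) s := by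
  have h0 : (0:ℝ) ∈ Icc 0 T := ⟨le_rfl, ha.1.trans ha.2⟩
  rw [← intervalIntegral.integral_interval_sub_left (reg_intervalIntegrable hw h.cont h0 hb)
    (reg_intervalIntegrable hw h.cont h0 ha), h.eq b hb, h.eq a ha]
  abel

lemma reg_rev {d : ℕ} {w : Euc d → ℝ → Euc d} (hw : IsRegularField w) (T : ℝ) :
    IsRegularField (fun x t => - w x (T - t)) := by
  obtain ⟨⟨C, hC⟩, ⟨K, hK⟩, hm⟩ := hw
  refine ⟨⟨C, fun x t => by rw [norm_neg]; exact hC _ _⟩, ⟨K, fun t => (hK (T - t)).neg⟩, fun x => ?_⟩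
  exact ((hm x).comp (measurable_const.sub measurable_id)).neg

lemma traj_rev {d : ℕ} {w : Euc d → ℝ → Euc d} (hw : IsRegularField w)
    {T : ℝ} (hT : 0 ≤ T) {γ : ℝ → Euc d} (h : IsTraj w T γ) :
    IsTraj (fun x t => - w x (T - t)) T (fun t => γ (T - t)) := by
  constructor
  · apply h.cont.comp (by fun_prop)
    intro t ht
    exact ⟨by linarith [ht.2], by linarith [ht.1]⟩
  · intro t ht
    have := traj_sub hw h (a := T) (b := T - t) ⟨hT, le_rfl⟩
      ⟨by linarith [ht.2], by linarith [ht.1]⟩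
    simp only [sub_zero]
    rw [intervalIntegral.integral_neg,
      intervalIntegral.integral_comp_sub_left (fun s => w (γ s) s) T, sub_zero,
      ← intervalIntegral.integral_symm, ← this]
    abel

lemma traj_congr_field {d : ℕ} {w w' : Euc d → ℝ → Euc d} {T : ℝ} {γ : ℝ → Euc d}
    (h : IsTraj w T γ) (hw : ∀ t ∈ Ico 0 T, w (γ t) t = w' (γ t) t) : IsTraj w' T γ := by
  refine ⟨h.cont, fun t ht => ?_⟩
  rw [h.eq t ht]
  congr 1
  apply intervalIntegral.integral_congr_ae
  have : ∀ᵐ s : ℝ, s ≠ t := by simp [ae_iff, measure_singleton]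
  filter_upwards [this] with s hs hs'
  rw [uIoc_of_le ht.1] at hs'
  exact hw s ⟨hs'.1.le, lt_of_lt_of_le (lt_of_le_of_ne hs'.2 hs) ht.2⟩

lemma traj_of_deriv {d : ℕ} {w : Euc d → ℝ → Euc d} (hw : IsRegularField w)
    {T : ℝ} {γ : ℝ → Euc d}
    (h : ∀ t ∈ Icc 0 T, HasDerivWithinAt γ (w (γ t) t) (Icc 0 T) t) : IsTraj w T γ := by
  have hc : ContinuousOn γ (Icc 0 T) := fun t ht => (h t ht).continuousWithinAt
  refine ⟨hc, fun t ht => ?_⟩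
  have h0 : (0:ℝ) ∈ Icc 0 T := ⟨le_rfl, ht.1.trans ht.2⟩
  have := intervalIntegral.integral_eq_sub_of_hasDeriv_right_of_le ht.1
    (hc.mono (Icc_subset_Icc le_rfl ht.2)) (f' := fun s => w (γ s) s) (fun s hs => by
      have h1 := h s ⟨hs.1.le, hs.2.le.trans ht.2⟩
      have h2 : HasDerivAt γ (w (γ s) s) s :=
        h1.hasDerivAt (Icc_mem_nhds hs.1 (lt_of_lt_of_le hs.2 ht.2))
      exact h2.hasDerivWithinAt) (reg_intervalIntegrable hw hc h0 ht)
  rw [this]; abel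

lemma traj_concat {d : ℕ} {w₁ w₂ : Euc d → ℝ → Euc d}
    {S T : ℝ} (hS : 0 ≤ S) (hT : 0 ≤ T) {γ₁ γ₂ : ℝ → Euc d}
    (h1 : IsTraj w₁ S γ₁) (h2 : IsTraj w₂ T γ₂) (h : γ₁ S = γ₂ 0)
    (hw : IsRegularField (fun x t => if t < S then w₁ x t else w₂ x (t - S))) :
    IsTraj (fun x t => if t < S then w₁ x t else w₂ x (t - S)) (S + T)
      (fun t => if t ≤ S then γ₁ t else γ₂ (t - S)) := by
  set w := (fun (x : Euc d) t => if t < S then w₁ x t else w₂ x (t - S)) with hwdef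
  set γ := (fun t => if t ≤ S then γ₁ t else γ₂ (t - S)) with hγ
  have g0 : γ 0 = γ₁ 0 := by simp [hγ, hS]
  have hc : ContinuousOn γ (Icc 0 (S + T)) := by
    apply ContinuousOn.if
    · intro a ha
      have : a = S := by
        have := frontier_le_subset_eq continuous_id continuous_const ha.2
        simpa using this
      subst this; simpa using h
    · apply h1.cont.mono
      intro t ht
      have := closure_le_eq (continuous_id : Continuous (fun t : ℝ => t)) (continuous_const (y := S))
      have h2 := ht.2
      simp only [id] at *
      rw [this] at h2
      exact ⟨ht.1.1, h2⟩
    · apply h2.cont.comp (by fun_prop)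
      intro t ht
      have h2 := ht.2
      simp only [not_le] at h2
      have := closure_lt_subset_le (continuous_const) (continuous_id : Continuous (fun t : ℝ => t)) h2
      simp only [mem_ofPred_eq, id] at this
      exact ⟨by linarith, by linarith [ht.1.2]⟩
  have A : IsTraj w S γ := by
    have : IsTraj w₁ S γ := by
      refine ⟨h1.cont.congr fun t ht => by simp [hγ, ht.2], fun t ht => ?_⟩
      have : γ t = γ₁ t := by simp [hγ, ht.2]
      rw [this, g0, h1.eq t ht]
      congr 1
      apply intervalIntegral.integral_congr
      intro s hs
      rw [uIcc_of_le ht.1] at hs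
      simp [hγ, hs.2.trans ht.2]
    apply traj_congr_field this
    intro t ht
    simp [hwdef, ht.2]
  refine ⟨hc, fun t ht => ?_⟩
  rcases le_total t S with hts | hts
  · exact A.eq t ⟨ht.1, hts⟩
  · have hγt : γ t = γ₂ (t - S) := by
      rcases eq_or_lt_of_le hts with e | hlt
      · subst e; simp [hγ, h]
      · simp [hγ, not_le.2 hlt]
    have h0 : (0:ℝ) ∈ Icc 0 (S + T) := ⟨le_rfl, by linarith⟩
    have hSm : S ∈ Icc 0 (S + T) := ⟨hS, by linarith⟩
    rw [← intervalIntegral.integral_add_adjacent_intervals (reg_intervalIntegrable hw hc h0 hSm)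
      (reg_intervalIntegrable hw hc hSm ht), ← add_assoc, ← A.eq S ⟨hS, le_rfl⟩]
    have e1 : γ S = γ₂ 0 := by simp [hγ, h]
    have e2 : ∫ s in S..t, w (γ s) s = ∫ s in S..t, w₂ (γ₂ (s - S)) (s - S) := by
      apply intervalIntegral.integral_congr
      intro s hs
      rw [uIcc_of_le hts] at hs
      have : γ s = γ₂ (s - S) := by
        rcases eq_or_lt_of_le hs.1 with e | hlt
        · subst e; simp [hγ, h]
        · simp [hγ, not_le.2 hlt]
      simp only [this, hwdef, not_lt.2 hs.1, if_false]
    rw [e1, e2, hγt, intervalIntegral.integral_comp_sub_right (fun s => w₂ (γ₂ s) s) S, sub_self]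
    exact h2.eq _ ⟨by linarith, by linarith [ht.2]⟩

lemma traj_of_integral {d : ℕ} {w : Euc d → ℝ → Euc d} (hw : IsRegularField w) {f : ℝ → Euc d}
    {x : Euc d} {T : ℝ} (hT : 0 ≤ T)
    (h : ∀ t ∈ Icc 0 T, f t = x + ∫ s in (0:ℝ)..t, w (f s) s) : IsTraj w T f ∧ f 0 = x := by
  have f0 : f 0 = x := by simp [h 0 ⟨le_rfl, hT⟩]
  refine ⟨?_, f0⟩
  obtain ⟨C, hC⟩ := hw.1
  have hC0 : 0 ≤ C := (norm_nonneg _).trans (hC 0 0)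
  set g := fun s => w (f s) s with hg
  set P : Set ℝ := {t | t ∈ Icc 0 T ∧ IntervalIntegrable g volume 0 t} with hP
  have hPo : P.OrdConnected := by
    refine ⟨fun a ha b hb c hc => ?_⟩
    have h0c : 0 ≤ c := ha.1.1.trans hc.1
    refine ⟨⟨h0c, hc.2.trans hb.1.2⟩, ?_⟩
    apply hb.2.mono_set
    rw [uIcc_of_le h0c, uIcc_of_le (h0c.trans hc.2)]
    exact Icc_subset_Icc le_rfl hc.2
  have hlip : LipschitzOnWith (Real.toNNReal C) f P := by
    apply LipschitzOnWith.of_dist_le_mul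
    intro a ha b hb
    have : f a - f b = ∫ s in b..a, g s := by
      rw [← intervalIntegral.integral_interval_sub_left ha.2 hb.2, h a ha.1, h b hb.1]
      abel
    rw [dist_eq_norm, this, Real.coe_toNNReal C hC0, Real.dist_eq]
    exact intervalIntegral.norm_integral_le_of_norm_le_const fun s _ => hC _ _
  have hPm : MeasurableSet P := hPo.measurableSet
  have hm : AEMeasurable f (volume.restrict (Icc 0 T)) := by
    have hU : Icc 0 T = P ∪ (Icc 0 T \ P) := by
      rw [union_sdiff_cancel]; exact fun t ht => ht.1
    rw [hU, aemeasurable_union_iff]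
    refine ⟨hlip.continuousOn.aemeasurable hPm, ?_⟩
    refine AEMeasurable.congr (aemeasurable_const (b := x)) ?_
    rw [Filter.EventuallyEq, ae_restrict_iff' (measurableSet_Icc.diff hPm)]
    refine Filter.Eventually.of_forall fun t ht => ?_
    rw [h t ht.1, intervalIntegral.integral_undef, add_zero]
    exact fun hi => ht.2 ⟨ht.1, hi⟩
  have hi := reg_integrableOn hw (by simp) hm
  have hPT : P = Icc 0 T := by
    apply Subset.antisymm (fun t ht => ht.1)
    intro t ht
    refine ⟨ht, ?_⟩
    rw [intervalIntegrable_iff, uIoc_of_le ht.1]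
    exact hi.mono_set fun s hs => ⟨hs.1.le, hs.2.trans ht.2⟩
  refine ⟨hPT ▸ hlip.continuousOn, fun t ht => ?_⟩
  rw [f0]; exact h t ht

lemma traj_bound {d : ℕ} {w : Euc d → ℝ → Euc d} (hw : IsRegularField w) {v : Euc d → Euc d}
    {C R : ℝ} (hv : ∀ x, ‖v x‖ ≤ C) (hwv : ∀ x t, R < ‖x‖ → w x t = v x)
    {T : ℝ} (hT : 0 ≤ T) {γ : ℝ → Euc d} (h : IsTraj w T γ) :
    ‖γ T‖ ≤ max ‖γ 0‖ R + C * T := by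
  have hC0 : 0 ≤ C := (norm_nonneg _).trans (hv 0)
  have key : ∀ a ∈ Icc 0 T, (∀ s ∈ Ioc a T, R < ‖γ s‖) → ‖γ T‖ ≤ ‖γ a‖ + C * T := by
    intro a ha hs
    have e := traj_sub hw h ha ⟨hT, le_rfl⟩
    have : ‖∫ s in a..T, w (γ s) s‖ ≤ C * |T - a| := by
      apply intervalIntegral.norm_integral_le_of_norm_le_const
      intro s hs'
      rw [uIoc_of_le ha.2] at hs'
      rw [hwv _ _ (hs s hs')]; exact hv _
    rw [abs_of_nonneg (by linarith [ha.2])] at this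
    have h2 : ‖γ T‖ ≤ ‖γ a‖ + ‖γ T - γ a‖ := by
      have := norm_add_le (γ a) (γ T - γ a); simpa using this
    rw [e] at h2
    nlinarith [ha.1]
  by_cases hne : ∃ s ∈ Icc 0 T, ‖γ s‖ ≤ R
  · have hcl : IsCompact (Icc 0 T ∩ {s | ‖γ s‖ ≤ R}) := by
      have : IsClosed (Icc 0 T ∩ γ ⁻¹' (Metric.closedBall 0 R)) :=
        h.cont.preimage_isClosed_of_isClosed isClosed_Icc Metric.isClosed_closedBall
      apply isCompact_Icc.of_isClosed_subset _ inter_subset_left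
      convert this using 2
      ext s; simp
    obtain ⟨a, ha, hmax⟩ := hcl.exists_isGreatest (by obtain ⟨s, h1, h2⟩ := hne; exact ⟨s, h1, h2⟩)
    have := key a ha.1 (fun s hs => by
      by_contra hcon
      have := hmax ⟨⟨ha.1.1.trans hs.1.le, hs.2⟩, not_lt.1 hcon⟩
      linarith [hs.1])
    have h3 : ‖γ a‖ ≤ R := ha.2
    linarith [le_max_right ‖γ 0‖ R]
  · push Not at hne
    have := key 0 ⟨le_rfl, hT⟩ fun s hs => hne s ⟨hs.1.le, hs.2⟩
    linarith [le_max_left ‖γ 0‖ R]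

lemma traj_exists {d : ℕ} {w : Euc d → ℝ → Euc d} (hw : IsRegularField w)
    (hcont : ∀ x, Continuous fun t => w x t) {T : ℝ} (hT : 0 ≤ T) (x : Euc d) :
    ∃ γ, IsTraj w T γ ∧ γ 0 = x := by
  obtain ⟨C, hC⟩ := hw.1
  obtain ⟨K, hK⟩ := hw.2.1
  have hC0 : 0 ≤ C := (norm_nonneg _).trans (hC 0 0)
  have hp : IsPicardLindelof (fun t x => w x t) (tmin := 0) (tmax := T) ⟨0, le_rfl, hT⟩ x
      (Real.toNNReal (C * T)) 0 (Real.toNNReal C) K := by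
    refine ⟨fun t _ => (hK t).lipschitzOnWith, fun y _ => (hcont y).continuousOn, fun t _ y _ => ?_, ?_⟩
    · rw [Real.coe_toNNReal C hC0]; exact hC _ _
    · rw [Real.coe_toNNReal C hC0, Real.coe_toNNReal _ (mul_nonneg hC0 hT)]
      simp [hT]
  obtain ⟨γ, h0, hγ⟩ := hp.exists_eq_forall_mem_Icc_hasDerivWithinAt₀
  exact ⟨γ, traj_of_deriv hw hγ, h0⟩


def AdmW {d : ℕ} (v : Euc d → Euc d) (ω : Set (Euc d)) (R : ℝ) (w : Euc d → ℝ → Euc d) (T : ℝ)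
    (F : Euc d → Euc d) : Prop :=
  IsRegularField w ∧ (∀ x t, x ∉ ω ∩ Metric.closedBall 0 R → w x t = v x) ∧
  Function.Surjective F ∧ ∀ x, ∃ γ, IsTraj w T γ ∧ γ 0 = x ∧ γ T = F x

def Adm {d : ℕ} (v : Euc d → Euc d) (ω : Set (Euc d)) (R : ℝ) (T : ℝ)
    (F : Euc d → Euc d) : Prop := ∃ w, AdmW v ω R w T F

lemma adm_comp {d : ℕ} {v : Euc d → Euc d} {ω : Set (Euc d)} {R S T : ℝ} (hS : 0 ≤ S)
    (hT : 0 ≤ T) {F G : Euc d → Euc d} (hF : Adm v ω R S F) (hG : Adm v ω R T G) :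
    Adm v ω R (S + T) (G ∘ F) := by
  obtain ⟨w₁, r1, o1, s1, t1⟩ := hF
  obtain ⟨w₂, r2, o2, s2, t2⟩ := hG
  have hr : IsRegularField (fun x t => if t < S then w₁ x t else w₂ x (t - S)) := by
    obtain ⟨⟨C, hC⟩, ⟨K, hK⟩, hm⟩ := r1
    obtain ⟨⟨C', hC'⟩, ⟨K', hK'⟩, hm'⟩ := r2
    refine ⟨⟨max C C', fun x t => ?_⟩, ⟨max K K', fun t => ?_⟩, fun x => ?_⟩
    · dsimp only
      split_ifs
      · exact (hC _ _).trans (le_max_left _ _)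
      · exact (hC' _ _).trans (le_max_right _ _)
    · by_cases h : t < S
      · simp only [h, if_true]; exact (hK t).weaken (le_max_left _ _)
      · simp only [h, if_false]; exact (hK' (t - S)).weaken (le_max_right _ _)
    · exact Measurable.ite measurableSet_Iio (hm x)
        ((hm' x).comp (measurable_id.sub measurable_const))
  refine ⟨_, hr, fun x t hx => ?_, s2.comp s1, fun x => ?_⟩
  · rw [o1 x _ hx, o2 x _ hx, ite_self]
  · obtain ⟨γ₁, a1, b1, c1⟩ := t1 x
    obtain ⟨γ₂, a2, b2, c2⟩ := t2 (F x)
    refine ⟨_, traj_concat hS hT a1 a2 (by rw [c1, b2]) hr, by simp [hS, b1], ?_⟩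
    by_cases h : T = 0
    · subst h; simp [c1, ← c2, b2]
    · have : ¬ (S + T ≤ S) := by
        have := lt_of_le_of_ne hT (Ne.symm h); linarith
      simp [this, c2]

lemma adm_lip {d : ℕ} {v : Euc d → Euc d} {ω : Set (Euc d)} {R T : ℝ} (hT : 0 ≤ T)
    {F : Euc d → Euc d} (hF : Adm v ω R T F) : ∃ K, LipschitzWith K F := by
  obtain ⟨w, r, o, s, t⟩ := hF
  obtain ⟨K, hK⟩ := r.2.1
  refine ⟨Real.toNNReal (Real.exp (K * T)), LipschitzWith.of_dist_le_mul fun x y => ?_⟩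
  obtain ⟨γ₁, a1, b1, c1⟩ := t x
  obtain ⟨γ₂, a2, b2, c2⟩ := t y
  have := traj_lip r hK a1 a2 T ⟨hT, le_rfl⟩
  rw [b1, b2, c1, c2] at this
  rw [dist_eq_norm, dist_eq_norm, Real.coe_toNNReal _ (Real.exp_pos _).le, mul_comm]
  exact this

lemma adm_rev {d : ℕ} {v : Euc d → Euc d} {ω : Set (Euc d)} {R T : ℝ} (hT : 0 ≤ T)
    {F : Euc d → Euc d} (hF : Adm (fun x => - v x) ω R T F) :
    ∃ G, Adm v ω R T G ∧ (∀ x, G (F x) = x) ∧ (∀ y, F (G y) = y) := by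
  obtain ⟨w, r, o, s, t⟩ := hF
  choose G hG using s
  have hr := reg_rev r T
  have hinj : Function.Injective F := by
    intro x y hxy
    obtain ⟨γ₁, a1, b1, c1⟩ := t x
    obtain ⟨γ₂, a2, b2, c2⟩ := t y
    have := traj_unique hr (traj_rev r hT a1) (traj_rev r hT a2) (by simp [c1, c2, hxy]) T ⟨hT, le_rfl⟩
    simpa [b1, b2] using this
  have hGF : ∀ x, G (F x) = x := fun x => hinj (hG (F x))
  refine ⟨G, ⟨_, hr, fun x t hx => ?_, fun x => ⟨F x, hGF x⟩, fun y => ?_⟩, hGF, hG⟩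
  · simp [o x _ hx]
  · obtain ⟨γ, a, b, c⟩ := t (G y)
    exact ⟨_, traj_rev r hT a, by simp [c, hG], by simp [b]⟩

lemma adm_bound {d : ℕ} {v : Euc d → Euc d} {ω : Set (Euc d)} {R T C : ℝ} (hT : 0 ≤ T)
    (hv : ∀ x, ‖v x‖ ≤ C) {F : Euc d → Euc d} (hF : Adm v ω R T F) (x : Euc d) :
    ‖F x‖ ≤ max ‖x‖ R + C * T := by
  obtain ⟨w, r, o, s, t⟩ := hF
  obtain ⟨γ, a, b, c⟩ := t x
  have := traj_bound r hv (R := R) (fun x t hx => o x t fun h => by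
    have := h.2; simp at this; linarith) hT a
  rwa [b, c] at this

lemma admW_exists {d : ℕ} {v : Euc d → Euc d} {ω : Set (Euc d)} {R T : ℝ} (hT : 0 ≤ T)
    {w : Euc d → ℝ → Euc d} (hw : IsRegularField w)
    (ho : ∀ x t, x ∉ ω ∩ Metric.closedBall 0 R → w x t = v x)
    (hcont : ∀ x, Continuous fun t => w x t) : ∃ F, AdmW v ω R w T F := by
  choose γ h1 h2 using fun x => traj_exists hw hcont hT x
  refine ⟨fun x => γ x T, hw, ho, fun y => ?_, fun x => ⟨γ x, h1 x, h2 x, rfl⟩⟩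
  obtain ⟨g, g1, g2⟩ := traj_exists (reg_rev hw T)
    (fun x => ((hcont x).comp (by fun_prop : Continuous fun t => T - t)).neg) hT y
  have := traj_rev (reg_rev hw T) hT g1
  simp only [sub_sub_cancel, neg_neg] at this
  refine ⟨g T, ?_⟩
  have e := traj_unique hw (h1 (g T)) this (by simp [h2]) T ⟨hT, le_rfl⟩
  simp only [e, sub_self, g2]

lemma admW_eq {d : ℕ} {v : Euc d → Euc d} {ω : Set (Euc d)} {R T : ℝ} (hT : 0 ≤ T)
    {w : Euc d → ℝ → Euc d} {F : Euc d → Euc d} (hF : AdmW v ω R w T F) {γ : ℝ → Euc d}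
    (hγ : IsTraj w T γ) : F (γ 0) = γ T := by
  obtain ⟨r, o, s, t⟩ := hF
  obtain ⟨g, a, b, c⟩ := t (γ 0)
  rw [← c]
  exact traj_unique r a hγ b T ⟨hT, le_rfl⟩

lemma lip_cutoff_mul {d : ℕ} {χ : Euc d → ℝ} {Kχ : ℝ≥0} (hχ : LipschitzWith Kχ χ)
    (h1 : ∀ x, |χ x| ≤ 1) {A : Set (Euc d)} (hA : ∀ x, x ∉ A → χ x = 0)
    {f : Euc d → Euc d} {K M : ℝ≥0} (hf : LipschitzWith K f) (hM : ∀ x ∈ A, ‖f x‖ ≤ M) :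
    LipschitzWith (Kχ * M + K) (fun x => χ x • f x) := by
  have main : ∀ x ∈ A, ∀ y, ‖χ x • f x - χ y • f y‖ ≤ (Kχ * M + K) * ‖x - y‖ := by
    intro x hx y
    have e : χ x • f x - χ y • f y = (χ x - χ y) • f x + χ y • (f x - f y) := by
      rw [sub_smul, smul_sub]; abel
    rw [e]
    refine (norm_add_le _ _).trans ?_
    rw [norm_smul, norm_smul]
    have a1 : ‖χ x - χ y‖ ≤ Kχ * ‖x - y‖ := hχ.norm_sub_le _ _
    have a2 : ‖f x - f y‖ ≤ K * ‖x - y‖ := hf.norm_sub_le _ _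
    have a3 : ‖χ y‖ ≤ 1 := h1 y
    calc ‖χ x - χ y‖ * ‖f x‖ + ‖χ y‖ * ‖f x - f y‖
        ≤ (Kχ * ‖x - y‖) * M + 1 * (K * ‖x - y‖) := by
          gcongr
          exact hM x hx
      _ = _ := by ring
  apply LipschitzWith.of_dist_le_mul
  intro x y
  rw [dist_eq_norm, dist_eq_norm]
  push_cast
  by_cases hx : x ∈ A
  · exact main x hx y
  by_cases hy : y ∈ A
  · rw [norm_sub_rev, norm_sub_rev x y]; exact main y hy x
  · rw [hA x hx, hA y hy]; simp; positivity

lemma block_exists {d : ℕ} {v : Euc d → Euc d} {Kv : ℝ≥0} (hvL : LipschitzWith Kv v)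
    {C : ℝ} (hv : ∀ x, ‖v x‖ ≤ C) {ω : Set (Euc d)} {R T : ℝ} (hT : 0 ≤ T)
    {χ : Euc d → ℝ} {Kχ : ℝ≥0} (hχ : LipschitzWith Kχ χ) (h1 : ∀ x, |χ x| ≤ 1)
    (hχ0 : ∀ x, x ∉ ω ∩ Metric.closedBall 0 R → χ x = 0)
    {U : Euc d → ℝ → Euc d} {KU M : ℝ≥0} (hU : ∀ t, LipschitzWith KU fun x => U x t)
    (hUM : ∀ x ∈ ω ∩ Metric.closedBall 0 R, ∀ t, ‖U x t‖ ≤ M) (hUc : ∀ x, Continuous fun t => U x t) :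
    ∃ F, AdmW v ω R (fun x t => v x + χ x • (U x t - v x)) T F := by
  have hC0 : 0 ≤ C := (norm_nonneg _).trans (hv 0)
  have hb : ∀ x ∈ ω ∩ Metric.closedBall 0 R, ∀ t, ‖U x t - v x‖ ≤ (M + Real.toNNReal C : ℝ≥0) := by
    intro x hx t
    push_cast
    rw [Real.coe_toNNReal C hC0]
    exact (norm_sub_le _ _).trans (add_le_add (hUM x hx t) (hv x))
  have hc : ∀ x, Continuous fun t => v x + χ x • (U x t - v x) := fun x => by
    have := hUc x; fun_prop
  apply admW_exists hT _ (fun x t hx => by simp [hχ0 x hx]) hc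
  refine ⟨⟨C + (M + Real.toNNReal C : ℝ≥0), fun x t => ?_⟩,
    ⟨Kv + (Kχ * (M + Real.toNNReal C) + (KU + Kv)), fun t => ?_⟩, fun x => (hc x).measurable⟩
  · refine (norm_add_le _ _).trans (add_le_add (hv x) ?_)
    by_cases hx : x ∈ ω ∩ Metric.closedBall 0 R
    · rw [norm_smul]
      calc _ ≤ 1 * ‖U x t - v x‖ := by gcongr; exact h1 x
        _ ≤ _ := by rw [one_mul]; exact hb x hx t
    · rw [hχ0 x hx]; simp; positivity
  · exact hvL.add (lip_cutoff_mul hχ h1 hχ0 ((hU t).sub hvL) fun x hx => hb x hx t)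

def cut {d : ℕ} (K : Set (Euc d)) (a h : ℝ) (x : Euc d) : ℝ :=
  max 0 (min 1 (1 - (Metric.infDist x K - a) / h))

lemma cut_lip {d : ℕ} (K : Set (Euc d)) (a : ℝ) {h : ℝ} (hh : 0 < h) :
    ∃ L, LipschitzWith L (cut K a h) := by
  have h1 : LipschitzWith (Real.toNNReal (1 / h)) fun x => 1 - (Metric.infDist x K - a) / h := by
    apply LipschitzWith.of_dist_le_mul
    intro x y
    have := (Metric.lipschitz_infDist_pt K).dist_le_mul x y
    rw [Real.dist_eq] at *
    rw [Real.coe_toNNReal _ (by positivity)]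
    have e : 1 - (Metric.infDist x K - a) / h - (1 - (Metric.infDist y K - a) / h)
      = - ((1 / h) * (Metric.infDist x K - Metric.infDist y K)) := by field_simp; ring
    rw [e, abs_neg, abs_mul, abs_of_pos (by positivity : 0 < 1 / h)]
    gcongr
    simpa using this
  exact ⟨_, (h1.const_min 1).const_max 0⟩

lemma cut_abs {d : ℕ} (K : Set (Euc d)) (a h : ℝ) (x : Euc d) : |cut K a h x| ≤ 1 := by
  unfold cut
  rw [abs_of_nonneg (le_max_left _ _)]
  exact max_le zero_le_one (min_le_left _ _)

lemma cut_one {d : ℕ} {K : Set (Euc d)} {a h : ℝ} (hh : 0 < h) {x : Euc d}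
    (hx : Metric.infDist x K ≤ a) : cut K a h x = 1 := by
  unfold cut
  have : (Metric.infDist x K - a) / h ≤ 0 := div_nonpos_of_nonpos_of_nonneg (by linarith) hh.le
  rw [min_eq_left (by linarith)]; simp

lemma cut_zero {d : ℕ} {K : Set (Euc d)} {a h : ℝ} (hh : 0 < h) {x : Euc d}
    (hx : a + h ≤ Metric.infDist x K) : cut K a h x = 0 := by
  unfold cut
  have : 1 ≤ (Metric.infDist x K - a) / h := by rw [le_div_iff₀ hh]; linarith
  rw [max_eq_left]
  exact (min_le_right _ _).trans (by linarith)


lemma traj_shift {d : ℕ} {w : Euc d → ℝ → Euc d} (hw : IsRegularField w)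
    {T : ℝ} {γ : ℝ → Euc d} (h : IsTraj w T γ) {a : ℝ} (ha : a ∈ Icc 0 T) :
    IsTraj (fun x t => w x (a + t)) (T - a) (fun t => γ (a + t)) := by
  constructor
  · apply h.cont.comp (by fun_prop)
    intro t ht
    exact ⟨by linarith [ht.1, ha.1], by linarith [ht.2]⟩
  · intro t ht
    have := traj_sub hw h ha (b := a + t) ⟨by linarith [ht.1, ha.1], by linarith [ht.2]⟩
    rw [intervalIntegral.integral_comp_add_left (fun s => w (γ s) s)]
    simp only [add_zero]
    rw [← this]; abel

lemma traj_ext {d : ℕ} {v : Euc d → Euc d} (hv : Continuous v)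
    {T : ℝ} (hT : 0 ≤ T) {γ : ℝ → Euc d} (h : IsTraj (fun x _ => v x) T γ) :
    ∃ G : ℝ → Euc d, Continuous G ∧ (∀ t ∈ Icc 0 T, G t = γ t) ∧
      ∀ t ∈ Icc 0 T, HasDerivAt G (v (G t)) t := by
  set g : ℝ → Euc d := IccExtend hT (domRestrict (Icc 0 T) γ) with hg
  have hgc : Continuous g := continuous_IccExtend_iff.2 (continuousOn_iff_continuous_domRestrict.1 h.cont)
  have hgf : ∀ s ∈ Icc 0 T, g s = γ s := fun s hs => by
    simp [hg, IccExtend_of_mem hT _ hs]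
  have hvc : Continuous fun t => v (g t) := hv.comp hgc
  have hd : ∀ t, HasDerivAt (fun t => γ 0 + ∫ s in (0:ℝ)..t, v (g s)) (v (g t)) t := fun t =>
    (hvc.integral_hasStrictDerivAt 0 t).hasDerivAt.const_add _
  have he : ∀ t ∈ Icc 0 T, γ 0 + ∫ s in (0:ℝ)..t, v (g s) = γ t := by
    intro t ht
    rw [h.eq t ht]
    congr 1
    apply intervalIntegral.integral_congr
    intro s hs
    rw [uIcc_of_le ht.1] at hs
    simp only [hgf s ⟨hs.1, hs.2.trans ht.2⟩]
  refine ⟨_, continuous_iff_continuousAt.2 fun t => (hd t).continuousAt, he, fun t ht => ?_⟩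
  rw [he t ht, ← hgf t ht]
  exact hd t

lemma stop_pt {d : ℕ} {v : Euc d → Euc d} {Kv : ℝ≥0} (hvL : LipschitzWith Kv v)
    {C : ℝ} (hv : ∀ x, ‖v x‖ ≤ C) {ω : Set (Euc d)} {R T : ℝ} (hT : 0 ≤ T)
    {K S : Set (Euc d)} (hK : IsCompact K) (hS : IsOpen S) (hKS : K ⊆ S)
    {γ : ℝ → Euc d} (hγ : IsTraj (fun x _ => v x) T γ) (hit : ∃ t ∈ Icc 0 T, γ t ∈ K) :
    ∃ h0 > 0, ∀ h, 0 < h → h < h0 → ∀ F,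
      AdmW v ω R (fun x _ => v x + cut K 0 h x • (0 - v x)) T F → F (γ 0) ∈ S := by
  obtain ⟨G, Gc, Gγ, Gd⟩ := traj_ext hvL.continuous hT hγ
  obtain ⟨t1, ht1, hit⟩ := hit
  have Knon : K.Nonempty := ⟨_, hit⟩
  have hcomp : IsCompact (Icc 0 T ∩ G ⁻¹' K) := isCompact_Icc.inter_right (hK.isClosed.preimage Gc)
  obtain ⟨τ, ⟨hτ, hτK⟩, hτm⟩ := hcomp.exists_isLeast ⟨t1, ht1, by rw [mem_preimage, Gγ t1 ht1]; exact hit⟩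
  have hnb : G ⁻¹' S ∈ nhds τ := (hS.preimage Gc).mem_nhds (hKS hτK)
  obtain ⟨η, hη, hηS⟩ := Metric.mem_nhds_iff.1 hnb
  have hfc : Continuous fun r => Metric.infDist (G r) K := (Metric.continuous_infDist_pt K).comp Gc
  obtain ⟨h0, h0pos, hh0⟩ := (isCompact_Icc (a := (0:ℝ)) (b := τ - η / 2)).exists_forall_le'
    hfc.continuousOn (a := 0) (fun r hr => by
      rw [← hK.isClosed.notMem_iff_infDist_pos Knon]
      intro hrK
      have := hτm ⟨⟨hr.1, by linarith [hr.2, hτ.2]⟩, hrK⟩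
      linarith [hr.2])
  refine ⟨h0, h0pos, fun h hh hlt F hF => ?_⟩
  obtain ⟨g, gt, g0, gT⟩ := hF.2.2.2 (γ 0)
  rw [← gT]
  have hreg := hF.1
  obtain ⟨L, hL⟩ := cut_lip K 0 hh
  set ge : ℝ → Euc d := IccExtend hT (domRestrict (Icc 0 T) g) with hg
  have hgc : Continuous ge := continuous_IccExtend_iff.2 (continuousOn_iff_continuous_domRestrict.1 gt.cont)
  have hgf : ∀ s ∈ Icc 0 T, ge s = g s := fun s hs => by
    simp [hg, IccExtend_of_mem hT _ hs]
  set c : ℝ → ℝ := fun r => 1 - cut K 0 h (ge r) with hc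
  have hcc : Continuous c := continuous_const.sub (hL.continuous.comp hgc)
  have hc0 : ∀ r, 0 ≤ c r := fun r => by
    have := (abs_le.1 (cut_abs K 0 h (ge r))).2; simp only [hc]; linarith
  have hc1 : ∀ r, c r ≤ 1 := fun r => by
    have : 0 ≤ cut K 0 h (ge r) := le_max_left _ _
    simp only [hc]; linarith
  set s : ℝ → ℝ := fun t => ∫ r in (0:ℝ)..t, c r with hs
  have sd : ∀ t, HasDerivAt s (c t) t := fun t => (hcc.integral_hasStrictDerivAt 0 t).hasDerivAt
  have sc : Continuous s := continuous_iff_continuousAt.2 fun t => (sd t).continuousAt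
  have smono : Monotone s := monotone_of_deriv_nonneg (fun t => (sd t).differentiableAt)
    fun t => by rw [(sd t).deriv]; exact hc0 t
  have s0 : s 0 = 0 := by simp [hs]
  have sle : ∀ t, 0 ≤ t → s t ≤ t := by
    intro t ht
    have : s t ≤ ∫ r in (0:ℝ)..t, (1:ℝ) := intervalIntegral.integral_mono_on ht
      (hcc.intervalIntegrable _ _) (by simp) (fun r _ => hc1 r)
    simpa using this
  have smem : ∀ t ∈ Icc 0 T, s t ∈ Icc 0 T := fun t ht =>
    ⟨by rw [← s0]; exact smono ht.1, (sle t ht.1).trans ht.2⟩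
  have hreg2 : IsRegularField (fun x t => c t • v x) := by
    refine ⟨⟨C, fun x t => ?_⟩, ⟨Kv, fun t => ?_⟩, fun x => (hcc.smul continuous_const).measurable⟩
    · rw [norm_smul, Real.norm_of_nonneg (hc0 t)]
      calc c t * ‖v x‖ ≤ 1 * ‖v x‖ := by gcongr; exact hc1 t
        _ ≤ C := by rw [one_mul]; exact hv x
    · apply LipschitzWith.of_dist_le_mul
      intro x y
      rw [dist_smul₀, Real.norm_of_nonneg (hc0 t)]
      calc c t * dist (v x) (v y) ≤ 1 * dist (v x) (v y) := by gcongr; exact hc1 t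
        _ ≤ _ := by rw [one_mul]; exact hvL.dist_le_mul x y
  have gt2 : IsTraj (fun x t => c t • v x) T g := by
    apply traj_congr_field gt
    intro t ht
    simp only [hc, hgf t ⟨ht.1, ht.2.le⟩, sub_smul, one_smul, smul_sub, smul_zero]
    abel
  have gt3 : IsTraj (fun x t => c t • v x) T (fun t => G (s t)) := by
    apply traj_of_deriv hreg2
    intro t ht
    exact ((Gd (s t) (smem t ht)).scomp t (sd t)).hasDerivWithinAt
  have geq : ∀ t ∈ Icc 0 T, g t = G (s t) := by
    apply traj_unique hreg2 gt2 gt3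
    simp only [s0, g0, Gγ 0 ⟨le_rfl, hT⟩]
  have hTT : T ∈ Icc 0 T := ⟨hT, le_rfl⟩
  by_cases hcase : τ ≤ s T
  · -- passes
    obtain ⟨a, ha, hsa⟩ := intermediate_value_Icc hT sc.continuousOn ⟨by rw [s0]; exact hτ.1, hcase⟩
    have gK : g a ∈ K := by rw [geq a ha, hsa]; exact hτK
    have t1 := traj_shift hreg gt ha
    have t2 : IsTraj (fun x _ => v x + cut K 0 h x • (0 - v x)) (T - a) (fun _ => g a) := by
      refine ⟨continuousOn_const, fun t _ => ?_⟩
      rw [cut_one hh (by rw [Metric.infDist_zero_of_mem gK])]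
      simp
    have := traj_unique hreg t1 t2 (by simp) (T - a) ⟨by linarith [ha.2], le_rfl⟩
    simp only [add_sub_cancel] at this
    rw [this]
    exact hKS gK
  · push Not at hcase
    rw [geq T hTT]
    by_cases hc2 : s T ≤ τ - η / 2
    · exfalso
      have : s T = ∫ r in (0:ℝ)..T, (1:ℝ) := by
        apply intervalIntegral.integral_congr
        intro r hr
        rw [uIcc_of_le hT] at hr
        have := hh0 (s r) ⟨(smem r hr).1, (smono hr.2).trans hc2⟩
        simp only [hc, hgf r hr, geq r hr]
        rw [cut_zero hh (by linarith)]; simp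
      simp at this
      linarith [hτ.2]
    · push Not at hc2
      apply hηS
      rw [Metric.mem_ball, Real.dist_eq, abs_lt]
      constructor <;> linarith


lemma meas_small {X : Type*} [MeasurableSpace X] {μ : Measure X} [IsFiniteMeasure μ] {A : ℕ → Set X}
    (hA : ∀ n, MeasurableSet (A n)) (h : ∀ᵐ x ∂μ, ∀ᶠ n in Filter.atTop, x ∉ A n) :
    Filter.Tendsto (fun n => μ (A n)) Filter.atTop (nhds 0) := by
  have := tendsto_measure_of_ae_tendsto_indicator_of_isFiniteMeasure (μ := μ) Filter.atTop
    (A := ∅) MeasurableSet.empty hA (by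
      filter_upwards [h] with x hx
      filter_upwards [hx] with n hn
      simp [hn])
  simpa using this

lemma meas_small_ex {X : Type*} [MeasurableSpace X] {μ : Measure X} [IsFiniteMeasure μ] {A : ℕ → Set X}
    (hA : ∀ n, MeasurableSet (A n)) (h : ∀ᵐ x ∂μ, ∀ᶠ n in Filter.atTop, x ∉ A n) {δ : ℝ≥0∞} (hδ : 0 < δ) :
    ∃ n, μ (A n) ≤ δ := by
  have := (meas_small hA h).eventually (gt_mem_nhds hδ)
  obtain ⟨n, hn⟩ := this.exists
  exact ⟨n, hn.le⟩

lemma adm_cont {d : ℕ} {v : Euc d → Euc d} {ω : Set (Euc d)} {R T : ℝ} (hT : 0 ≤ T)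
    {F : Euc d → Euc d} (hF : Adm v ω R T F) : Continuous F := by
  obtain ⟨K, hK⟩ := adm_lip hT hF
  exact hK.continuous

lemma stop_block {d : ℕ} {v : Euc d → Euc d} {Kv : ℝ≥0} (hvL : LipschitzWith Kv v)
    {C : ℝ} (hv : ∀ x, ‖v x‖ ≤ C) {ω : Set (Euc d)} {R T : ℝ} (hT : 0 ≤ T)
    {K S : Set (Euc d)} (hK : IsCompact K) (hS : IsOpen S) (hKS : K ⊆ S)
    {h1 : ℝ} (h1pos : 0 < h1) (hm : ∀ x, Metric.infDist x K < h1 → x ∈ ω ∩ Metric.closedBall 0 R)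
    (μ : Measure (Euc d)) [IsFiniteMeasure μ]
    (hit : ∀ᵐ x ∂μ, ∃ γ, IsTraj (fun x _ => v x) T γ ∧ γ 0 = x ∧ ∃ t ∈ Icc 0 T, γ t ∈ K)
    {δ : ℝ≥0∞} (hδ : 0 < δ) :
    ∃ F, Adm v ω R T F ∧ μ (F ⁻¹' S)ᶜ ≤ δ := by
  have hp : ∀ n : ℕ, 0 < h1 / (n + 1) := fun n => by positivity
  have key : ∀ n : ℕ, ∃ F, AdmW v ω R (fun x _ => v x + cut K 0 (h1 / (n + 1)) x • (0 - v x)) T F := by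
    intro n
    obtain ⟨L, hL⟩ := cut_lip K 0 (hp n)
    refine block_exists hvL hv hT hL (cut_abs _ _ _) (fun x hx => cut_zero (hp n) ?_)
      (U := fun _ _ => 0) (KU := 0) (M := 0) (fun t => LipschitzWith.const _) (by simp) (fun x => continuous_const)
    by_contra hlt
    push Not at hlt
    apply hx
    apply hm
    refine lt_of_lt_of_le hlt ?_
    rw [zero_add]
    apply div_le_self h1pos.le
    have : (0:ℝ) ≤ n := Nat.cast_nonneg n
    linarith
  choose F hF using key
  obtain ⟨n, hn⟩ := meas_small_ex (μ := μ) (A := fun n => (F n ⁻¹' S)ᶜ)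
    (fun n => ((hS.preimage (adm_cont hT ⟨_, hF n⟩)).measurableSet).compl) (by
      filter_upwards [hit] with x ⟨γ, γt, γ0, hγ⟩
      obtain ⟨h0, h0p, hh⟩ := stop_pt hvL hv (ω := ω) (R := R) hT hK hS hKS γt hγ
      have : Filter.Tendsto (fun n : ℕ => h1 / ((n : ℝ) + 1)) Filter.atTop (nhds 0) := by
        have := (tendsto_one_div_add_atTop_nhds_zero_nat (𝕜 := ℝ)).const_mul h1
        simpa [div_eq_mul_inv] using this
      filter_upwards [this.eventually (gt_mem_nhds h0p)] with n hn
      have := hh _ (hp n) hn _ (hF n)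
      rw [γ0] at this
      simpa using this) hδ
  exact ⟨F n, ⟨_, hF n⟩, hn⟩

inductive BTree {d : ℕ} (ω : Set (Euc d)) (c0 : Euc d) (r0 : ℝ) : Set (Euc d) → Prop
  | base : BTree ω c0 r0 (Metric.ball c0 r0)
  | step (S : Set (Euc d)) (c : Euc d) (r : ℝ) : BTree ω c0 r0 S → 0 < r →
      (Metric.ball c r ∩ S).Nonempty → Metric.closedBall c r ⊆ ω → BTree ω c0 r0 (S ∪ Metric.ball c r)

lemma tree_open {d : ℕ} {ω : Set (Euc d)} {c0 : Euc d} {r0 : ℝ} {S : Set (Euc d)}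
    (h : BTree ω c0 r0 S) : IsOpen S := by
  induction h with
  | base => exact Metric.isOpen_ball
  | step S c r _ _ _ _ ih => exact ih.union Metric.isOpen_ball

lemma tree_sub {d : ℕ} {ω : Set (Euc d)} {c0 : Euc d} {r0 : ℝ} {S : Set (Euc d)}
    (h : BTree ω c0 r0 S) : Metric.ball c0 r0 ⊆ S := by
  induction h with
  | base => exact subset_rfl
  | step S c r _ _ _ _ ih => exact ih.trans subset_union_left

lemma tree_bdd {d : ℕ} {ω : Set (Euc d)} {c0 : Euc d} {r0 : ℝ} {S : Set (Euc d)}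
    (h : BTree ω c0 r0 S) : Bornology.IsBounded S := by
  induction h with
  | base => exact Metric.isBounded_ball
  | step S c r _ _ _ _ ih => exact ih.union Metric.isBounded_ball

lemma tree_closure {d : ℕ} {ω : Set (Euc d)} {c0 : Euc d} {r0 : ℝ}
    (hb : Metric.closedBall c0 r0 ⊆ ω) {S : Set (Euc d)}
    (h : BTree ω c0 r0 S) : closure S ⊆ ω := by
  induction h with
  | base => exact Metric.closure_ball_subset_closedBall.trans hb
  | step S c r _ _ _ h ih =>
    rw [closure_union]
    exact union_subset ih (Metric.closure_ball_subset_closedBall.trans h)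

lemma tree_union {d : ℕ} {ω : Set (Euc d)} {c0 : Euc d} {r0 : ℝ} (hr : 0 < r0) {S S' : Set (Euc d)}
    (h : BTree ω c0 r0 S) (h' : BTree ω c0 r0 S') : BTree ω c0 r0 (S ∪ S') := by
  induction h' with
  | base => rwa [union_eq_left.2 (tree_sub h)]
  | step S' c r _ hr hn hb ih =>
    rw [← union_assoc]
    exact BTree.step _ _ _ ih hr (hn.mono (inter_subset_inter_right _ subset_union_right)) hb

lemma tree_mem {d : ℕ} {ω : Set (Euc d)} (hωo : IsOpen ω) (hωc : IsConnected ω) {c0 : Euc d} {r0 : ℝ}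
    (hr : 0 < r0) (hb : Metric.closedBall c0 r0 ⊆ ω) {y : Euc d} (hy : y ∈ ω) :
    ∃ S, BTree ω c0 r0 S ∧ y ∈ S := by
  set A : Set (Euc d) := {y | ∃ S, BTree ω c0 r0 S ∧ y ∈ S} with hA
  have hAo : IsOpen A := by
    rw [isOpen_iff_mem_nhds]
    rintro z ⟨S, hS, hz⟩
    exact Filter.mem_of_superset ((tree_open hS).mem_nhds hz) fun y hy => ⟨S, hS, hy⟩
  have hA0 : c0 ∈ A := ⟨_, BTree.base, Metric.mem_ball_self hr⟩
  by_contra hny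
  have hBo : IsOpen (ω \ A) := by
    rw [isOpen_iff_mem_nhds]
    rintro z ⟨hz, hzA⟩
    obtain ⟨ρ, hρ, hρω⟩ := Metric.nhds_basis_closedBall.mem_iff.1 (hωo.mem_nhds hz)
    refine Filter.mem_of_superset (Metric.ball_mem_nhds z hρ) fun y hy => ⟨hρω (Metric.ball_subset_closedBall hy), ?_⟩
    rintro ⟨S, hS, hyS⟩
    exact hzA ⟨_, BTree.step S z ρ hS hρ ⟨y, hy, hyS⟩ hρω, Or.inr (Metric.mem_ball_self hρ)⟩
  obtain ⟨z, hz, hz1, hz2⟩ := hωc.isPreconnected A (ω \ A) hAo hBo (fun z hz => by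
    by_cases h : z ∈ A
    · exact Or.inl h
    · exact Or.inr ⟨hz, h⟩) ⟨c0, hb (Metric.mem_closedBall_self hr.le), hA0⟩ ⟨y, hy, hy, hny⟩
  exact hz2.2 hz1

lemma tree_compact {d : ℕ} {ω : Set (Euc d)} (hωo : IsOpen ω) (hωc : IsConnected ω) {c0 : Euc d} {r0 : ℝ}
    (hr : 0 < r0) (hb : Metric.closedBall c0 r0 ⊆ ω) {K : Set (Euc d)} (hK : IsCompact K) (hKω : K ⊆ ω) :
    ∃ S, BTree ω c0 r0 S ∧ K ⊆ S := by
  have := hK.induction_on (p := fun K => ∃ S, BTree ω c0 r0 S ∧ K ⊆ S) ⟨_, BTree.base, by simp⟩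
    (fun s t hst ⟨S, h1, h2⟩ => ⟨S, h1, hst.trans h2⟩)
    (fun s t ⟨S, h1, h2⟩ ⟨S', h1', h2'⟩ => ⟨_, tree_union hr h1 h1', union_subset_union h2 h2'⟩)
    (fun x hx => by
      obtain ⟨S, hS, hxS⟩ := tree_mem hωo hωc hr hb (hKω hx)
      exact ⟨S, mem_nhdsWithin_of_mem_nhds ((tree_open hS).mem_nhds hxS), S, hS, subset_rfl⟩)
  exact this


lemma traj_const {d : ℕ} {w : Euc d → ℝ → Euc d} {T : ℝ} {x : Euc d} (h : ∀ t, w x t = 0) :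
    IsTraj w T (fun _ => x) := ⟨continuousOn_const, fun t _ => by simp [h]⟩

lemma tree_step_pt {d : ℕ} {v : Euc d → Euc d} {Kv : ℝ≥0} (hvL : LipschitzWith Kv v)
    {C : ℝ} (hv : ∀ x, ‖v x‖ ≤ C) {ω : Set (Euc d)} {R : ℝ}
    {χ : Euc d → ℝ} {Kχ : ℝ≥0} (hχ : LipschitzWith Kχ χ) (h1 : ∀ x, |χ x| ≤ 1)
    (hχ0 : ∀ x, x ∉ ω ∩ Metric.closedBall 0 R → χ x = 0)
    {S : Set (Euc d)} (hS : IsOpen S) {c : Euc d} {r : ℝ} (hr : 0 < r)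
    (hn : (Metric.ball c r ∩ S).Nonempty) (hone : ∀ x ∈ closure (S ∪ Metric.ball c r), χ x = 1)
    {τ : ℝ} (hτ : 0 < τ) :
    ∃ F : ℕ → Euc d → Euc d, (∀ n, Adm v ω R τ (F n)) ∧ ∀ x ∈ S ∪ Metric.ball c r,
      ∀ᶠ n in Filter.atTop, F n x ∈ S := by
  obtain ⟨z0, hz0, hz0S⟩ := hn
  obtain ⟨ρ, hρ, hρS⟩ := Metric.isOpen_iff.1 hS z0 hz0S
  set B := Metric.closedBall c r with hB
  have hBc : B ⊆ closure (S ∪ Metric.ball c r) := by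
    rw [closure_union, closure_ball c hr.ne']; exact subset_union_right
  have hBne : B.Nonempty := ⟨c, Metric.mem_closedBall_self hr.le⟩
  have hz0B : z0 ∈ B := Metric.ball_subset_closedBall hz0
  set M : ℝ := 2 * r / ρ / τ with hM
  have hM0 : 0 < M := by positivity
  have hp : ∀ n : ℕ, (0:ℝ) < 1 / ((n : ℝ) + 1) := fun n => by positivity
  have hp1 : ∀ n : ℕ, 1 / ((n : ℝ) + 1) ≤ 1 := fun n => by
    rw [div_le_one (by positivity)]
    have : (0:ℝ) ≤ n := Nat.cast_nonneg n
    linarith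
  set U : ℕ → Euc d → ℝ → Euc d := fun n z _ => cut B 0 (1 / ((n : ℝ) + 1)) z • ((-M) • (z - z0)) with hU
  have hMb : ∀ n : ℕ, ∀ x ∈ {x | Metric.infDist x B < 1 / ((n : ℝ) + 1)},
      ‖(-M) • (x - z0)‖ ≤ (Real.toNNReal (M * (1 + 2 * r)) : ℝ≥0) := by
    intro n x hx
    obtain ⟨y, hy, hxy⟩ := (Metric.infDist_lt_iff hBne).1 hx
    rw [Real.coe_toNNReal _ (by positivity), norm_smul, norm_neg, Real.norm_of_nonneg hM0.le]
    gcongr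
    rw [← dist_eq_norm]
    have e1 := dist_triangle x y z0
    have e2 := dist_triangle_right y z0 c
    have e3 := Metric.mem_closedBall.1 hy
    have e4 := Metric.mem_closedBall.1 hz0B
    have e5 := hp1 n
    linarith
  have hcz : ∀ n : ℕ, ∀ x, x ∉ {x | Metric.infDist x B < 1 / ((n : ℝ) + 1)} →
      cut B 0 (1 / ((n : ℝ) + 1)) x = 0 := by
    intro n x hx
    apply cut_zero (hp n)
    have : ¬ (Metric.infDist x B < 1 / ((n : ℝ) + 1)) := hx
    linarith
  have hfl : LipschitzWith (Real.toNNReal M) fun z : Euc d => (-M) • (z - z0) := by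
    apply LipschitzWith.of_dist_le_mul
    intro x y
    rw [dist_smul₀, norm_neg, Real.norm_of_nonneg hM0.le, dist_sub_right, Real.coe_toNNReal _ hM0.le]
  have key : ∀ n : ℕ, ∃ F, AdmW v ω R (fun x t => v x + χ x • (U n x t - v x)) τ F := by
    intro n
    obtain ⟨L, hL⟩ := cut_lip B 0 (hp n)
    refine block_exists hvL hv hτ.le hχ h1 hχ0 (M := Real.toNNReal (M * (1 + 2 * r)))
      (fun t => lip_cutoff_mul hL (cut_abs _ _ _) (hcz n) hfl (hMb n)) (fun x _ t => ?_)
      (fun x => continuous_const)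
    by_cases hx : x ∈ {x | Metric.infDist x B < 1 / ((n : ℝ) + 1)}
    · simp only [hU]
      rw [norm_smul]
      calc _ ≤ 1 * ‖(-M) • (x - z0)‖ := by gcongr; exact cut_abs _ _ _ _
        _ ≤ _ := by rw [one_mul]; exact hMb n x hx
    · simp only [hU]
      rw [hcz n x hx]; simp
  choose F hF using key
  refine ⟨F, fun n => ⟨_, hF n⟩, fun x hx => ?_⟩
  by_cases hxB : x ∈ B
  · apply Filter.Eventually.of_forall
    intro n
    have hmem : ∀ t ∈ Icc 0 τ, z0 + Real.exp (-M * t) • (x - z0) ∈ B := by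
      intro t ht
      have he : Real.exp (-M * t) ≤ 1 := Real.exp_le_one_iff.2 (by nlinarith [ht.1])
      have := (convex_closedBall c r) hz0B hxB (a := 1 - Real.exp (-M * t)) (b := Real.exp (-M * t))
        (by linarith) (Real.exp_pos _).le (by ring)
      convert this using 1
      rw [sub_smul, one_smul, smul_sub]; abel
    have ht : IsTraj (fun x t => v x + χ x • (U n x t - v x)) τ
        (fun t => z0 + Real.exp (-M * t) • (x - z0)) := by
      apply traj_of_deriv (hF n).1
      intro t ht
      have hm := hmem t ht
      rw [hone _ (hBc hm)]
      simp only [hU]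
      rw [cut_one (hp n) (by rw [Metric.infDist_zero_of_mem hm])]
      have hd : HasDerivAt (fun t : ℝ => z0 + Real.exp (-M * t) • (x - z0))
          ((Real.exp (-M * t) * (-M * 1)) • (x - z0)) t :=
        ((((hasDerivAt_id t).const_mul (-M)).exp).smul_const (x - z0)).const_add z0
      refine hd.hasDerivWithinAt.congr_deriv ?_
      simp only [one_smul, add_sub_cancel_left, smul_smul, add_sub_cancel]
      congr 1; ring
    have e := admW_eq hτ.le (hF n) ht
    simp only [mul_zero, Real.exp_zero, one_smul, add_sub_cancel] at e
    rw [e]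
    apply hρS
    rw [Metric.mem_ball, dist_eq_norm, add_sub_cancel_left, norm_smul, Real.norm_of_nonneg (Real.exp_pos _).le]
    have hd : ‖x - z0‖ ≤ 2 * r := by
      rw [← dist_eq_norm]
      have e2 := dist_triangle_right x z0 c
      have e3 := Metric.mem_closedBall.1 hxB
      have e4 := Metric.mem_closedBall.1 hz0B
      linarith
    have hMτ : M * τ = 2 * r / ρ := by rw [hM]; field_simp
    have hexp : 2 * r / ρ < Real.exp (2 * r / ρ) := by
      have := Real.add_one_le_exp (2 * r / ρ); linarith
    rw [neg_mul, hMτ, Real.exp_neg]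
    calc (Real.exp (2 * r / ρ))⁻¹ * ‖x - z0‖ ≤ (Real.exp (2 * r / ρ))⁻¹ * (2 * r) := by gcongr
      _ < ρ := by
        rw [inv_mul_lt_iff₀ (Real.exp_pos _)]
        rw [div_lt_iff₀ hρ] at hexp
        exact hexp
  · have hxS : x ∈ S := by
      rcases hx with h | h
      · exact h
      · exact absurd (Metric.ball_subset_closedBall h) hxB
    have hpos : 0 < Metric.infDist x B :=
      (Metric.isClosed_closedBall.notMem_iff_infDist_pos hBne).1 hxB
    filter_upwards [(tendsto_one_div_add_atTop_nhds_zero_nat (𝕜 := ℝ)).eventually (gt_mem_nhds hpos)] with n hnn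
    have ht : IsTraj (fun x t => v x + χ x • (U n x t - v x)) τ (fun t => x) := by
      apply traj_const
      intro t
      simp only [hU]
      rw [hone x (subset_closure hx), cut_zero (hp n) (by linarith)]
      simp
    rw [admW_eq hτ.le (hF n) ht]
    exact hxS

lemma tree_block {d : ℕ} {v : Euc d → Euc d} {Kv : ℝ≥0} (hvL : LipschitzWith Kv v)
    {C : ℝ} (hv : ∀ x, ‖v x‖ ≤ C) {ω : Set (Euc d)} {R : ℝ}
    {χ : Euc d → ℝ} {Kχ : ℝ≥0} (hχ : LipschitzWith Kχ χ) (h1 : ∀ x, |χ x| ≤ 1)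
    (hχ0 : ∀ x, x ∉ ω ∩ Metric.closedBall 0 R → χ x = 0)
    {c0 : Euc d} {r0 : ℝ} {S : Set (Euc d)} (hS : BTree ω c0 r0 S) :
    (∀ x ∈ closure S, χ x = 1) → ∀ (α : Measure (Euc d)) [IsFiniteMeasure α] (δ : ℝ≥0∞), 0 < δ →
      ∀ τ : ℝ, 0 < τ → ∃ F, Adm v ω R τ F ∧ α (F ⁻¹' Metric.ball c0 r0)ᶜ ≤ α Sᶜ + δ := by
  induction hS with
  | base =>
    intro hone α _ δ hδ τ hτ
    obtain ⟨F, hF⟩ := block_exists hvL hv hτ.le hχ h1 hχ0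
      (U := fun _ _ => 0) (KU := 0) (M := 0) (fun t => LipschitzWith.const _) (by simp) (fun x => continuous_const)
    refine ⟨F, ⟨_, hF⟩, le_add_right (measure_mono ?_)⟩
    rw [compl_subset_compl]
    intro x hx
    have ht : IsTraj (fun x (t:ℝ) => v x + χ x • ((0 : Euc d) - v x)) τ (fun t => x) := by
      apply traj_const
      intro t
      rw [hone x (subset_closure hx)]
      simp
    rw [mem_preimage, admW_eq hτ.le hF ht]
    exact hx
  | step S c r hS hr hn hb ih =>
    intro hone α _ δ hδ τ hτ
    have hτ2 : 0 < τ / 2 := by positivity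
    have hδ2 : 0 < δ / 2 := ENNReal.half_pos hδ.ne'
    obtain ⟨F, hF, hFS⟩ := tree_step_pt hvL hv hχ h1 hχ0 (tree_open hS) hr hn hone hτ2
    have hm : ∀ n, MeasurableSet (F n ⁻¹' S) := fun n =>
      ((tree_open hS).preimage (adm_cont hτ2.le (hF n))).measurableSet
    obtain ⟨n, hnn⟩ := meas_small_ex (μ := α) (A := fun n => (S ∪ Metric.ball c r) ∩ (F n ⁻¹' S)ᶜ)
      (fun n => ((tree_open hS).union Metric.isOpen_ball).measurableSet.inter (hm n).compl) (by
        apply Filter.Eventually.of_forall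
        intro x
        by_cases hx : x ∈ S ∪ Metric.ball c r
        · filter_upwards [hFS x hx] with n hn h
          exact h.2 hn
        · exact Filter.Eventually.of_forall fun n h => hx h.1) hδ2
    have hFm : Measurable (F n) := (adm_cont hτ2.le (hF n)).measurable
    obtain ⟨G, hG, hGS⟩ := ih (fun x hx => hone x (closure_mono subset_union_left hx)) (α.map (F n)) (δ / 2) hδ2
      (τ / 2) hτ2
    have hGc := adm_cont hτ2.le hG
    refine ⟨G ∘ F n, ?_, ?_⟩
    · have := adm_comp hτ2.le hτ2.le (hF n) hG
      rwa [add_halves] at this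
    · rw [Measure.map_apply hFm (Metric.isOpen_ball.preimage hGc).measurableSet.compl,
        Measure.map_apply hFm (tree_open hS).measurableSet.compl] at hGS
      calc α (G ∘ F n ⁻¹' Metric.ball c0 r0)ᶜ ≤ α (F n ⁻¹' Sᶜ) + δ / 2 := hGS
        _ ≤ (α (S ∪ Metric.ball c r)ᶜ + α ((S ∪ Metric.ball c r) ∩ (F n ⁻¹' S)ᶜ)) + δ / 2 := by
          gcongr
          refine (measure_mono ?_).trans (measure_union_le _ _)
          intro x hx
          by_cases h : x ∈ S ∪ Metric.ball c r
          · exact Or.inr ⟨h, hx⟩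
          · exact Or.inl h
        _ ≤ (α (S ∪ Metric.ball c r)ᶜ + δ / 2) + δ / 2 := by gcongr
        _ = _ := by rw [add_assoc, ENNReal.add_halves]


lemma scalar_inv {f : ℝ → ℝ} (hfm : Monotone f) (hfc : Continuous f) {M : ℝ} (hM : ∀ a, |f a| ≤ M)
    {η : ℝ} (hη : 0 < η) :
    ∃ a : ℝ → ℝ → ℝ, ∀ s, s ∈ Icc 0 (1 - η) → 
      (∀ z, (1 - s) * a z s + s * f (a z s) = z) ∧
      (∀ b, a ((1 - s) * b + s * f b) s = b) ∧
      (∀ z z', η * |a z s - a z' s| ≤ |z - z'|) ∧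
      ∀ z, ∀ s' ∈ Icc 0 (1 - η), η * |a z s - a z s'| ≤ |s - s'| * (|a z s| + M) := by
  have hs : ∀ s ∈ Icc 0 (1 - η), ∀ z, ∃ b, (1 - s) * b + s * f b = z := by
    intro s hs z
    have h1 : 0 < 1 - s := by linarith [hs.2]
    have hc : Continuous fun b => (1 - s) * b + s * f b := by fun_prop
    have hb : ∀ b, -M ≤ f b ∧ f b ≤ M := fun b => abs_le.1 (hM b)
    refine mem_range_of_exists_le_of_exists_ge hc ⟨(z - s * M) / (1 - s), ?_⟩ ⟨(z + s * M) / (1 - s), ?_⟩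
    · simp only [mul_div_cancel₀ _ h1.ne']
      nlinarith [(hb ((z - s * M) / (1 - s))).2, hs.1]
    · simp only [mul_div_cancel₀ _ h1.ne']
      nlinarith [(hb ((z + s * M) / (1 - s))).1, hs.1]
  have hlow : ∀ s ∈ Icc 0 (1 - η), ∀ b b', η * |b - b'| ≤
      |((1 - s) * b + s * f b) - ((1 - s) * b' + s * f b')| := by
    intro s hs
    have key : ∀ b b', b' ≤ b → η * |b - b'| ≤
      |((1 - s) * b + s * f b) - ((1 - s) * b' + s * f b')| := by
      intro b b' h
      have := hfm h
      rw [abs_of_nonneg (by linarith : 0 ≤ b - b')]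
      refine le_trans ?_ (le_abs_self _)
      nlinarith [hs.1, hs.2]
    intro b b'
    rcases le_total b' b with h | h
    · exact key b b' h
    · rw [abs_sub_comm, abs_sub_comm ((1 - s) * b + s * f b)]
      exact key b' b h
  choose! a ha using hs
  refine ⟨fun z s => a s z, fun s hs => ⟨fun z => ha s hs z, fun b => ?_, fun z z' => ?_, fun z s' hs' => ?_⟩⟩
  · have := hlow s hs (a s ((1 - s) * b + s * f b)) b
    rw [ha s hs, sub_self, abs_zero] at this
    have h2 : |a s ((1 - s) * b + s * f b) - b| ≤ 0 := by
      by_contra h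
      push Not at h
      nlinarith
    exact sub_eq_zero.1 (abs_eq_zero.1 (le_antisymm h2 (abs_nonneg _)))
  · have := hlow s hs (a s z) (a s z')
    rwa [ha s hs, ha s hs] at this
  · have := hlow s' hs' (a s z) (a s' z)
    rw [ha s' hs'] at this
    refine this.trans ?_
    nth_rewrite 3 [← ha s hs z]
    have e : (1 - s') * a s z + s' * f (a s z) - ((1 - s) * a s z + s * f (a s z))
      = (s - s') * (a s z - f (a s z)) := by ring
    rw [e, abs_mul]
    gcongr
    refine (abs_sub _ _).trans ?_
    gcongr
    exact hM _

lemma transport_field {d : ℕ} {v : Euc d → Euc d} {Kv : ℝ≥0} (hvL : LipschitzWith Kv v)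
    {C : ℝ} (hv : ∀ x, ‖v x‖ ≤ C) {ω : Set (Euc d)} {R : ℝ}
    {χ : Euc d → ℝ} {Kχ : ℝ≥0} (hχ : LipschitzWith Kχ χ) (h1 : ∀ x, |χ x| ≤ 1)
    (hχ0 : ∀ x, x ∉ ω ∩ Metric.closedBall 0 R → χ x = 0)
    {c0 : Euc d} {r0 : ℝ} (hone : ∀ x ∈ Metric.closedBall c0 r0, χ x = 1)
    (l : Euc d →L[ℝ] ℝ) {X : ℝ → Euc d} {KX : ℝ≥0} (hX : LipschitzWith KX X)
    (hXb : ∀ s, X s ∈ Metric.closedBall c0 r0) (hXm : Monotone fun s => l (X s))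
    {η : ℝ} (hη : 0 < η) (hη1 : η < 1) :
    ∃ H, Adm v ω R 1 H ∧ ∀ y ∈ Metric.closedBall c0 r0, H y = η • y + (1 - η) • X (l y) := by
  have hr0 : 0 ≤ r0 := dist_nonneg.trans (Metric.mem_closedBall.1 (hXb 0))
  have hXn : ∀ s, ‖X s‖ ≤ ‖c0‖ + r0 := fun s => by
    have := Metric.mem_closedBall.1 (hXb s)
    rw [dist_eq_norm] at this
    calc ‖X s‖ = ‖c0 + (X s - c0)‖ := by congr 1; abel
      _ ≤ _ := (norm_add_le _ _).trans (by gcongr)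
  obtain ⟨a, ha⟩ := scalar_inv (f := fun s => l (X s)) hXm (l.continuous.comp hX.continuous)
    (M := ‖l‖ * (‖c0‖ + r0)) (fun s => (l.le_opNorm _).trans (by gcongr; exact hXn s)) hη
  set σ : ℝ → ℝ := fun t => (1 - η) * max 0 (min 1 t) with hσ
  have hσc : Continuous σ := by fun_prop
  have hσm : ∀ t, σ t ∈ Icc 0 (1 - η) := by
    intro t
    have e1 : 0 ≤ max 0 (min 1 t) := le_max_left _ _
    have e2 : max 0 (min 1 t) ≤ 1 := max_le zero_le_one (min_le_left _ _)
    constructor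
    · exact mul_nonneg (by linarith) e1
    · simp only [hσ]; nlinarith
  set U : Euc d → ℝ → Euc d := fun z t => ((1 - η) / (1 - σ t)) • (X (a (l z) (σ t)) - z) with hU
  have hcoef : ∀ t, |(1 - η) / (1 - σ t)| ≤ 1 / η := by
    intro t
    have := (hσm t).2
    rw [abs_of_nonneg (div_nonneg (by linarith) (by linarith))]
    exact div_le_div₀ zero_le_one (by linarith) hη (by linarith)
  have hacont : ∀ z, Continuous fun t => a z (σ t) := by
    intro z
    have : ContinuousOn (fun s => a z s) (Icc 0 (1 - η)) := by
      intro s hs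
      rw [ContinuousWithinAt, tendsto_iff_dist_tendsto_zero]
      have hlim : Filter.Tendsto (fun s' => η⁻¹ * (|s - s'| * (|a z s| + ‖l‖ * (‖c0‖ + r0))))
          (nhdsWithin s (Icc 0 (1 - η))) (nhds 0) := by
        have : Continuous (fun s' => η⁻¹ * (|s - s'| * (|a z s| + ‖l‖ * (‖c0‖ + r0)))) := by fun_prop
        have := this.tendsto s
        simp only [sub_self, abs_zero, zero_mul, mul_zero] at this
        exact this.mono_left nhdsWithin_le_nhds
      refine squeeze_zero' (Filter.Eventually.of_forall fun _ => dist_nonneg) ?_ hlim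
      filter_upwards [self_mem_nhdsWithin] with s' hs'
      rw [Real.dist_eq, abs_sub_comm, le_inv_mul_iff₀ hη]
      exact (ha s hs).2.2.2 z s' hs'
    exact this.comp_continuous hσc hσm
  have hal : ∀ t, LipschitzWith (Real.toNNReal (1 / η) * ‖l‖₊) fun z : Euc d => a (l z) (σ t) := by
    intro t
    apply LipschitzWith.of_dist_le_mul
    intro z z'
    have e1 := (ha (σ t) (hσm t)).2.2.1 (l z) (l z')
    have e2 : |l z - l z'| ≤ ‖l‖ * ‖z - z'‖ := by rw [← map_sub]; exact l.le_opNorm _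
    rw [Real.dist_eq, dist_eq_norm]
    push_cast
    rw [Real.coe_toNNReal _ (by positivity), one_div, mul_assoc, le_inv_mul_iff₀ hη]
    exact e1.trans e2
  obtain ⟨H, hH⟩ := block_exists hvL hv (T := 1) zero_le_one hχ h1 hχ0 (U := U)
    (KU := Real.toNNReal (1 / η) * (KX * (Real.toNNReal (1 / η) * ‖l‖₊) + 1))
    (M := Real.toNNReal (1 / η * (‖c0‖ + r0 + |R|))) (fun t => by
      have hg := (hX.comp (hal t)).sub LipschitzWith.id
      apply LipschitzWith.of_dist_le_mul
      intro z z'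
      have := hg.dist_le_mul z z'
      simp only [hU]
      rw [dist_smul₀]
      push_cast
      rw [Real.coe_toNNReal _ (by positivity), mul_assoc]
      apply mul_le_mul (hcoef t) _ dist_nonneg (by positivity)
      simp only [Function.comp_apply, id] at this
      push_cast at this
      rw [Real.coe_toNNReal _ (by positivity)] at this
      exact this)
    (fun x hx t => by
      rw [Real.coe_toNNReal _ (by positivity)]
      simp only [hU]
      rw [norm_smul]
      apply mul_le_mul (hcoef t) _ (norm_nonneg _) (by positivity)
      refine (norm_sub_le _ _).trans (add_le_add (hXn _) ?_)
      have := hx.2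
      simp at this
      exact this.trans (le_abs_self _))
    (fun x => by
      have e1 : Continuous fun t => (1 - η) / (1 - σ t) :=
        continuous_const.div (continuous_const.sub hσc) fun t => by linarith [(hσm t).2]
      exact e1.smul ((hX.continuous.comp (hacont _)).sub continuous_const))
  refine ⟨H, ⟨_, hH⟩, fun y hy => ?_⟩
  have hmem : ∀ s ∈ Icc (0:ℝ) 1, (1 - s) • y + s • X (l y) ∈ Metric.closedBall c0 r0 := fun s hs =>
    (convex_closedBall c0 r0) hy (hXb _) (by linarith [hs.2]) hs.1 (by ring)
  have ht : IsTraj (fun x t => v x + χ x • (U x t - v x)) 1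
      (fun t => (1 - (1 - η) * t) • y + ((1 - η) * t) • X (l y)) := by
    apply traj_of_deriv hH.1
    intro t ht
    have hst : σ t = (1 - η) * t := by
      simp only [hσ, min_eq_right ht.2, max_eq_right ht.1]
    have hs := hσm t
    rw [hst] at hs
    rw [hone _ (hmem _ ⟨hs.1, by linarith [hs.2]⟩)]
    have hd : HasDerivAt (fun t : ℝ => (1 - (1 - η) * t) • y + ((1 - η) * t) • X (l y))
        ((-((1 - η) * 1)) • y + ((1 - η) * 1) • X (l y)) t :=
      ((((hasDerivAt_id t).const_mul (1 - η)).const_sub 1).smul_const y).add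
        (((hasDerivAt_id t).const_mul (1 - η)).smul_const (X (l y)))
    refine hd.hasDerivWithinAt.congr_deriv ?_
    have hay := (ha _ hs).2.1 (l y)
    simp only [hU, hst, map_add, map_smul, smul_eq_mul]
    rw [hay, one_smul, add_sub_cancel]
    set s := (1 - η) * t
    have hne : (1 - s) ≠ 0 := by linarith [hs.2]
    have e : X (l y) - ((1 - s) • y + s • X (l y)) = (1 - s) • (X (l y) - y) := by
      simp only [sub_smul, smul_sub, one_smul]; abel
    rw [e, smul_smul, div_mul_cancel₀ _ hne, smul_sub, mul_one, neg_smul]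
    abel
  have e := admW_eq zero_le_one hH ht
  simp only [mul_zero, sub_zero, one_smul, zero_smul, add_zero, mul_one, sub_sub_cancel] at e
  exact e


lemma glue {Y Z : Type*} [MeasurableSpace Y] [MeasurableSpace Z] (α : Measure Y) (β : Measure Z)
    [IsProbabilityMeasure α] [IsProbabilityMeasure β] {f : Y → ℕ} {g : Z → ℕ}
    (hf : Measurable f) (hg : Measurable g) (h : α.map f = β.map g) :
    ∃ π : Measure (Y × Z), π.map Prod.fst = α ∧ π.map Prod.snd = β ∧ ∀ᵐ q ∂π, f q.1 = g q.2 := by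
  set A : ℕ → Set Y := fun k => f ⁻¹' {k} with hA
  set B : ℕ → Set Z := fun k => g ⁻¹' {k} with hB
  have hAm : ∀ k, MeasurableSet (A k) := fun k => hf (measurableSet_singleton k)
  have hBm : ∀ k, MeasurableSet (B k) := fun k => hg (measurableSet_singleton k)
  have hAB : ∀ k, α (A k) = β (B k) := fun k => by
    rw [← Measure.map_apply hf (measurableSet_singleton k), h, Measure.map_apply hg (measurableSet_singleton k)]
  have hsA : Measure.sum (fun k => α.restrict (A k)) = α := by
    rw [← Measure.restrict_iUnion _ hAm]
    · rw [← preimage_iUnion, iUnion_of_singleton, preimage_univ, Measure.restrict_univ]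
    · intro i j hij
      exact (disjoint_singleton.2 hij).preimage f
  have hsB : Measure.sum (fun k => β.restrict (B k)) = β := by
    rw [← Measure.restrict_iUnion _ hBm]
    · rw [← preimage_iUnion, iUnion_of_singleton, preimage_univ, Measure.restrict_univ]
    · intro i j hij
      exact (disjoint_singleton.2 hij).preimage g
  refine ⟨Measure.sum fun k => (α (A k))⁻¹ • (α.restrict (A k)).prod (β.restrict (B k)), ?_, ?_, ?_⟩
  · rw [Measure.map_sum measurable_fst.aemeasurable]
    conv_rhs => rw [← hsA]
    congr 1
    ext1 k
    rw [Measure.map_smul, Measure.map_fst_prod, Measure.restrict_apply_univ, smul_smul, ← hAB]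
    by_cases h0 : α (A k) = 0
    · rw [Measure.restrict_eq_zero.2 h0, smul_zero]
    · rw [ENNReal.inv_mul_cancel h0 (measure_ne_top _ _), one_smul]
  · rw [Measure.map_sum measurable_snd.aemeasurable]
    conv_rhs => rw [← hsB]
    congr 1
    ext1 k
    rw [Measure.map_smul, Measure.map_snd_prod, Measure.restrict_apply_univ, smul_smul]
    by_cases h0 : α (A k) = 0
    · rw [Measure.restrict_eq_zero.2 (by rw [← hAB]; exact h0), smul_zero]
    · rw [ENNReal.inv_mul_cancel h0 (measure_ne_top _ _), one_smul]
  · rw [Measure.ae_sum_iff]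
    intro k
    apply Measure.ae_smul_measure
    rw [Measure.prod_restrict]
    filter_upwards [ae_restrict_mem ((hAm k).prod (hBm k))] with q hq
    have e1 : f q.1 = k := hq.1
    have e2 : g q.2 = k := hq.2
    rw [e1, e2]

open ProbabilityTheory in
lemma cdf_cont (ν : Measure ℝ) [IsProbabilityMeasure ν] (h : ∀ s, ν {s} = 0) : Continuous (cdf ν) := by
  rw [continuous_iff_continuousAt]
  intro s
  rw [(monotone_cdf ν).continuousAt_iff_leftLim_eq_rightLim, StieltjesFunction.rightLim_eq]
  have := (cdf ν).measure_singleton s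
  rw [measure_cdf, h s] at this
  have h2 := ENNReal.ofReal_eq_zero.1 this.symm
  exact le_antisymm ((monotone_cdf ν).leftLim_le le_rfl) (by linarith)

open ProbabilityTheory in
lemma cdf_unif (ν : Measure ℝ) [IsProbabilityMeasure ν] (h : ∀ s, ν {s} = 0) {m : ℝ} (h0 : 0 ≤ m)
    (h1 : m ≤ 1) : ν {s | cdf ν s ≤ m} = ENNReal.ofReal m := by
  have hc := cdf_cont ν h
  have hiv : ∀ m', 0 < m' → m' < 1 → ∃ s, cdf ν s = m' := by
    intro m' a b
    refine mem_range_of_exists_le_of_exists_ge hc ?_ ?_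
    · obtain ⟨s, hs⟩ := ((tendsto_cdf_atBot ν).eventually (gt_mem_nhds a)).exists
      exact ⟨s, hs.le⟩
    · obtain ⟨s, hs⟩ := ((tendsto_cdf_atTop ν).eventually (lt_mem_nhds b)).exists
      exact ⟨s, hs.le⟩
  apply le_antisymm
  · rcases h1.eq_or_lt with rfl | h1
    · simpa using prob_le_one
    have hup : ∀ m', m < m' → m' < 1 → ν {s | cdf ν s ≤ m} ≤ ENNReal.ofReal m' := by
      intro m' a b
      obtain ⟨s, hs⟩ := hiv m' (h0.trans_lt a) b
      rw [← hs, ofReal_cdf]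
      apply measure_mono
      intro s' (hs' : cdf ν s' ≤ m)
      by_contra hlt
      rw [mem_Iic, not_le] at hlt
      have := monotone_cdf ν hlt.le
      linarith
    have ht : Filter.Tendsto (fun m' => ENNReal.ofReal m') (nhdsWithin m (Ioi m)) (nhds (ENNReal.ofReal m)) :=
      (ENNReal.continuous_ofReal.tendsto m).mono_left nhdsWithin_le_nhds
    refine ge_of_tendsto ht ?_
    filter_upwards [Ioo_mem_nhdsGT h1] with m' hm'
    exact hup m' hm'.1 hm'.2
  · rcases h0.eq_or_lt with rfl | h0
    · simp
    rcases h1.eq_or_lt with rfl | h1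
    · have : {s | cdf ν s ≤ 1} = univ := by ext s; simp [cdf_le_one ν s]
      rw [this]; simp
    obtain ⟨s, hs⟩ := hiv m h0 h1
    conv_lhs => rw [← hs]
    rw [ofReal_cdf]
    apply measure_mono
    intro s' hs'
    have := monotone_cdf ν hs'
    rw [hs] at this
    exact this

open ProbabilityTheory in
lemma index_fn (ν : Measure ℝ) [IsProbabilityMeasure ν] (h : ∀ s, ν {s} = 0)
    (ρ : Measure ℕ) [IsProbabilityMeasure ρ] {N : ℕ} (hN : ρ (Iic N) = 1) :
    ∃ i : ℝ → ℕ, Monotone i ∧ Measurable i ∧ ν.map i = ρ ∧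
      ∀ s, ∃ h0 > 0, ∀ s', s - h0 < s' → s' ≤ s → i s' = i s := by
  have hc := cdf_cont ν h
  have hex : ∀ s, ∃ k, cdf ν s ≤ ρ.real (Iic k) := fun s =>
    ⟨N, by rw [measureReal_def, hN]; simpa using cdf_le_one ν s⟩
  classical
  set i : ℝ → ℕ := fun s => Nat.find (hex s) with hi
  have hle : ∀ s k, i s ≤ k ↔ cdf ν s ≤ ρ.real (Iic k) := by
    intro s k
    constructor
    · intro hk
      exact (Nat.find_spec (hex s)).trans (measureReal_mono (Iic_subset_Iic.2 hk))
    · intro hk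
      exact Nat.find_min' _ hk
  have hmono : Monotone i := by
    intro s s' hs
    rw [hle]
    exact (monotone_cdf ν hs).trans ((hle s' _).1 le_rfl)
  have hmeas : Measurable i := hmono.measurable
  refine ⟨i, hmono, hmeas, ?_, fun s => ?_⟩
  · have : IsProbabilityMeasure (ν.map i) := Measure.isProbabilityMeasure_map hmeas.aemeasurable
    apply Measure.ext_of_Iic
    intro k
    rw [Measure.map_apply hmeas measurableSet_Iic]
    have : i ⁻¹' Iic k = {s | cdf ν s ≤ ρ.real (Iic k)} := by
      ext s
      exact hle s k
    rw [this, cdf_unif ν h measureReal_nonneg measureReal_le_one, ofReal_measureReal]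
  · rcases Nat.eq_zero_or_pos (i s) with h0 | h0
    · refine ⟨1, one_pos, fun s' _ hs' => ?_⟩
      have := hmono hs'
      omega
    · have hlt : ρ.real (Iic (i s - 1)) < cdf ν s := by
        by_contra hh
        push Not at hh
        have := (hle s (i s - 1)).2 hh
        omega
      obtain ⟨δ, hδ, hδs⟩ := Metric.mem_nhds_iff.1 ((hc.tendsto s).eventually (lt_mem_nhds hlt))
      refine ⟨δ, hδ, fun s' h1 h2 => ?_⟩
      have h3 : ρ.real (Iic (i s - 1)) < cdf ν s' := hδs (by
        rw [Metric.mem_ball, Real.dist_eq, abs_lt]; constructor <;> linarith)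
      have h4 : ¬ (i s' ≤ i s - 1) := by rw [hle]; linarith
      have := hmono h2
      omega

lemma smoothing {d : ℕ} {c0 : Euc d} {r0 : ℝ} (l : Euc d →L[ℝ] ℝ) {σ : ℝ → Euc d}
    (hm : Measurable σ) (hb : ∀ s, σ s ∈ Metric.closedBall c0 r0) (hl : Monotone fun s => l (σ s))
    (hloc : ∀ s, ∃ h0 > 0, ∀ s', s - h0 < s' → s' ≤ s → σ s' = σ s) :
    ∃ X : ℕ → ℝ → Euc d, (∀ n, ∃ K, LipschitzWith K (X n)) ∧
      (∀ n s, X n s ∈ Metric.closedBall c0 r0) ∧ (∀ n, Monotone fun s => l (X n s)) ∧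
      ∀ s, ∀ᶠ n in Filter.atTop, X n s = σ s := by
  have hp : ∀ n : ℕ, (0:ℝ) < 1 / ((n : ℝ) + 1) := fun n => by positivity
  have hr0 : 0 ≤ r0 := dist_nonneg.trans (Metric.mem_closedBall.1 (hb 0))
  have hn : ∀ s, ‖σ s‖ ≤ ‖c0‖ + r0 := fun s => by
    have := Metric.mem_closedBall.1 (hb s)
    rw [dist_eq_norm] at this
    calc ‖σ s‖ = ‖c0 + (σ s - c0)‖ := by congr 1; abel
      _ ≤ _ := (norm_add_le _ _).trans (by gcongr)
  have hint : ∀ a b, IntervalIntegrable σ volume a b := by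
    intro a b
    rw [intervalIntegrable_iff]
    exact ⟨hm.aestronglyMeasurable, HasFiniteIntegral.restrict_of_bounded (C := ‖c0‖ + r0)
      (by rw [uIoc]; simp) (Filter.Eventually.of_forall hn)⟩
  have hint2 : ∀ (h s a b : ℝ), IntervalIntegrable (fun r => σ (s - h * r)) volume a b := by
    intro h s a b
    rw [intervalIntegrable_iff]
    exact ⟨(hm.comp (by fun_prop)).aestronglyMeasurable, HasFiniteIntegral.restrict_of_bounded (C := ‖c0‖ + r0)
      (by rw [uIoc]; simp) (Filter.Eventually.of_forall fun _ => hn _)⟩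
  refine ⟨fun n s => ∫ r in (0:ℝ)..1, σ (s - (1 / ((n : ℝ) + 1)) * r), fun n => ?_, fun n s => ?_, fun n => ?_, fun s => ?_⟩
  · have hh : (0:ℝ) < 1 / ((n : ℝ) + 1) := hp n
    beta_reduce
    generalize 1 / ((n : ℝ) + 1) = h at hh ⊢
    refine ⟨Real.toNNReal (h⁻¹ * (2 * (‖c0‖ + r0))), LipschitzWith.of_dist_le_mul fun s s' => ?_⟩
    rw [intervalIntegral.integral_comp_sub_mul _ hh.ne', intervalIntegral.integral_comp_sub_mul _ hh.ne',
      dist_smul₀, Real.coe_toNNReal _ (by positivity), norm_inv, Real.norm_of_nonneg hh.le, mul_assoc]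
    gcongr
    simp only [mul_one, mul_zero, sub_zero]
    rw [dist_eq_norm]
    have e : (∫ x in s - h..s, σ x) - ∫ x in s' - h..s', σ x
        = (∫ x in s'..s, σ x) - ∫ x in (s' - h)..(s - h), σ x := by
      rw [intervalIntegral.integral_interval_sub_interval_comm (hint _ _) (hint _ _) (hint _ _),
        intervalIntegral.integral_symm s' s, intervalIntegral.integral_symm (s - h) (s' - h)]
      abel
    rw [e]
    refine (norm_sub_le _ _).trans ?_
    have e1 := intervalIntegral.norm_integral_le_of_norm_le_const (f := σ) (a := s') (b := s) (C := ‖c0‖ + r0) (fun x _ => hn x)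
    have e2 := intervalIntegral.norm_integral_le_of_norm_le_const (f := σ) (a := s' - h) (b := s - h) (C := ‖c0‖ + r0) (fun x _ => hn x)
    rw [sub_sub_sub_cancel_right] at e2
    rw [Real.dist_eq]
    linarith
  · rw [Metric.mem_closedBall, dist_eq_norm]
    have e : (∫ r in (0:ℝ)..1, σ (s - (1 / ((n : ℝ) + 1)) * r)) - c0
        = ∫ r in (0:ℝ)..1, (σ (s - (1 / ((n : ℝ) + 1)) * r) - c0) := by
      rw [intervalIntegral.integral_sub (hint2 _ _ _ _) (by simp)]; simp
    rw [e]
    have := intervalIntegral.norm_integral_le_of_norm_le_const (a := 0) (b := 1) (C := r0)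
      (f := fun r => σ (s - (1 / ((n : ℝ) + 1)) * r) - c0) (fun r _ => by
        rw [← dist_eq_norm]; exact hb _)
    simpa using this
  · intro s s' hs
    simp only
    rw [← ContinuousLinearMap.intervalIntegral_comp_comm _ (hint2 _ _ _ _),
      ← ContinuousLinearMap.intervalIntegral_comp_comm _ (hint2 _ _ _ _)]
    apply intervalIntegral.integral_mono_on zero_le_one
    · exact ⟨l.integrable_comp (hint2 _ _ _ _).1, l.integrable_comp (hint2 _ _ _ _).2⟩
    · exact ⟨l.integrable_comp (hint2 _ _ _ _).1, l.integrable_comp (hint2 _ _ _ _).2⟩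
    · intro r _
      exact hl (by linarith)
  · obtain ⟨h0, hh0, hc⟩ := hloc s
    filter_upwards [(tendsto_one_div_add_atTop_nhds_zero_nat (𝕜 := ℝ)).eventually (gt_mem_nhds hh0)] with n hnn
    have : ∫ r in (0:ℝ)..1, σ (s - (1 / ((n : ℝ) + 1)) * r) = ∫ r in (0:ℝ)..1, σ s := by
      apply intervalIntegral.integral_congr
      intro r hr
      rw [uIcc_of_le zero_le_one] at hr
      have := hp n
      exact hc _ (by nlinarith [hr.1, hr.2]) (by nlinarith [hr.1, hr.2])
    rw [this]; simp


lemma sorted_net {d : ℕ} {c0 : Euc d} {r0 : ℝ} (hr0 : 0 < r0) (l : Euc d →L[ℝ] ℝ) {η : ℝ} (hη : 0 < η) :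
    ∃ (x : ℕ → Euc d) (N : ℕ), (∀ k, x k ∈ Metric.closedBall c0 r0) ∧ (Monotone fun k => l (x k)) ∧
      ∀ z ∈ Metric.closedBall c0 r0, ∃ k ≤ N, dist (x k) z < η := by
  obtain ⟨t, ht, htf, hcov⟩ := (isCompact_closedBall c0 r0).finite_cover_balls hη
  have hc0 : c0 ∈ Metric.closedBall c0 r0 := Metric.mem_closedBall_self hr0.le
  set n := htf.toFinset.card with hn
  have e := htf.toFinset.equivFin
  have hnpos : 0 < n := by
    obtain ⟨y, hy, _⟩ := mem_iUnion₂.1 (hcov hc0)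
    exact Finset.card_pos.2 ⟨y, by simpa using hy⟩
  set p : Fin n → Euc d := fun k => (e.symm k : Euc d) with hp
  set τ := Tuple.sort (fun k => l (p k)) with hτ
  have hm := Tuple.monotone_sort (fun k => l (p k))
  have hlt : ∀ k : ℕ, min k (n - 1) < n := fun k => by omega
  refine ⟨fun k => p (τ ⟨min k (n - 1), hlt k⟩), n - 1, fun k => ?_, fun k k' hk => ?_, fun z hz => ?_⟩
  · apply ht
    exact htf.mem_toFinset.1 (e.symm (τ ⟨min k (n - 1), hlt k⟩)).2
  · apply hm
    rw [Fin.le_def]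
    exact min_le_min_right _ hk
  · obtain ⟨y, hy, hzy⟩ := mem_iUnion₂.1 (hcov hz)
    have hy' : y ∈ htf.toFinset := by simpa using hy
    set k := τ.symm (e ⟨y, hy'⟩) with hk
    have hkn : (k : ℕ) ≤ n - 1 := by have := k.2; omega
    refine ⟨k, hkn, ?_⟩
    have e1 : (⟨min (k : ℕ) (n - 1), hlt k⟩ : Fin n) = k := by
      apply Fin.ext; exact min_eq_left hkn
    simp only [e1]
    rw [hk, Equiv.apply_symm_apply]
    simp only [hp, Equiv.symm_apply_apply]
    rw [dist_comm]
    exact hzy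

lemma transport_block {d : ℕ} {v : Euc d → Euc d} {Kv : ℝ≥0} (hvL : LipschitzWith Kv v)
    {C : ℝ} (hv : ∀ x, ‖v x‖ ≤ C) {ω : Set (Euc d)} {R : ℝ}
    {χ : Euc d → ℝ} {Kχ : ℝ≥0} (hχ : LipschitzWith Kχ χ) (h1 : ∀ x, |χ x| ≤ 1)
    (hχ0 : ∀ x, x ∉ ω ∩ Metric.closedBall 0 R → χ x = 0)
    {c0 : Euc d} {r0 : ℝ} (hr0 : 0 < r0) (hone : ∀ x ∈ Metric.closedBall c0 r0, χ x = 1)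
    (l : Euc d →L[ℝ] ℝ) (α β : Measure (Euc d)) [IsProbabilityMeasure α] [IsProbabilityMeasure β]
    (hα : ∀ s, α (l ⁻¹' {s}) = 0)
    {η : ℝ} (hη : 0 < η) (hη1 : η < 1) {δ : ℝ≥0∞} (hδ : 0 < δ) :
    ∃ H, Adm v ω R 1 H ∧ ∃ π : Measure (Euc d × Euc d), π.map Prod.fst = α ∧ π.map Prod.snd = β ∧
      ∃ A, MeasurableSet A ∧ α A ≤ δ ∧ ∀ᵐ q ∂π, q.1 ∉ A → q.1 ∈ Metric.closedBall c0 r0 →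
        q.2 ∈ Metric.closedBall c0 r0 → dist (H q.1) q.2 ≤ η * (1 + 2 * r0) := by
  obtain ⟨x, N, hxb, hxm, hxn⟩ := sorted_net (c0 := c0) hr0 l hη
  set κ := SimpleFunc.nearestPtInd x N with hκ
  have hlm : Measurable l := l.continuous.measurable
  have hν : IsProbabilityMeasure (α.map l) := Measure.isProbabilityMeasure_map hlm.aemeasurable
  have hρ : IsProbabilityMeasure (β.map κ) := Measure.isProbabilityMeasure_map κ.measurable.aemeasurable
  obtain ⟨i, him, himeas, hmap, hloc⟩ := index_fn (α.map l)
    (fun s => by rw [Measure.map_apply hlm (measurableSet_singleton s)]; exact hα s) (β.map κ) (N := N) (by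
      rw [Measure.map_apply κ.measurable measurableSet_Iic]
      have : κ ⁻¹' Iic N = univ := by
        ext z; simp [hκ, SimpleFunc.nearestPtInd_le]
      rw [this]; simp)
  rw [Measure.map_map himeas hlm] at hmap
  obtain ⟨π, hπ1, hπ2, hπ3⟩ := glue α β (himeas.comp hlm) κ.measurable hmap
  obtain ⟨X, hXL, hXb, hXm, hXev⟩ := smoothing l (σ := fun s => x (i s))
    ((measurable_from_top (f := x)).comp himeas)
    (fun s => hxb _) (fun s s' hs => hxm (him hs)) (fun s => by
      obtain ⟨h0, a, b⟩ := hloc s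
      exact ⟨h0, a, fun s' c d => by rw [b s' c d]⟩)
  obtain ⟨n, hn⟩ := meas_small_ex (μ := α) (A := fun n => {y | X n (l y) = x (i (l y))}ᶜ)
    (fun n => by
      obtain ⟨K, hK⟩ := hXL n
      exact (measurableSet_eq_fun (hK.continuous.measurable.comp hlm)
        ((measurable_from_top (f := x)).comp (himeas.comp hlm))).compl)
    (Filter.Eventually.of_forall fun y => by
      filter_upwards [hXev (l y)] with n hn
      simpa using hn) hδ
  obtain ⟨K, hK⟩ := hXL n
  obtain ⟨H, hH, hHy⟩ := transport_field hvL hv hχ h1 hχ0 hone l hK (hXb n) (hXm n) hη hη1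
  refine ⟨H, hH, π, hπ1, hπ2, _, (measurableSet_eq_fun (hK.continuous.measurable.comp hlm)
        ((measurable_from_top (f := x)).comp (himeas.comp hlm))).compl, hn, ?_⟩
  filter_upwards [hπ3] with q hq hqA hq1 hq2
  have e1 : X n (l q.1) = x (κ q.2) := by
    have : X n (l q.1) = x (i (l q.1)) := by
      by_contra h
      exact hqA h
    rw [this, ← hq]; rfl
  have e2 : dist (x (κ q.2)) q.2 ≤ η := by
    obtain ⟨k, hk, hd⟩ := hxn q.2 hq2
    have := SimpleFunc.edist_nearestPt_le x q.2 hk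
    have h3 : dist (x (κ q.2)) q.2 ≤ dist (x k) q.2 := by
      rw [edist_dist, edist_dist] at this
      exact (ENNReal.ofReal_le_ofReal_iff dist_nonneg).1 this
    linarith
  have e3 : dist (H q.1) (X n (l q.1)) ≤ η * (2 * r0) := by
    rw [hHy _ hq1, dist_eq_norm]
    have : η • q.1 + (1 - η) • X n (l q.1) - X n (l q.1) = η • (q.1 - X n (l q.1)) := by
      simp only [sub_smul, smul_sub, one_smul]; abel
    rw [this, norm_smul, Real.norm_of_nonneg hη.le, ← dist_eq_norm]
    gcongr
    have a1 := Metric.mem_closedBall.1 hq1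
    have a2 := Metric.mem_closedBall.1 (hXb n (l q.1))
    have a3 := dist_triangle_right q.1 (X n (l q.1)) c0
    linarith
  have e4 := dist_triangle (H q.1) (X n (l q.1)) q.2
  rw [e1] at e3 e4
  linarith


lemma ae_msupport {d : ℕ} (μ : Measure (Euc d)) : ∀ᵐ x ∂μ, x ∈ msupport μ := by
  rw [ae_iff]
  apply measure_null_of_locally_null
  intro x hx
  have hx' : ¬ ∀ U : Set (Euc d), IsOpen U → x ∈ U → 0 < μ U := hx
  push Not at hx'
  obtain ⟨U, hU, hxU, h0⟩ := hx'
  exact ⟨U, mem_nhdsWithin_of_mem_nhds (hU.mem_nhds hxU), le_antisymm h0 zero_le⟩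

lemma reg_auto {d : ℕ} {v : Euc d → Euc d} {Kv : ℝ≥0} (hvL : LipschitzWith Kv v)
    {C : ℝ} (hv : ∀ x, ‖v x‖ ≤ C) : IsRegularField (fun x (_ : ℝ) => v x) :=
  ⟨⟨C, fun x _ => hv x⟩, ⟨Kv, fun _ => hvL⟩, fun _ => measurable_const⟩

lemma geo_compact {d : ℕ} {v : Euc d → Euc d} {Kv : ℝ≥0} (hvL : LipschitzWith Kv v)
    {C : ℝ} (hv : ∀ x, ‖v x‖ ≤ C) {ω : Set (Euc d)} (hωo : IsOpen ω) {Φ : ℝ → Euc d → Euc d}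
    (hΦ : ∀ x t, 0 ≤ t → Φ t x = x + ∫ s in (0:ℝ)..t, v (Φ s x))
    {K : Set (Euc d)} (hK : IsCompact K) (h : ∀ x ∈ K, ∃ t : ℝ, 0 < t ∧ Φ t x ∈ ω) :
    ∃ (Kω : Set (Euc d)) (T0 : ℝ), IsCompact Kω ∧ Kω ⊆ ω ∧ 0 ≤ T0 ∧ ∀ x ∈ K,
      ∃ γ, IsTraj (fun x _ => v x) T0 γ ∧ γ 0 = x ∧ ∃ t ∈ Icc 0 T0, γ t ∈ Kω := by
  have hr := reg_auto hvL hv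
  have htr : ∀ x T, 0 ≤ T → IsTraj (fun x _ => v x) T (fun t => Φ t x) ∧ Φ 0 x = x := fun x T hT =>
    traj_of_integral (f := fun t => Φ t x) hr hT (fun t ht => hΦ x t ht.1)
  suffices H : ∃ (Kω : Set (Euc d)) (T0 : ℝ), IsCompact Kω ∧ Kω ⊆ ω ∧ 0 ≤ T0 ∧ ∀ x ∈ K,
      ∃ t ∈ Icc 0 T0, Φ t x ∈ Kω by
    obtain ⟨Kω, T0, a, b, c, e⟩ := H
    exact ⟨Kω, T0, a, b, c, fun x hx => ⟨_, (htr x T0 c).1, (htr x T0 c).2, e x hx⟩⟩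
  refine IsCompact.induction_on (p := fun A => ∃ (Kω : Set (Euc d)) (T0 : ℝ), IsCompact Kω ∧ Kω ⊆ ω ∧
    0 ≤ T0 ∧ ∀ x ∈ A, ∃ t ∈ Icc 0 T0, Φ t x ∈ Kω) hK ?_ ?_ ?_ ?_
  · exact ⟨∅, 0, isCompact_empty, empty_subset _, le_rfl, fun x hx => absurd hx (notMem_empty x)⟩
  · rintro s t hst ⟨Kω, T0, a, b, c, e⟩
    exact ⟨Kω, T0, a, b, c, fun x hx => e x (hst hx)⟩
  · rintro s t ⟨Kω, T0, a, b, c, e⟩ ⟨Kω', T0', a', b', c', e'⟩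
    refine ⟨Kω ∪ Kω', max T0 T0', a.union a', union_subset b b', le_max_of_le_left c, ?_⟩
    rintro x (hx | hx)
    · obtain ⟨t, ht, h⟩ := e x hx
      exact ⟨t, ⟨ht.1, le_max_of_le_left ht.2⟩, Or.inl h⟩
    · obtain ⟨t, ht, h⟩ := e' x hx
      exact ⟨t, ⟨ht.1, le_max_of_le_right ht.2⟩, Or.inr h⟩
  · intro x hx
    obtain ⟨t, ht, hxω⟩ := h x hx
    obtain ⟨r, hr0, hb⟩ := Metric.nhds_basis_closedBall.mem_iff.1 (hωo.mem_nhds hxω)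
    have hE : 0 < Real.exp (Kv * t) := Real.exp_pos _
    refine ⟨Metric.ball x (r / Real.exp (Kv * t)),
      mem_nhdsWithin_of_mem_nhds (Metric.ball_mem_nhds _ (by positivity)),
      Metric.closedBall (Φ t x) r, t, isCompact_closedBall _ _, hb, ht.le, fun y hy => ⟨t, ⟨ht.le, le_rfl⟩, ?_⟩⟩
    have := traj_lip hr (fun _ => hvL) (htr y t ht.le).1 (htr x t ht.le).1 t ⟨ht.le, le_rfl⟩
    simp only [(htr y t ht.le).2, (htr x t ht.le).2] at this
    rw [Metric.mem_ball, dist_eq_norm, lt_div_iff₀ hE] at hy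
    rw [Metric.mem_closedBall, dist_eq_norm]
    linarith

lemma adm_neg_inv {d : ℕ} {v : Euc d → Euc d} {ω : Set (Euc d)} {R T : ℝ} (hT : 0 ≤ T)
    {F : Euc d → Euc d} (hF : Adm v ω R T F) :
    ∃ G, (∃ K, LipschitzWith K G) ∧ (∀ x, G (F x) = x) ∧ (∀ y, F (G y) = y) := by
  have hF' : Adm (fun x => - (fun y => - v y) x) ω R T F := by simpa using hF
  obtain ⟨G, hG, a, b⟩ := adm_rev hT hF'
  exact ⟨G, adm_lip hT hG, a, b⟩

lemma adm_null {d : ℕ} {v : Euc d → Euc d} {ω : Set (Euc d)} {R T : ℝ} (hT : 0 ≤ T)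
    {F : Euc d → Euc d} (hF : Adm v ω R T F) {μ : Measure (Euc d)} (hμ : μ ≪ volume)
    {A : Set (Euc d)} (hA : MeasurableSet A) (h0 : volume A = 0) : μ.map F A = 0 := by
  obtain ⟨G, ⟨K, hK⟩, a, b⟩ := adm_neg_inv hT hF
  rw [Measure.map_apply (adm_cont hT hF).measurable hA]
  apply hμ
  have e : F ⁻¹' A = G '' A := by
    ext x
    constructor
    · intro hx
      exact ⟨F x, hx, a x⟩
    · rintro ⟨y, hy, rfl⟩
      simpa [b] using hy
  rw [e]
  have hh : ∀ s : Set (Euc d), volume s = 0 ↔ μH[(d:ℝ)] s = 0 := by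
    intro s
    have i1 : Measure.IsAddHaarMeasure (μH[(d:ℝ)] : Measure (Euc d)) := by
      have := (inferInstance : Measure.IsAddHaarMeasure (μH[Module.finrank ℝ (Euc d)] : Measure (Euc d)))
      simpa using this
    exact ⟨fun h => Measure.absolutelyContinuous_isAddHaarMeasure _ _ h, fun h => Measure.absolutelyContinuous_isAddHaarMeasure _ _ h⟩
  rw [hh] at h0 ⊢
  have := hK.hausdorffMeasure_image_le (d := (d:ℝ)) (by positivity) A
  rw [h0, mul_zero] at this
  exact le_antisymm this zero_le

lemma coord_null {d : ℕ} (i : Fin d) (s : ℝ) :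
    volume ((EuclideanSpace.proj (𝕜 := ℝ) i : Euc d →L[ℝ] ℝ) ⁻¹' {s}) = 0 := by
  set l := (EuclideanSpace.proj (𝕜 := ℝ) i : Euc d →L[ℝ] ℝ)
  have hp : MeasurePreserving (MeasurableEquiv.toLp 2 (Fin d → ℝ)).symm := EuclideanSpace.volume_preserving_symm_measurableEquiv_toLp (Fin d)
  have : l ⁻¹' {s} = (MeasurableEquiv.toLp 2 (Fin d → ℝ)).symm ⁻¹' ((fun f => f i) ⁻¹' {s}) := by
    ext x; rfl
  rw [this, hp.measure_preimage (((measurable_pi_apply i) (measurableSet_singleton s)).nullMeasurableSet)]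
  have := Measure.pi_hyperplane (fun _ : Fin d => (volume : Measure ℝ)) i s
  exact this


lemma prep {d : ℕ} {v : Euc d → Euc d} {Kv : ℝ≥0} (hvL : LipschitzWith Kv v)
    {C : ℝ} (hv : ∀ x, ‖v x‖ ≤ C) {ω : Set (Euc d)} {R T : ℝ} (hT : 0 ≤ T)
    {χ : Euc d → ℝ} {Kχ : ℝ≥0} (hχ : LipschitzWith Kχ χ) (h1 : ∀ x, |χ x| ≤ 1)
    (hχ0 : ∀ x, x ∉ ω ∩ Metric.closedBall 0 R → χ x = 0)
    {c0 : Euc d} {r0 : ℝ} {S : Set (Euc d)} (hS : BTree ω c0 r0 S) (hone : ∀ x ∈ closure S, χ x = 1)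
    {K : Set (Euc d)} (hK : IsCompact K) (hKS : K ⊆ S)
    {m : ℝ} (hm0 : 0 < m) (hm : ∀ x, Metric.infDist x K < m → x ∈ ω ∩ Metric.closedBall 0 R)
    (μ : Measure (Euc d)) [IsFiniteMeasure μ]
    (hit : ∀ᵐ x ∂μ, ∃ γ, IsTraj (fun x _ => v x) T γ ∧ γ 0 = x ∧ ∃ t ∈ Icc 0 T, γ t ∈ K)
    {δ : ℝ≥0∞} (hδ : 0 < δ) :
    ∃ F, Adm v ω R (T + 1) F ∧ μ.map F (Metric.ball c0 r0)ᶜ ≤ δ + δ := by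
  obtain ⟨F, hF, hFm⟩ := stop_block hvL hv hT hK (tree_open hS) hKS hm0 hm μ hit hδ
  have hFc := adm_cont hT hF
  obtain ⟨G, hG, hGm⟩ := tree_block hvL hv hχ h1 hχ0 hS hone (μ.map F) δ hδ 1 one_pos
  have hGc := adm_cont zero_le_one hG
  refine ⟨G ∘ F, adm_comp hT zero_le_one hF hG, ?_⟩
  rw [← Measure.map_map hGc.measurable hFc.measurable,
    Measure.map_apply hGc.measurable Metric.isOpen_ball.measurableSet.compl, preimage_compl]
  refine hGm.trans ?_
  rw [Measure.map_apply hFc.measurable (tree_open hS).measurableSet.compl, preimage_compl]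
  gcongr

lemma assemble {d : ℕ} {v : Euc d → Euc d} {Kv : ℝ≥0} (hvL : LipschitzWith Kv v)
    {C : ℝ} (hv : ∀ x, ‖v x‖ ≤ C) {ω : Set (Euc d)} {R S0 S1 : ℝ} (hS0 : 0 ≤ S0) (hS1 : 0 ≤ S1)
    {χ : Euc d → ℝ} {Kχ : ℝ≥0} (hχ : LipschitzWith Kχ χ) (h1 : ∀ x, |χ x| ≤ 1)
    (hχ0 : ∀ x, x ∉ ω ∩ Metric.closedBall 0 R → χ x = 0)
    {c0 : Euc d} {r0 : ℝ} (hr0 : 0 < r0) (hone : ∀ x ∈ Metric.closedBall c0 r0, χ x = 1)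
    (i : Fin d) (μ0 μ1 : Measure (Euc d)) [IsProbabilityMeasure μ0] [IsProbabilityMeasure μ1]
    (h0ac : μ0 ≪ volume) (hb0 : ∀ᵐ x ∂μ0, ‖x‖ ≤ R) (hb1 : ∀ᵐ x ∂μ1, ‖x‖ ≤ R)
    {F0 F1 : Euc d → Euc d} (hF0 : Adm v ω R S0 F0) (hF1 : Adm (fun x => - v x) ω R S1 F1)
    {δ : ℝ≥0∞} (hδ : 0 < δ) (hm0 : μ0.map F0 (Metric.ball c0 r0)ᶜ ≤ δ)
    (hm1 : μ1.map F1 (Metric.ball c0 r0)ᶜ ≤ δ) {ε : ℝ} (hε : 0 < ε) :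
    ∃ F, Adm v ω R (S0 + 1 + S1) F ∧
      W1 (μ0.map F) μ1 ≤ ENNReal.ofReal ε + ENNReal.ofReal (2 * R + C * (S0 + 1 + S1)) * (δ + δ + δ) := by
  have hF0c := adm_cont hS0 hF0
  have hF1c := adm_cont hS1 hF1
  obtain ⟨G, hG, hGF, hFG⟩ := adm_rev hS1 hF1
  have hGc := adm_cont hS1 hG
  obtain ⟨L, hL⟩ := adm_lip hS1 hG
  have hpα : IsProbabilityMeasure (μ0.map F0) := Measure.isProbabilityMeasure_map hF0c.measurable.aemeasurable
  have hpβ : IsProbabilityMeasure (μ1.map F1) := Measure.isProbabilityMeasure_map hF1c.measurable.aemeasurable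
  set l := (EuclideanSpace.proj (𝕜 := ℝ) i : Euc d →L[ℝ] ℝ) with hl
  have hα : ∀ s, μ0.map F0 (l ⁻¹' {s}) = 0 := fun s =>
    adm_null hS0 hF0 h0ac (l.continuous.measurable (measurableSet_singleton s)) (coord_null i s)
  obtain ⟨η, hη, hη1, hηε⟩ : ∃ η : ℝ, 0 < η ∧ η < 1 ∧ L * (η * (1 + 2 * r0)) ≤ ε := by
    have hP : 0 < L * (1 + 2 * r0) + 1 := by positivity
    refine ⟨min (1/2) (ε / (L * (1 + 2 * r0) + 1)), by positivity, (min_le_left _ _).trans_lt (by norm_num), ?_⟩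
    have h2 := min_le_right (1/2) (ε / (L * (1 + 2 * r0) + 1))
    rw [le_div_iff₀ hP] at h2
    have : 0 < min (1/2) (ε / (L * (1 + 2 * r0) + 1)) := by positivity
    nlinarith
  obtain ⟨H, hH, π, hπ1, hπ2, A, hA, hAδ, hae⟩ := transport_block hvL hv hχ h1 hχ0 hr0 hone l
    (μ0.map F0) (μ1.map F1) hα hη hη1 hδ
  have hHc := adm_cont zero_le_one hH
  have hadm : Adm v ω R (S0 + 1 + S1) (G ∘ (H ∘ F0)) :=
    adm_comp (by linarith) hS1 (adm_comp hS0 zero_le_one hF0 hH) hG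
  refine ⟨_, hadm, ?_⟩
  set B := Metric.ball c0 r0 with hB
  have hBm : MeasurableSet B := Metric.isOpen_ball.measurableSet
  set D := ENNReal.ofReal (2 * R + C * (S0 + 1 + S1)) with hD
  have hpπ : IsProbabilityMeasure π := by
    constructor
    have := hpα.measure_univ
    rw [← hπ1, Measure.map_apply measurable_fst MeasurableSet.univ] at this
    simpa using this
  have hj : Measurable (fun q : Euc d × Euc d => (G (H q.1), G q.2)) :=
    ((hGc.comp (hHc.comp continuous_fst)).prodMk (hGc.comp continuous_snd)).measurable
  have e1 : (π.map (fun q => (G (H q.1), G q.2))).map Prod.fst = μ0.map (G ∘ (H ∘ F0)) := by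
    rw [Measure.map_map measurable_fst hj, ← Measure.map_map hGc.measurable (hHc.comp hF0c).measurable,
      ← Measure.map_map hHc.measurable hF0c.measurable, ← hπ1,
      Measure.map_map hHc.measurable measurable_fst, Measure.map_map hGc.measurable (hHc.measurable.comp measurable_fst)]
    rfl
  have e2 : (π.map (fun q => (G (H q.1), G q.2))).map Prod.snd = μ1 := by
    have : μ1 = (μ1.map F1).map G := by
      rw [Measure.map_map hGc.measurable hF1c.measurable]
      have : G ∘ F1 = id := funext hGF
      rw [this, Measure.map_id]
    rw [Measure.map_map measurable_snd hj, this, ← hπ2, Measure.map_map hGc.measurable measurable_snd]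
    rfl
  have hn : ∀ (s : Set (Euc d)), MeasurableSet s → π (Prod.fst ⁻¹' s) = μ0.map F0 s := fun s hs => by
    rw [← hπ1, Measure.map_apply measurable_fst hs]
  have hn2 : ∀ (s : Set (Euc d)), MeasurableSet s → π (Prod.snd ⁻¹' s) = μ1.map F1 s := fun s hs => by
    rw [← hπ2, Measure.map_apply measurable_snd hs]
  have a1 : ∀ᵐ q ∂π, ‖G (H q.1)‖ ≤ R + C * (S0 + 1 + S1) := by
    have hx : ∀ᵐ x ∂μ0, ‖G (H (F0 x))‖ ≤ R + C * (S0 + 1 + S1) := by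
      filter_upwards [hb0] with x hx
      have := adm_bound (by linarith) hv hadm x
      rwa [max_eq_right hx] at this
    have hms : MeasurableSet {y : Euc d | ‖G (H y)‖ ≤ R + C * (S0 + 1 + S1)} :=
      (isClosed_le (hGc.comp hHc).norm continuous_const).measurableSet
    have hx2 := (ae_map_iff hF0c.measurable.aemeasurable hms).2 hx
    rw [← hπ1] at hx2
    exact (ae_map_iff measurable_fst.aemeasurable hms).1 hx2
  have a2 : ∀ᵐ q ∂π, ‖G q.2‖ ≤ R := by
    have hx : ∀ᵐ x ∂μ1, ‖G (F1 x)‖ ≤ R := by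
      filter_upwards [hb1] with x hx
      rwa [hGF]
    have hms : MeasurableSet {y : Euc d | ‖G y‖ ≤ R} :=
      (isClosed_le hGc.norm continuous_const).measurableSet
    have hx2 := (ae_map_iff hF1c.measurable.aemeasurable hms).2 hx
    rw [← hπ2] at hx2
    exact (ae_map_iff measurable_snd.aemeasurable hms).1 hx2
  have hm1' : MeasurableSet (Prod.fst ⁻¹' Bᶜ : Set (Euc d × Euc d)) := measurable_fst hBm.compl
  have hm2' : MeasurableSet (Prod.snd ⁻¹' Bᶜ : Set (Euc d × Euc d)) := measurable_snd hBm.compl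
  have hm3' : MeasurableSet (Prod.fst ⁻¹' A : Set (Euc d × Euc d)) := measurable_fst hA
  set U : Set (Euc d × Euc d) := Prod.fst ⁻¹' Bᶜ ∪ Prod.snd ⁻¹' Bᶜ ∪ Prod.fst ⁻¹' A with hU
  have hUm : MeasurableSet U := (hm1'.union hm2').union hm3'
  have hUle : π U ≤ δ + δ + δ := by
    refine (measure_union_le _ _).trans ?_
    refine (add_le_add_left (measure_union_le _ _) _).trans ?_
    rw [hn _ hBm.compl, hn _ hA, hn2 _ hBm.compl]
    gcongr
  have hpt : ∀ᵐ q ∂π, edist (G (H q.1)) (G q.2) ≤ ENNReal.ofReal ε + U.indicator (fun _ => D) q := by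
    filter_upwards [a1, a2, hae] with q q1 q2 q3
    rw [edist_dist]
    by_cases hq : q ∈ U
    · rw [indicator_of_mem hq]
      refine le_add_left (ENNReal.ofReal_le_ofReal ?_)
      rw [dist_eq_norm]
      refine (norm_sub_le _ _).trans ?_
      linarith
    · rw [indicator_of_notMem hq, add_zero]
      simp only [hU, mem_union, mem_preimage, mem_compl_iff, not_or, not_not] at hq
      have := q3 hq.2 (Metric.ball_subset_closedBall hq.1.1) (Metric.ball_subset_closedBall hq.1.2)
      refine ENNReal.ofReal_le_ofReal ?_
      refine (hL.dist_le_mul _ _).trans (le_trans ?_ hηε)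
      gcongr
  unfold W1
  refine iInf_le_of_le (π.map (fun q => (G (H q.1), G q.2))) (iInf_le_of_le e1 (iInf_le_of_le e2 ?_))
  rw [lintegral_map (by fun_prop) hj]
  refine (lintegral_mono_ae hpt).trans ?_
  rw [lintegral_add_left measurable_const, lintegral_const, measure_univ, mul_one, lintegral_indicator_const hUm]
  gcongr

/-- Approximate controllability of the transport equation with a Lipschitz
localized control, under the geometric condition. -/
theorem approx_controllability_lipschitz
    (d : ℕ) (ω : Set (Euc d)) (hω : ω.Nonempty) (hωo : IsOpen ω) (hωc : IsConnected ω)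
    (v : Euc d → Euc d) (hvL : ∃ K : ℝ≥0, LipschitzWith K v)
    (hvB : ∃ C : ℝ, ∀ x, ‖v x‖ ≤ C)
    (μ0 μ1 : Measure (Euc d)) [IsProbabilityMeasure μ0] [IsProbabilityMeasure μ1]
    (h0K : IsCompact (msupport μ0)) (h1K : IsCompact (msupport μ1))
    (h0ac : μ0 ≪ volume) (h1ac : μ1 ≪ volume)
    (Φv : ℝ → Euc d → Euc d) (hΦv : IsFlow (fun x _ => v x) Φv)
    (hgeo0 : ∀ x ∈ msupport μ0, ∃ t : ℝ, 0 < t ∧ Φv t x ∈ ω)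
    (hgeo1 : ∀ x ∈ msupport μ1, ∃ t : ℝ, 0 < t ∧ Φv (-t) x ∈ ω) :
    ∃ T : ℝ, 0 < T ∧ ∀ ε : ℝ, 0 < ε →
      ∃ u : Euc d → ℝ → Euc d,
        IsRegularField (fun x t => ω.indicator (fun y => u y t) x) ∧
        ∀ Φ : ℝ → Euc d → Euc d,
          IsFlow (fun x t => v x + ω.indicator (fun y => u y t) x) Φ →
            W1 (μ0.map (Φ T)) μ1 ≤ ENNReal.ofReal ε := by
  obtain ⟨Kv, hvL⟩ := hvL
  obtain ⟨C, hv⟩ := hvB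
  have hreg := reg_auto hvL hv
  rcases Nat.eq_zero_or_pos d with hd | hd
  · subst hd
    refine ⟨1, one_pos, fun ε hε => ⟨fun _ _ => 0, ?_, fun Φ _ => ?_⟩⟩
    · simp only [indicator_zero]
      exact ⟨⟨0, by simp⟩, ⟨0, fun t => LipschitzWith.const _⟩, fun x => measurable_const⟩
    · have hss : Subsingleton (Euc 0) := inferInstance
      have hΦ : Φ 1 = id := funext fun x => Subsingleton.elim _ _
      rw [hΦ, Measure.map_id]
      unfold W1
      refine iInf_le_of_le (μ0.prod μ1) (iInf_le_of_le (by simp) (iInf_le_of_le (by simp) ?_))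
      have : ∀ q : Euc 0 × Euc 0, edist q.1 q.2 = 0 := fun q => by
        rw [Subsingleton.elim q.1 q.2, edist_self]
      simp [this]
  have i : Fin d := ⟨0, hd⟩
  have hvL' : LipschitzWith Kv (fun x => - v x) := hvL.neg
  have hv' : ∀ x, ‖(fun x => - v x) x‖ ≤ C := fun x => by simpa using hv x
  have hC : 0 ≤ C := (norm_nonneg _).trans (hv 0)
  obtain ⟨K0, T0, hK0, hK0ω, hT0, hit0⟩ := geo_compact hvL hv hωo (Φ := Φv)
    (fun x t _ => hΦv x t) h0K hgeo0
  obtain ⟨K1, T1, hK1, hK1ω, hT1, hit1⟩ := geo_compact hvL' hv' hωo (Φ := fun t => Φv (-t))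
    (fun x t _ => by
      have := hΦv x (-t)
      rw [this]
      congr 1
      rw [intervalIntegral.integral_comp_neg (fun s => - v (Φv s x)), intervalIntegral.integral_neg,
        intervalIntegral.integral_symm]
      simp) h1K hgeo1
  obtain ⟨c0, hc0⟩ := hω
  obtain ⟨r0, hr0, hball⟩ := Metric.nhds_basis_closedBall.mem_iff.1 (hωo.mem_nhds hc0)
  set K := insert c0 (K0 ∪ K1) with hKdef
  have hK : IsCompact K := (hK0.union hK1).insert c0
  have hKω : K ⊆ ω := insert_subset hc0 (union_subset hK0ω hK1ω)
  have hKne : K.Nonempty := ⟨c0, mem_insert _ _⟩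
  obtain ⟨S, hS, hKS⟩ := tree_compact hωo hωc hr0 hball hK hKω
  have hSc : IsCompact (closure S) := (tree_bdd hS).isCompact_closure
  have hSω := tree_closure hball hS
  have hKSc : K ⊆ closure S := hKS.trans subset_closure
  have hSne : (closure S).Nonempty := hKne.mono hKSc
  obtain ⟨m, hm0, hm⟩ := hSc.exists_thickening_subset_open hωo hSω
  have hbd : Bornology.IsBounded (Metric.thickening m (closure S) ∪ (msupport μ0 ∪ msupport μ1)) :=
    (hSc.isBounded.thickening).union (h0K.isBounded.union h1K.isBounded)
  obtain ⟨R, hR⟩ := hbd.subset_closedBall (0 : Euc d)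
  have hmS : ∀ x, Metric.infDist x (closure S) < m → x ∈ ω ∩ Metric.closedBall 0 R := by
    intro x hx
    have : x ∈ Metric.thickening m (closure S) := by
      rw [Metric.mem_thickening_iff]
      exact (Metric.infDist_lt_iff hSne).1 hx
    exact ⟨hm this, hR (Or.inl this)⟩
  have hmK : ∀ x, Metric.infDist x K < m → x ∈ ω ∩ Metric.closedBall 0 R := fun x hx =>
    hmS x ((Metric.infDist_le_infDist_of_subset hKSc hKne).trans_lt hx)
  have hb0 : ∀ᵐ x ∂μ0, ‖x‖ ≤ R := by
    filter_upwards [ae_msupport μ0] with x hx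
    simpa using hR (Or.inr (Or.inl hx))
  have hb1 : ∀ᵐ x ∂μ1, ‖x‖ ≤ R := by
    filter_upwards [ae_msupport μ1] with x hx
    simpa using hR (Or.inr (Or.inr hx))
  obtain ⟨Kχ, hχ⟩ := cut_lip (closure S) 0 hm0
  have hχ1 := cut_abs (closure S) 0 m
  have hχ0 : ∀ x, x ∉ ω ∩ Metric.closedBall 0 R → cut (closure S) 0 m x = 0 := by
    intro x hx
    apply cut_zero hm0
    by_contra hlt
    push Not at hlt
    exact hx (hmS x (by linarith))
  have hone : ∀ x ∈ closure S, cut (closure S) 0 m x = 1 := fun x hx =>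
    cut_one hm0 (Metric.infDist_zero_of_mem hx).le
  have hone' : ∀ x ∈ Metric.closedBall c0 r0, cut (closure S) 0 m x = 1 := by
    intro x hx
    rw [← closure_ball c0 hr0.ne'] at hx
    exact hone x (closure_mono (tree_sub hS) hx)
  have hTpos : 0 < T0 + 1 + 1 + (T1 + 1) := by linarith
  refine ⟨T0 + 1 + 1 + (T1 + 1), hTpos, fun ε hε => ?_⟩
  set T := T0 + 1 + 1 + (T1 + 1) with hT
  set D := ENNReal.ofReal (2 * R + C * T) with hD
  obtain ⟨δ, hδ, hδε⟩ : ∃ δ : ℝ≥0∞, 0 < δ ∧ D * ((δ + δ) + (δ + δ) + (δ + δ)) ≤ ENNReal.ofReal (ε / 2) := by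
    have hDt : D ≠ ⊤ := ENNReal.ofReal_ne_top
    refine ⟨ENNReal.ofReal (ε / 2) / (6 * (D + 1)), ENNReal.div_pos (by simpa using hε) (by finiteness), ?_⟩
    set a := ENNReal.ofReal (ε / 2) / (6 * (D + 1))
    have : D * ((a + a) + (a + a) + (a + a)) = (6 * D) * a := by ring
    rw [this]
    calc (6 * D) * a ≤ (6 * (D + 1)) * a := by gcongr; exact le_self_add
      _ = ENNReal.ofReal (ε / 2) := ENNReal.mul_div_cancel (by simp) (by finiteness)
  obtain ⟨F0, hF0, hF0m⟩ := prep hvL hv hT0 hχ hχ1 hχ0 hS hone hK hKS hm0 hmK μ0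
    (by
      filter_upwards [ae_msupport μ0] with x hx
      obtain ⟨γ, a, b, t, ht, h⟩ := hit0 x hx
      exact ⟨γ, a, b, t, ht, Or.inr (Or.inl h)⟩) hδ
  obtain ⟨F1, hF1, hF1m⟩ := prep hvL' hv' hT1 hχ hχ1 hχ0 hS hone hK hKS hm0 hmK μ1
    (by
      filter_upwards [ae_msupport μ1] with x hx
      obtain ⟨γ, a, b, t, ht, h⟩ := hit1 x hx
      exact ⟨γ, a, b, t, ht, Or.inr (Or.inr h)⟩) hδ
  obtain ⟨F, ⟨w, hF⟩, hW⟩ := assemble hvL hv (by linarith) (by linarith) hχ hχ1 hχ0 hr0 hone' i μ0 μ1 h0ac hb0 hb1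
    hF0 hF1 (δ := δ + δ) (by positivity) hF0m hF1m (half_pos hε)
  have hwv : ∀ x t, ω.indicator (fun y => w y t - v y) x = w x t - v x := by
    intro x t
    by_cases hx : x ∈ ω
    · rw [indicator_of_mem hx]
    · rw [indicator_of_notMem hx, hF.2.1 x t (fun h => hx h.1), sub_self]
  refine ⟨fun y t => w y t - v y, ?_, fun Φ hΦ => ?_⟩
  · simp only [hwv]
    obtain ⟨⟨C', hC'⟩, ⟨K', hK'⟩, hme⟩ := hF.1
    exact ⟨⟨C' + C, fun x t => (norm_sub_le _ _).trans (add_le_add (hC' x t) (hv x))⟩,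
      ⟨K' + Kv, fun t => (hK' t).sub hvL⟩, fun x => (hme x).sub_const _⟩
  · simp only [hwv, add_sub_cancel] at hΦ
    have hΦT : Φ T = F := by
      funext x
      obtain ⟨h1, h2⟩ := traj_of_integral (f := fun t => Φ t x) hF.1 hTpos.le (fun t _ => hΦ x t)
      have := admW_eq hTpos.le hF h1
      simp only [h2] at this
      exact this.symm
    rw [hΦT]
    refine hW.trans ?_
    refine (add_le_add le_rfl hδε).trans ?_
    rw [← ENNReal.ofReal_add (by positivity) (by positivity), add_halves]
end
end

section
/- Let ω ⊂ ℝ^d be a nonempty open connected set and v : ℝ^d → ℝ^d a Lipschitz, uniformly bounded vector field. Let μ⁰, μ¹ be compactly supported probability measures on ℝ^d satisfying the geometric condition. Then there exists T > 0 and a pair (𝟙_ω u, μ) consisting of a Borel vector field 𝟙_ω u : ℝ^d × ℝ⁺ → ℝ^d vanishing outside ω and a time-evolving compactly supported measure μ, such that (μ, v + 𝟙_ω u) is a weak solution of ∂_t μ + ∇·((v + 𝟙_ω u) μ) = 0 on [0,T] with μ(0) = μ⁰ and μ(T) = μ¹. -/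
open MeasureTheory Set
open scoped ENNReal NNReal

noncomputable section

/-- `(μ, w)` is a weak solution of the continuity equation
`∂ₜ μ + ∇·(w μ) = 0` on the time interval `[0, T]`: the velocity is integrable
against the curve of measures, and the distributional formulation (integrated in
time) holds for every smooth compactly supported test function. -/
def IsWeakSolutionOn {d : ℕ} (T : ℝ) (w : Euc d → ℝ → Euc d)
    (μ : ℝ → Measure (Euc d)) : Prop :=
  (∫⁻ t in Icc (0:ℝ) T, ∫⁻ x, (‖w x t‖₊ : ℝ≥0∞) ∂(μ t)) < ⊤ ∧
  ∀ ψ : Euc d → ℝ, ContDiff ℝ (⊤ : ℕ∞) ψ → HasCompactSupport ψ →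
    ∀ t ∈ Icc (0:ℝ) T,
      (∫ x, ψ x ∂(μ t)) - (∫ x, ψ x ∂(μ 0))
        = ∫ s in Icc (0:ℝ) t, (∫ x, (inner ℝ (gradient ψ x) (w x s) : ℝ) ∂(μ s))

/-- A measurable family of controlled curves, parametrized by `a ∈ s`, joining `f a` to `g a` in
time `T`. -/
def Fam {d : ℕ} {α : Type*} [MeasurableSpace α] (v : Euc d → Euc d) (ω : Set (Euc d)) (T : ℝ)
    (f g : α → Euc d) (s : Set α) : Prop :=
  ∃ X V : ℝ → α → Euc d, Measurable (fun q : ℝ × α => X q.1 q.2) ∧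
    Measurable (fun q : ℝ × α => V q.1 q.2) ∧
    (∃ C : ℝ, ∀ a ∈ s, ∀ t ∈ Icc (0:ℝ) T, ‖X t a‖ ≤ C ∧ ‖V t a‖ ≤ C) ∧
    ∀ a ∈ s, X 0 a = f a ∧ X T a = g a ∧ ContinuousOn (fun t => X t a) (Icc 0 T) ∧
      (∃ S : Set ℝ, S.Countable ∧
        ∀ t ∈ Ioo (0:ℝ) T \ S, HasDerivAt (fun t => X t a) (V t a) t) ∧
      ∀ t ∈ Icc (0:ℝ) T, X t a ∉ ω → V t a = v (X t a)

section fam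
variable {d : ℕ} {α β : Type*} [MeasurableSpace α] [MeasurableSpace β] {v : Euc d → Euc d}
  {ω : Set (Euc d)} {T T₁ T₂ : ℝ} {f g h : α → Euc d} {s s₁ s₂ : Set α}

theorem Fam.mono (H : Fam v ω T f g s) (hs : s₁ ⊆ s) : Fam v ω T f g s₁ := by
  obtain ⟨X, V, hX, hV, ⟨C, hC⟩, H⟩ := H
  exact ⟨X, V, hX, hV, ⟨C, fun a ha => hC a (hs ha)⟩, fun a ha => H a (hs ha)⟩

theorem Fam.comp (H : Fam v ω T f g s) {φ : β → α} (hφ : Measurable φ) :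
    Fam v ω T (f ∘ φ) (g ∘ φ) (φ ⁻¹' s) := by
  obtain ⟨X, V, hX, hV, ⟨C, hC⟩, H⟩ := H
  exact ⟨fun t b => X t (φ b), fun t b => V t (φ b),
    hX.comp (measurable_fst.prodMk (hφ.comp measurable_snd)),
    hV.comp (measurable_fst.prodMk (hφ.comp measurable_snd)),
    ⟨C, fun a ha => hC _ ha⟩, fun a ha => H _ ha⟩

theorem Fam.union (H₁ : Fam v ω T f g s₁) (H₂ : Fam v ω T f g s₂) (hs : MeasurableSet s₁) :
    Fam v ω T f g (s₁ ∪ s₂) := by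
  classical
  obtain ⟨X, V, hX, hV, ⟨C, hC⟩, H⟩ := H₁
  obtain ⟨X', V', hX', hV', ⟨C', hC'⟩, H'⟩ := H₂
  have hm : MeasurableSet {q : ℝ × α | q.2 ∈ s₁} := measurable_snd hs
  refine ⟨fun t a => if a ∈ s₁ then X t a else X' t a, fun t a => if a ∈ s₁ then V t a else V' t a,
    hX.ite hm hX', hV.ite hm hV', ⟨max C C', fun a ha t ht => ?_⟩, fun a ha => ?_⟩
  · by_cases h1 : a ∈ s₁
    · simp only [h1, if_true]
      exact ⟨(hC a h1 t ht).1.trans (le_max_left _ _), (hC a h1 t ht).2.trans (le_max_left _ _)⟩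
    · have h2 : a ∈ s₂ := ha.resolve_left h1
      simp only [h1, if_false]
      exact ⟨(hC' a h2 t ht).1.trans (le_max_right _ _), (hC' a h2 t ht).2.trans (le_max_right _ _)⟩
  · by_cases h1 : a ∈ s₁
    · simp only [h1, if_true]
      exact H a h1
    · have h2 : a ∈ s₂ := ha.resolve_left h1
      simp only [h1, if_false]
      exact H' a h2

theorem Fam.reverse (H : Fam v ω T f g s) : Fam (fun x => - v x) ω T g f s := by
  obtain ⟨X, V, hX, hV, ⟨C, hC⟩, H⟩ := H
  have hφ : Measurable (fun q : ℝ × α => ((T - q.1, q.2) : ℝ × α)) :=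
    (measurable_const.sub measurable_fst).prodMk measurable_snd
  have hI : ∀ t ∈ Icc (0:ℝ) T, T - t ∈ Icc (0:ℝ) T := by
    intro t ht; exact ⟨by linarith [ht.2], by linarith [ht.1]⟩
  refine ⟨fun t a => X (T - t) a, fun t a => - V (T - t) a, hX.comp hφ, (hV.comp hφ).neg,
    ⟨C, fun a ha t ht => ?_⟩, fun a ha => ?_⟩
  · rw [norm_neg]; exact hC a ha _ (hI t ht)
  · obtain ⟨h0, h1, h2, ⟨S, hS, h3⟩, h4⟩ := H a ha
    refine ⟨by simpa using h1, by simpa using h0, ?_, ⟨(fun t => T - t) ⁻¹' S, ?_, ?_⟩, ?_⟩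
    · exact h2.comp (by fun_prop) hI
    · exact hS.preimage (sub_right_injective)
    · intro t ht
      have := h3 (T - t) ⟨⟨by linarith [ht.1.2], by linarith [ht.1.1]⟩, ht.2⟩
      have h5 : HasDerivAt (fun t : ℝ => T - t) (-1) t := by
        simpa using (hasDerivAt_id t).const_sub T
      simpa [Function.comp_def] using HasDerivAt.scomp t this h5
    · intro t ht hx
      exact congrArg (fun y => - y) (h4 _ (hI t ht) hx)

theorem Fam.trans (hT₁ : 0 < T₁) (hT₂ : 0 < T₂) (H₁ : Fam v ω T₁ f g s)
    (H₂ : Fam v ω T₂ g h s) : Fam v ω (T₁ + T₂) f h s := by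
  classical
  obtain ⟨X, V, hX, hV, ⟨C, hC⟩, H⟩ := H₁
  obtain ⟨X', V', hX', hV', ⟨C', hC'⟩, H'⟩ := H₂
  have hm : MeasurableSet {q : ℝ × α | q.1 ≤ T₁} := measurableSet_le measurable_fst measurable_const
  have hφ : Measurable (fun q : ℝ × α => ((q.1 - T₁, q.2) : ℝ × α)) :=
    (measurable_fst.sub measurable_const).prodMk measurable_snd
  have hI : ∀ t ∈ Icc (0:ℝ) (T₁ + T₂), ¬ t ≤ T₁ → t - T₁ ∈ Icc (0:ℝ) T₂ := by
    intro t ht h; exact ⟨by linarith [ht.2], by linarith [ht.2]⟩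
  refine ⟨fun t a => if t ≤ T₁ then X t a else X' (t - T₁) a,
    fun t a => if t ≤ T₁ then V t a else V' (t - T₁) a,
    hX.ite hm (hX'.comp hφ), hV.ite hm (hV'.comp hφ), ⟨max C C', fun a ha t ht => ?_⟩,
    fun a ha => ?_⟩
  · by_cases h1 : t ≤ T₁
    · simp only [h1, if_true]
      have := hC a ha t ⟨ht.1, h1⟩
      exact ⟨this.1.trans (le_max_left _ _), this.2.trans (le_max_left _ _)⟩
    · simp only [h1, if_false]
      have := hC' a ha _ (hI t ht h1)
      exact ⟨this.1.trans (le_max_right _ _), this.2.trans (le_max_right _ _)⟩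
  · obtain ⟨h0, h1, h2, ⟨S, hS, h3⟩, h4⟩ := H a ha
    obtain ⟨h0', h1', h2', ⟨S', hS', h3'⟩, h4'⟩ := H' a ha
    refine ⟨by simp [hT₁.le, h0], by simp [hT₂, h1'], ?_, 
      ⟨S ∪ ((fun t => t - T₁) ⁻¹' S') ∪ {T₁}, ?_, ?_⟩, ?_⟩
    · refine ContinuousOn.if ?_ ?_ ?_
      · rintro t ⟨ht, h5⟩
        have : t = T₁ := by
          have : frontier {t : ℝ | t ≤ T₁} = {T₁} := frontier_Iic
          rw [this] at h5; exact h5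
        subst this
        simp [h1, h0']
      · refine h2.mono ?_
        rintro t ⟨ht, h5⟩
        have : closure {t : ℝ | t ≤ T₁} = Iic T₁ := closure_Iic _
        rw [this] at h5
        exact ⟨ht.1, h5⟩
      · refine h2'.comp (by fun_prop) ?_
        rintro t ⟨ht, h5⟩
        have : closure {t : ℝ | ¬ t ≤ T₁} = Ici T₁ := by
          simp only [not_le]; exact closure_Ioi _
        rw [this] at h5
        exact ⟨sub_nonneg.2 h5, by linarith [ht.2]⟩
    · exact (hS.union (hS'.preimage sub_left_injective)).union (countable_singleton _)
    · rintro t ⟨ht, h5⟩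
      simp only [mem_union, mem_preimage, mem_singleton_iff, not_or] at h5
      rcases lt_or_gt_of_ne h5.2 with h6 | h6
      · have := h3 t ⟨⟨ht.1, h6⟩, h5.1.1⟩
        simp only [h6.le, if_true]
        refine this.congr_of_eventuallyEq ?_
        filter_upwards [Iio_mem_nhds h6] with r hr
        simp [le_of_lt (mem_Iio.1 hr)]
      · have := h3' (t - T₁) ⟨⟨by linarith, by linarith [ht.2]⟩, h5.1.2⟩
        simp only [not_le.2 h6, if_false]
        have h7 : HasDerivAt (fun t => X' (t - T₁) a) (V' (t - T₁) a) t := by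
          have h5 : HasDerivAt (fun t : ℝ => t - T₁) 1 t := by
            simpa using (hasDerivAt_id t).sub_const T₁
          simpa [Function.comp_def] using HasDerivAt.scomp t this h5
        refine h7.congr_of_eventuallyEq ?_
        filter_upwards [Ioi_mem_nhds h6] with r hr
        simp [not_le.2 (mem_Ioi.1 hr)]
    · intro t ht
      by_cases h5 : t ≤ T₁
      · simp only [h5, if_true]; exact h4 t ⟨ht.1, h5⟩
      · simp only [h5, if_false]; exact h4' _ (hI t ht h5)

theorem Fam.line {p : Euc d} {r : ℝ} (hb : Metric.ball p r ⊆ ω) (hT : 0 < T) (hf : Measurable f)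
    (hg : Measurable g) (hfs : ∀ a ∈ s, f a ∈ Metric.ball p r)
    (hgs : ∀ a ∈ s, g a ∈ Metric.ball p r) : Fam v ω T f g s := by
  have hmem : ∀ a ∈ s, ∀ t ∈ Icc (0:ℝ) T, f a + (t / T) • (g a - f a) ∈ Metric.ball p r := by
    intro a ha t ht
    exact (convex_ball p r).add_smul_sub_mem (hfs a ha) (hgs a ha)
      ⟨div_nonneg ht.1 hT.le, (div_le_one hT).2 ht.2⟩
  have hn : ∀ x ∈ Metric.ball p r, ‖x‖ ≤ ‖p‖ + r := by
    intro x hx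
    have : ‖x - p‖ < r := by simpa [dist_eq_norm] using hx
    have h2 := norm_add_le p (x - p)
    rw [add_sub_cancel] at h2
    linarith
  refine ⟨fun t a => f a + (t / T) • (g a - f a), fun t a => (1 / T) • (g a - f a), ?_, ?_,
    ⟨max (‖p‖ + r) ((1 / T) * (2 * (‖p‖ + r))), fun a ha t ht => ⟨?_, ?_⟩⟩, fun a ha => ?_⟩
  · have h1 : Measurable (fun q : ℝ × α => f q.2) := hf.comp measurable_snd
    have h2 : Measurable (fun q : ℝ × α => g q.2) := hg.comp measurable_snd
    fun_prop
  · have h1 : Measurable (fun q : ℝ × α => f q.2) := hf.comp measurable_snd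
    have h2 : Measurable (fun q : ℝ × α => g q.2) := hg.comp measurable_snd
    fun_prop
  · exact (hn _ (hmem a ha t ht)).trans (le_max_left _ _)
  · refine le_trans ?_ (le_max_right _ _)
    rw [norm_smul, Real.norm_of_nonneg (by positivity)]
    have := norm_sub_le (g a) (f a)
    gcongr
    linarith [hn _ (hfs a ha), hn _ (hgs a ha)]
  · refine ⟨by simp, by simp [hT.ne'], by fun_prop, ⟨∅, countable_empty, fun t ht => ?_⟩, ?_⟩
    · have h5 : HasDerivAt (fun t : ℝ => t / T) (1 / T) t := (hasDerivAt_id t).div_const T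
      exact (h5.smul_const (g a - f a)).const_add (f a)
    · intro t ht hx
      exact absurd (hb (hmem a ha t ht)) hx

end fam

section flow
variable {d : ℕ} {v : Euc d → Euc d} {Φ : ℝ → Euc d → Euc d} {K : ℝ≥0} {C : ℝ}

theorem flow_neg (hΦ : IsFlow (fun x _ => v x) Φ) :
    IsFlow (fun x _ => - v x) (fun t x => Φ (-t) x) := by
  intro x t
  have h := hΦ x (-t)
  have h2 := intervalIntegral.integral_comp_neg (a := 0) (b := t) (fun s => v (Φ s x))
  simp only at h h2 ⊢
  rw [h, intervalIntegral.integral_neg, h2, intervalIntegral.integral_symm]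
  simp

theorem flow_intervalIntegrable (hv : Continuous v) (hC : ∀ x, ‖v x‖ ≤ C)
    (hΦ : IsFlow (fun x _ => v x) Φ) (x : Euc d) (a b : ℝ) :
    IntervalIntegrable (fun s => v (Φ s x)) volume a b := by
  classical
  set F : ℝ → Euc d := fun s => v (Φ s x) with hF
  set S : Set ℝ := {t | IntervalIntegrable F volume 0 t} with hS
  have hC0 : 0 ≤ C := (norm_nonneg _).trans (hC 0)
  have hlip : ContinuousOn (fun t => Φ t x) S := by
    have : LipschitzOnWith (Real.toNNReal C) (fun t => Φ t x) S := by
      refine LipschitzOnWith.of_dist_le_mul fun s hs t ht => ?_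
      have h1 := hΦ x s
      have h2 := hΦ x t
      simp only at h1 h2
      rw [dist_eq_norm, h1, h2, add_sub_add_left_eq_sub,
        intervalIntegral.integral_interval_sub_left hs ht, Real.coe_toNNReal _ hC0, Real.dist_eq]
      exact intervalIntegral.norm_integral_le_of_norm_le_const fun r _ => hC _
    exact this.continuousOn
  have hord : S.OrdConnected := by
    refine ⟨fun s hs t ht r hr => ?_⟩
    rcases le_total 0 r with h0 | h0
    · exact IntervalIntegrable.mono_set ht (by
        rw [uIcc_of_le h0, uIcc_of_le (h0.trans hr.2)]; exact Icc_subset_Icc_right hr.2)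
    · exact IntervalIntegrable.mono_set hs (by
        rw [uIcc_of_ge h0, uIcc_of_ge (hr.1.trans h0)]; exact Icc_subset_Icc_left hr.1)
  have hmeas : Measurable (fun t => Φ t x) := by
    have h1 := hlip.measurable_piecewise (g := fun _ => x) continuousOn_const hord.measurableSet
    convert h1 using 1
    funext t
    by_cases ht : t ∈ S
    · simp [ht]
    · have h2 := hΦ x t
      simp only at h2
      rw [intervalIntegral.integral_undef ht] at h2
      simpa [ht] using h2
  have hFm : Measurable F := hv.measurable.comp hmeas
  exact intervalIntegrable_const.mono_fun (f := fun _ => C) hFm.aestronglyMeasurable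
    (Filter.Eventually.of_forall fun t => by
      simpa [abs_of_nonneg hC0] using hC (Φ t x))

theorem flow_cont (hv : Continuous v) (hC : ∀ x, ‖v x‖ ≤ C)
    (hΦ : IsFlow (fun x _ => v x) Φ) (x : Euc d) : Continuous (fun t => Φ t x) := by
  have : (fun t => Φ t x) = fun t => x + ∫ s in (0:ℝ)..t, v (Φ s x) := by
    funext t; exact hΦ x t
  rw [this]
  exact continuous_const.add (intervalIntegral.continuous_primitive
    (fun a b => flow_intervalIntegrable hv hC hΦ x a b) 0)

theorem flow_deriv (hv : Continuous v) (hC : ∀ x, ‖v x‖ ≤ C)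
    (hΦ : IsFlow (fun x _ => v x) Φ) (x : Euc d) (t : ℝ) :
    HasDerivAt (fun t => Φ t x) (v (Φ t x)) t := by
  have h : (fun t => Φ t x) = fun t => x + ∫ s in (0:ℝ)..t, v (Φ s x) := by
    funext t; exact hΦ x t
  have hc : Continuous (fun s => v (Φ s x)) := hv.comp (flow_cont hv hC hΦ x)
  rw [h]
  exact (intervalIntegral.integral_hasDerivAt_right (hc.intervalIntegrable _ _)
    hc.stronglyMeasurable.stronglyMeasurableAtFilter hc.continuousAt).const_add x

theorem flow_zero (hΦ : IsFlow (fun x _ => v x) Φ) (x : Euc d) : Φ 0 x = x := by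
  simpa using hΦ x 0

theorem flow_space_cont (hv : LipschitzWith K v) (hC : ∀ x, ‖v x‖ ≤ C)
    (hΦ : IsFlow (fun x _ => v x) Φ) {t : ℝ} (ht : 0 ≤ t) : Continuous (Φ t) := by
  have : LipschitzWith (Real.toNNReal (Real.exp (K * t))) (Φ t) := by
    refine LipschitzWith.of_dist_le_mul fun x y => ?_
    have := dist_le_of_trajectories_ODE (v := fun _ => v) (K := K) (f := fun t => Φ t x)
      (g := fun t => Φ t y) (a := 0) (b := t) (δ := dist x y) (fun _ => hv)
      (flow_cont hv.continuous hC hΦ x).continuousOn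
      (fun r _ => (flow_deriv hv.continuous hC hΦ x r).hasDerivWithinAt)
      (flow_cont hv.continuous hC hΦ y).continuousOn
      (fun r _ => (flow_deriv hv.continuous hC hΦ y r).hasDerivWithinAt)
      (by simp [flow_zero hΦ]) t ⟨ht, le_rfl⟩
    rw [Real.coe_toNNReal _ (Real.exp_pos _).le, mul_comm]
    simpa using this
  exact this.continuous

theorem Fam.flow (ω : Set (Euc d)) (hv : LipschitzWith K v) (hC : ∀ x, ‖v x‖ ≤ C)
    (hΦ : IsFlow (fun x _ => v x) Φ) {T : ℝ} (hT : 0 < T) {s : Set (Euc d)}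
    (hs : Bornology.IsBounded s) : Fam v ω T id (Φ T) s := by
  have hm : Measurable (fun q : ℝ × Euc d => Φ (max q.1 0) q.2) :=
    measurable_uncurry_of_continuous_of_measurable (u := fun t x => Φ (max t 0) x)
      (fun x => (flow_cont hv.continuous hC hΦ x).comp (by fun_prop))
      (fun t => (flow_space_cont hv hC hΦ (le_max_right _ _)).measurable)
  have hC0 : 0 ≤ C := (norm_nonneg _).trans (hC 0)
  obtain ⟨R, hR⟩ := hs.exists_norm_le
  refine ⟨fun t x => Φ (max t 0) x, fun t x => v (Φ (max t 0) x), hm,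
    hv.continuous.measurable.comp hm, ⟨max (R + C * T) C, fun a ha t ht => ⟨?_, ?_⟩⟩,
    fun a ha => ⟨?_, ?_, ?_, ⟨∅, countable_empty, fun t ht => ?_⟩, fun t ht _ => rfl⟩⟩
  · refine le_trans ?_ (le_max_left _ _)
    simp only [max_eq_left ht.1]
    have h1 := hΦ a t
    simp only at h1
    rw [h1]
    refine (norm_add_le _ _).trans (add_le_add (hR a ha) ?_)
    refine (intervalIntegral.norm_integral_le_of_norm_le_const (C := C) fun r _ => hC _).trans ?_
    rw [sub_zero, abs_of_nonneg ht.1]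
    exact mul_le_mul_of_nonneg_left ht.2 hC0
  · exact (hC _).trans (le_max_right _ _)
  · simp [flow_zero hΦ]
  · simp [max_eq_left hT.le]
  · exact ((flow_cont hv.continuous hC hΦ a).comp (by fun_prop)).continuousOn
  · have h0 : 0 < t := ht.1.1
    simp only [max_eq_left h0.le]
    refine (flow_deriv hv.continuous hC hΦ a t).congr_of_eventuallyEq ?_
    filter_upwards [Ioi_mem_nhds h0] with r hr
    rw [max_eq_left (le_of_lt (mem_Ioi.1 hr))]

end flow

theorem Fam.points {d : ℕ} {α : Type*} [MeasurableSpace α] {ω : Set (Euc d)} (hωo : IsOpen ω)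
    (hωc : IsConnected ω) (v : Euc d → Euc d) {p q : Euc d} (hp : p ∈ ω) (hq : q ∈ ω) :
    ∀ T : ℝ, 0 < T → Fam v ω T (fun _ : α => p) (fun _ => q) univ := by
  refine hωc.isPreconnected.induction₂'
    (fun p q => ∀ T : ℝ, 0 < T → Fam v ω T (fun _ : α => p) (fun _ => q) univ) ?_ ?_ hp hq
  · intro x hx
    obtain ⟨r, hr, hb⟩ := Metric.isOpen_iff.1 hωo x hx
    filter_upwards [mem_nhdsWithin_of_mem_nhds (Metric.ball_mem_nhds x hr)] with y hy
    exact ⟨fun T hT => Fam.line hb hT measurable_const measurable_const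
      (fun _ _ => Metric.mem_ball_self hr) (fun _ _ => hy),
      fun T hT => Fam.line hb hT measurable_const measurable_const
      (fun _ _ => hy) (fun _ _ => Metric.mem_ball_self hr)⟩
  · intro x y z _ _ _ h1 h2 T hT
    have := (h1 (T / 2) (by positivity)).trans (by positivity) (by positivity)
      (h2 (T / 2) (by positivity))
    rwa [add_halves] at this

theorem Fam.compact {d : ℕ} {ω : Set (Euc d)} (hωo : IsOpen ω)
    (hωc : IsConnected ω) {v : Euc d → Euc d} {K : ℝ≥0} {C : ℝ} {Φ : ℝ → Euc d → Euc d}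
    (hv : LipschitzWith K v) (hC : ∀ x, ‖v x‖ ≤ C)
    (hΦ : IsFlow (fun x _ => v x) Φ) {p : Euc d} (hp : p ∈ ω) {A : Set (Euc d)}
    (hA : IsCompact A) (hgeo : ∀ x ∈ A, ∃ t : ℝ, 0 < t ∧ Φ t x ∈ ω) :
    ∃ T : ℝ, 0 < T ∧ Fam v ω T id (fun _ => p) A := by
  have key : ∃ T₀ : ℝ, ∃ B : Set (Euc d), MeasurableSet B ∧ A ⊆ B ∧
      ∀ T, T₀ < T → Fam v ω T id (fun _ => p) B := by
    refine hA.induction_on (p := fun A => ∃ T₀ : ℝ, ∃ B : Set (Euc d), MeasurableSet B ∧ A ⊆ B ∧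
      ∀ T, T₀ < T → Fam v ω T id (fun _ => p) B) ?_ ?_ ?_ ?_
    · refine ⟨0, ∅, MeasurableSet.empty, subset_rfl, fun T _ => ?_⟩
      exact ⟨fun _ _ => 0, fun _ _ => 0, measurable_const, measurable_const,
        ⟨0, fun a ha => ha.elim⟩, fun a ha => ha.elim⟩
    · rintro s t hst ⟨T₀, B, hB, htB, H⟩
      exact ⟨T₀, B, hB, hst.trans htB, H⟩
    · rintro s t ⟨T₀, B, hB, htB, H⟩ ⟨T₀', B', hB', htB', H'⟩
      refine ⟨max T₀ T₀', B ∪ B', hB.union hB', union_subset_union htB htB', fun T hT => ?_⟩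
      exact (H T ((le_max_left _ _).trans_lt hT)).union (H' T ((le_max_right _ _).trans_lt hT)) hB
    · intro x hx
      obtain ⟨t, ht, hxt⟩ := hgeo x hx
      obtain ⟨r, hr, hb⟩ := Metric.isOpen_iff.1 hωo _ hxt
      have hcont := flow_space_cont hv hC hΦ ht.le
      obtain ⟨N, hNo, hxN, hN1, hN2⟩ : ∃ N : Set (Euc d), IsOpen N ∧ x ∈ N ∧
          (∀ a ∈ N, Φ t a ∈ Metric.ball (Φ t x) r) ∧ Bornology.IsBounded N := by
        refine ⟨Φ t ⁻¹' (Metric.ball (Φ t x) r) ∩ Metric.ball x 1,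
          (Metric.isOpen_ball.preimage hcont).inter Metric.isOpen_ball, ⟨?_, ?_⟩,
          fun a ha => ha.1, Metric.isBounded_ball.subset inter_subset_right⟩
        · rw [mem_preimage]; exact Metric.mem_ball_self hr
        · exact Metric.mem_ball_self one_pos
      refine ⟨N, mem_nhdsWithin_of_mem_nhds (hNo.mem_nhds hxN), t, N, hNo.measurableSet,
        subset_rfl, fun T hT => ?_⟩
      have hτ : 0 < (T - t) / 2 := by linarith
      have F1 : Fam v ω t id (Φ t) N :=
        Fam.flow ω hv hC hΦ ht hN2
      have F2 : Fam v ω ((T - t) / 2) (Φ t) (fun _ => Φ t x) N :=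
        Fam.line hb hτ hcont.measurable measurable_const hN1
          (fun _ _ => Metric.mem_ball_self hr)
      have F3 : Fam v ω ((T - t) / 2) (fun _ : Euc d => Φ t x) (fun _ => p) N :=
        (Fam.points hωo hωc v hxt hp _ hτ).mono (subset_univ _)
      have := F1.trans ht (by positivity) (F2.trans hτ hτ F3)
      convert this using 1
      ring
  obtain ⟨T₀, B, -, hAB, H⟩ := key
  exact ⟨max T₀ 0 + 1, by positivity, 
    (H _ (by linarith [le_max_left T₀ 0])).mono hAB⟩

theorem exists_condvec {d : ℕ} {Ω B : Type*} [MeasurableSpace Ω] [MeasurableSpace B]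
    (ρ : Measure Ω) [IsFiniteMeasure ρ] {Q : Ω → B} {D : Ω → Euc d} (hQ : Measurable Q)
    (hD : Measurable D) (hDi : Integrable D ρ) :
    ∃ u : B → Euc d, Measurable u ∧ Integrable (fun a => u (Q a)) ρ ∧
      ∀ g : B → Euc d, Measurable g → (∃ C : ℝ, ∀ b, ‖g b‖ ≤ C) →
        ∫ a, inner ℝ (g (Q a)) (u (Q a)) ∂ρ = ∫ a, inner ℝ (g (Q a)) (D a) ∂ρ := by
  have hDint : Integrable (fun q : B × Euc d => q.2) (ρ.map fun a => (Q a, D a)) := by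
    rw [integrable_map_measure (by fun_prop) (by fun_prop)]
    exact hDi
  refine ⟨fun b => ∫ y, y ∂(ProbabilityTheory.condDistrib D Q ρ b), ?_, ?_, ?_⟩
  · exact (StronglyMeasurable.integral_condDistrib (f := fun q : B × Euc d => q.2)
      measurable_snd.stronglyMeasurable).measurable
  · exact Integrable.integral_condDistrib hQ.aemeasurable hD.aemeasurable hDint
  · rintro g hg ⟨C, hC⟩
    have hm : Measurable (fun q : B × Euc d => (inner ℝ (g q.1) q.2 : ℝ)) := by fun_prop
    have hint2 : Integrable (fun q : B × Euc d => (inner ℝ (g q.1) q.2 : ℝ))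
        (ρ.map fun a => (Q a, D a)) := by
      refine (hDint.norm.const_mul C).mono' hm.aestronglyMeasurable
        (Filter.Eventually.of_forall fun q => ?_)
      exact (norm_inner_le_norm _ _).trans (mul_le_mul_of_nonneg_right (hC _) (norm_nonneg _))
    have h1 : ∫ a, inner ℝ (g (Q a)) (D a) ∂ρ
        = ∫ q, (inner ℝ (g q.1) q.2 : ℝ) ∂(ρ.map fun a => (Q a, D a)) := by
      rw [integral_map (by fun_prop) hm.aestronglyMeasurable]
    rw [h1]
    have h2 := hint2
    rw [← ProbabilityTheory.compProd_map_condDistrib hD.aemeasurable] at h2 ⊢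
    rw [Measure.integral_compProd h2]
    have hu : StronglyMeasurable (fun b => ∫ y, y ∂(ProbabilityTheory.condDistrib D Q ρ b)) := 
      StronglyMeasurable.integral_condDistrib (f := fun q : B × Euc d => q.2)
        measurable_snd.stronglyMeasurable
    have h3 : ∫ b, inner ℝ (g b) (∫ y, y ∂(ProbabilityTheory.condDistrib D Q ρ b)) ∂(ρ.map Q)
        = ∫ a, inner ℝ (g (Q a)) (∫ y, y ∂(ProbabilityTheory.condDistrib D Q ρ (Q a))) ∂ρ :=
      integral_map hQ.aemeasurable (hg.inner hu.measurable).aestronglyMeasurable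
    rw [← h3]
    refine integral_congr_ae ?_
    filter_upwards [Integrable.condDistrib_ae_map hD.aemeasurable hDint] with b hb
    exact (integral_inner hb (g b)).symm

theorem msupport_null {d : ℕ} (μ : Measure (Euc d)) : μ (msupport μ)ᶜ = 0 := by
  have : msupport μ = μ.support := by
    ext x
    rw [Measure.mem_support_iff_forall]
    constructor
    · intro h U hU
      obtain ⟨V, hVU, hV, hx⟩ := mem_nhds_iff.1 hU
      exact (h V hV hx).trans_le (measure_mono hVU)
    · intro h U hU hx
      exact h U (hU.mem_nhds hx)
  rw [this]
  exact Measure.measure_compl_support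

theorem msupport_compact {d : ℕ} (μ : Measure (Euc d)) (C : ℝ) (h : ∀ᵐ x ∂μ, ‖x‖ ≤ C) :
    IsCompact (msupport μ) := by
  have hcl : IsClosed (msupport μ) := by
    rw [← isOpen_compl_iff, isOpen_iff_forall_mem_open]
    intro x hx
    simp only [msupport, mem_compl_iff, mem_ofPred_eq, not_forall] at hx
    obtain ⟨U, hU, hxU, h0⟩ := hx
    exact ⟨U, fun y hy hy' => h0 (hy' U hU hy), hU, hxU⟩
  refine (isCompact_closedBall (0 : Euc d) C).of_isClosed_subset hcl fun x hx => ?_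
  by_contra hxC
  have := hx _ (Metric.isClosed_closedBall (x := (0 : Euc d)) (ε := C)).isOpen_compl hxC
  refine this.ne' ?_
  rw [ae_iff] at h
  convert h using 2
  ext y
  simp

theorem Fam.weak {d : ℕ} {α : Type*} [MeasurableSpace α] {v : Euc d → Euc d} {ω : Set (Euc d)}
    {T : ℝ} {f g : α → Euc d} {s : Set α} {Cv : ℝ} (hωo : IsOpen ω) (hv : Continuous v)
    (hCv : ∀ x, ‖v x‖ ≤ Cv) (hT : 0 < T) (H : Fam v ω T f g s)
    (P : Measure α) [IsProbabilityMeasure P] (hs : ∀ᵐ a ∂P, a ∈ s) :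
    ∃ (u : Euc d → ℝ → Euc d) (μ : ℝ → Measure (Euc d)),
      Measurable (fun q : Euc d × ℝ => u q.1 q.2) ∧
      (∀ x t, x ∉ ω → u x t = 0) ∧
      (∀ t ∈ Icc (0:ℝ) T, IsCompact (msupport (μ t))) ∧
      IsWeakSolutionOn T (fun x t => v x + u x t) μ ∧
      μ 0 = P.map f ∧ μ T = P.map g := by
  classical
  obtain ⟨X, V, hX, hV, ⟨C, hC⟩, H⟩ := H
  have hXt : ∀ t, Measurable (X t) := fun t => hX.comp (measurable_const.prodMk measurable_id)
  set m : Measure ℝ := volume.restrict (Icc 0 T) with hm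
  set ρ : Measure (ℝ × α) := m.prod P with hρ
  have hmfin : IsFiniteMeasure m := ⟨by simp [hm]⟩
  have hRs : ∀ᵐ q ∂ρ, q.1 ∈ Icc (0:ℝ) T ∧ q.2 ∈ s := by
    have h1 : ∀ᵐ t ∂m, t ∈ Icc (0:ℝ) T := ae_restrict_mem measurableSet_Icc
    exact (Measure.quasiMeasurePreserving_fst.ae h1).and (Measure.quasiMeasurePreserving_snd.ae hs)
  set Q : ℝ × α → Euc d × ℝ := fun q => (X q.1 q.2, q.1) with hQdef
  have hQ : Measurable Q := hX.prodMk measurable_fst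
  set D : ℝ × α → Euc d := fun q => V q.1 q.2 - v (X q.1 q.2) with hDdef
  have hvX : Measurable (fun q : ℝ × α => v (X q.1 q.2)) := hv.measurable.comp hX
  have hD : Measurable D := hV.sub hvX
  have hVi : Integrable (fun q : ℝ × α => V q.1 q.2) ρ := by
    refine (integrable_const C).mono' hV.aestronglyMeasurable ?_
    filter_upwards [hRs] with q hq
    exact (hC _ hq.2 _ hq.1).2
  have hvi : Integrable (fun q : ℝ × α => v (X q.1 q.2)) ρ :=
    (integrable_const Cv).mono' hvX.aestronglyMeasurable (Filter.Eventually.of_forall fun q => hCv _)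
  obtain ⟨u, hu, hui, huD⟩ := exists_condvec ρ hQ hD (hVi.sub hvi)
  set w : Euc d × ℝ → Euc d := (Prod.fst ⁻¹' ω).indicator u with hw
  have hwm : Measurable w := hu.indicator (measurable_fst hωo.measurableSet)
  have hwi : Integrable (fun q => w (Q q)) ρ := by
    refine hui.mono (hwm.comp hQ).aestronglyMeasurable (Filter.Eventually.of_forall fun q => ?_)
    exact norm_indicator_le_norm_self _ _
  have hwD : ∀ g : Euc d × ℝ → Euc d, Measurable g → (∃ C : ℝ, ∀ b, ‖g b‖ ≤ C) →
        ∫ a, inner ℝ (g (Q a)) (w (Q a)) ∂ρ = ∫ a, inner ℝ (g (Q a)) (D a) ∂ρ := by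
    rintro g hg ⟨C', hC'⟩
    have h1 := huD ((Prod.fst ⁻¹' ω).indicator g) (hg.indicator (measurable_fst hωo.measurableSet))
      ⟨C', fun b => (norm_indicator_le_norm_self _ _).trans (hC' b)⟩
    have h2 : ∀ a, inner ℝ ((Prod.fst ⁻¹' ω).indicator g (Q a)) (u (Q a))
        = inner ℝ (g (Q a)) (w (Q a)) := by
      intro a
      by_cases ha : Q a ∈ Prod.fst ⁻¹' ω <;> simp [hw, ha]
    simp only [h2] at h1
    rw [h1]
    refine integral_congr_ae ?_
    filter_upwards [hRs] with q hq
    by_cases ha : Q q ∈ Prod.fst ⁻¹' ω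
    · simp [ha]
    · have : D q = 0 := by
        rw [hDdef]
        exact sub_eq_zero.2 ((H _ hq.2).2.2.2.2 _ hq.1 ha)
      simp [ha, this]
  have hwv : Measurable (fun q : Euc d × ℝ => v q.1 + w q) :=
    (hv.measurable.comp measurable_fst).add hwm
  refine ⟨fun x t => w (x, t), fun t => P.map (X t), hwm, ?_, ?_, ⟨?_, ?_⟩, ?_, ?_⟩
  · intro x t hx
    simp [hw, hx]
  · intro t ht
    refine msupport_compact _ C ?_
    rw [ae_map_iff (hXt t).aemeasurable (measurableSet_le measurable_norm measurable_const)]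
    filter_upwards [hs] with a ha
    exact (hC a ha t ht).1
  · have h1 : ∀ t, ∫⁻ x, (‖v x + w (x, t)‖₊ : ℝ≥0∞) ∂(P.map (X t))
        = ∫⁻ a, (‖v (X t a) + w (X t a, t)‖₊ : ℝ≥0∞) ∂P := by
      intro t
      refine lintegral_map ?_ (hXt t)
      have : Measurable (fun x => v x + w (x, t)) := hwv.comp (measurable_id.prodMk measurable_const)
      exact this.nnnorm.coe_nnreal_ennreal
    simp only [h1]
    have h2 : Measurable (fun q : ℝ × α => (‖v (X q.1 q.2) + w (X q.1 q.2, q.1)‖₊ : ℝ≥0∞)) :=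
      (hwv.comp hQ).nnnorm.coe_nnreal_ennreal
    have h3 := lintegral_prod (μ := m) (ν := P) _ h2.aemeasurable
    rw [hm] at h3
    rw [← h3]
    exact (hvi.add hwi).2
  · intro ψ hψ hψc t ht
    have hψ1 : Differentiable ℝ ψ := hψ.differentiable (by simp)
    have hgc : Continuous (gradient ψ) := by
      have : Continuous (fderiv ℝ ψ) := hψ.continuous_fderiv (by simp)
      exact (InnerProductSpace.toDual ℝ (Euc d)).symm.continuous.comp this
    obtain ⟨G, hG⟩ : ∃ G : ℝ, ∀ x, ‖gradient ψ x‖ ≤ G := by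
      have h1 : HasCompactSupport (gradient ψ) := 
        (hψc.fderiv ℝ).comp_left (g := (InnerProductSpace.toDual ℝ (Euc d)).symm) (map_zero _)
      exact hgc.bounded_above_of_compact_support h1
    have hψi : ∀ t, Integrable (fun a => ψ (X t a)) P := by
      obtain ⟨G', hG'⟩ := hψ.continuous.bounded_above_of_compact_support hψc
      intro t
      exact (integrable_const G').mono' (hψ.continuous.measurable.comp (hXt t)).aestronglyMeasurable
        (Filter.Eventually.of_forall fun a => hG' _)
    have hin : ∀ (F : ℝ × α → Euc d), Measurable F → Integrable F ρ →
        Integrable (fun q => (inner ℝ (gradient ψ (X q.1 q.2)) (F q) : ℝ)) ρ := by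
      intro F hF hFi
      refine (hFi.norm.const_mul G).mono'
        ((hgc.measurable.comp hX).inner hF).aestronglyMeasurable
        (Filter.Eventually.of_forall fun q => ?_)
      exact (norm_inner_le_norm _ _).trans (mul_le_mul_of_nonneg_right (hG _) (norm_nonneg _))
    -- the fundamental theorem of calculus along curves
    have hftc : ∀ a ∈ s, ψ (X t a) - ψ (X 0 a)
        = ∫ r in Icc 0 t, (inner ℝ (gradient ψ (X r a)) (V r a) : ℝ) := by
      intro a ha
      obtain ⟨-, -, h2, ⟨S, hS, h3⟩, -⟩ := H a ha
      rw [integral_Icc_eq_integral_Ioc, ← intervalIntegral.integral_of_le ht.1]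
      refine (integral_eq_of_hasDerivAt_off_countable_of_le (fun r => ψ (X r a)) _ ht.1 hS
        ?_ ?_ ?_).symm
      · exact hψ.continuous.comp_continuousOn (h2.mono (Icc_subset_Icc_right ht.2))
      · intro r hr
        have h4 := h3 r ⟨⟨hr.1.1, hr.1.2.trans_le ht.2⟩, hr.2⟩
        have h5 := (hψ1 (X r a)).hasGradientAt.hasFDerivAt
        have := h5.comp_hasDerivAt r h4
        simpa [Function.comp_def] using this
      · rw [intervalIntegrable_iff_integrableOn_Icc_of_le ht.1]
        have h5 : Measurable (fun r => X r a) := hX.comp (measurable_id.prodMk measurable_const)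
        have h6 : Measurable (fun r => V r a) := hV.comp (measurable_id.prodMk measurable_const)
        refine (integrableOn_const (C := G * C) (by simp)).mono'
          ((hgc.measurable.comp h5).inner h6).aestronglyMeasurable ?_
        filter_upwards [ae_restrict_mem measurableSet_Icc] with r hr
        have h7 := (hC a ha r ⟨hr.1, hr.2.trans ht.2⟩).2
        refine (norm_inner_le_norm _ _).trans
          (mul_le_mul (hG _) h7 (norm_nonneg _) ((norm_nonneg _).trans (hG 0)))
    rw [integral_map (hXt t).aemeasurable hψ.continuous.aestronglyMeasurable,
      integral_map (hXt 0).aemeasurable hψ.continuous.aestronglyMeasurable,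
      ← integral_sub (hψi t) (hψi 0)]
    have e1 : ∫ a, (ψ (X t a) - ψ (X 0 a)) ∂P
        = ∫ a, (∫ r in Icc 0 t, (inner ℝ (gradient ψ (X r a)) (V r a) : ℝ)) ∂P := by
      refine integral_congr_ae ?_
      filter_upwards [hs] with a ha using hftc a ha
    rw [e1]
    have e2 : ∀ r, ∫ x, (inner ℝ (gradient ψ x) (v x + w (x, r)) : ℝ) ∂(P.map (X r))
        = ∫ a, (inner ℝ (gradient ψ (X r a)) (v (X r a) + w (X r a, r)) : ℝ) ∂P := by
      intro r
      refine integral_map (hXt r).aemeasurable ?_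
      have : Measurable (fun x => v x + w (x, r)) := hwv.comp (measurable_id.prodMk measurable_const)
      exact (hgc.measurable.inner this).aestronglyMeasurable
    simp only [e2]
    have hmt : volume.restrict (Icc 0 t) = m.restrict (Icc 0 t) := by
      rw [hm, Measure.restrict_restrict measurableSet_Icc,
        inter_eq_left.2 (Icc_subset_Icc_right ht.2)]
    have hRt : (m.restrict (Icc 0 t)).prod P = ρ.restrict (Icc 0 t ×ˢ univ) := by
      rw [hρ, ← Measure.prod_restrict, Measure.restrict_univ]
    have hSt : MeasurableSet (Icc 0 t ×ˢ (univ : Set α)) := measurableSet_Icc.prod MeasurableSet.univ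
    have i1 := (hin _ hV hVi).restrict (s := Icc 0 t ×ˢ univ)
    have i2 := (hin _ (hwv.comp hQ) (hvi.add hwi)).restrict (s := Icc 0 t ×ˢ univ)
    rw [hmt]
    rw [← hRt] at i1 i2
    have e3 := integral_prod_symm _ i1
    have e4 := integral_prod _ i2
    simp only [Function.comp_def, hQdef] at e3 e4
    rw [← e3, ← e4, hRt]
    have e5 := hwD ((Prod.snd ⁻¹' (Icc 0 t)).indicator fun q => gradient ψ q.1)
      ((hgc.measurable.comp measurable_fst).indicator (measurable_snd measurableSet_Icc))
      ⟨G, fun b => (norm_indicator_le_norm_self _ _).trans (hG _)⟩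
    have e6 : ∀ F : ℝ × α → Euc d,
        ∫ q, (inner ℝ ((Prod.snd ⁻¹' (Icc 0 t)).indicator (fun q => gradient ψ q.1) (Q q)) (F q) : ℝ) ∂ρ
        = ∫ q in Icc 0 t ×ˢ univ, (inner ℝ (gradient ψ (X q.1 q.2)) (F q) : ℝ) ∂ρ := by
      intro F
      rw [← integral_indicator hSt]
      congr 1
      funext q
      by_cases hq : q.1 ∈ Icc 0 t
      · have h1 : Q q ∈ Prod.snd ⁻¹' (Icc 0 t) := hq
        have h2 : q ∈ Icc 0 t ×ˢ (univ : Set α) := ⟨hq, mem_univ _⟩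
        rw [indicator_of_mem h1, indicator_of_mem h2]
      · have h1 : Q q ∉ Prod.snd ⁻¹' (Icc 0 t) := hq
        have h2 : q ∉ Icc 0 t ×ˢ (univ : Set α) := fun h => hq h.1
        rw [indicator_of_notMem h1, indicator_of_notMem h2, inner_zero_left]
    rw [e6, e6] at e5
    simp only [inner_add_right, hDdef, inner_sub_right, hQdef] at e5 ⊢
    have i3 := (hin _ (hwm.comp hQ) hwi).restrict (s := Icc 0 t ×ˢ univ)
    simp only [Function.comp_def, hQdef] at i3
    rw [integral_add (hin _ hvX hvi).restrict i3]
    rw [integral_sub (hin _ hV hVi).restrict (hin _ hvX hvi).restrict] at e5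
    rw [e5]
    ring
  · refine Measure.map_congr ?_
    filter_upwards [hs] with a ha using (H a ha).1
  · refine Measure.map_congr ?_
    filter_upwards [hs] with a ha using (H a ha).2.1

/-- Exact controllability of the transport equation with a Borel localized
control, under the geometric condition. -/
theorem exact_controllability_borel
    (d : ℕ) (ω : Set (Euc d)) (hω : ω.Nonempty) (hωo : IsOpen ω) (hωc : IsConnected ω)
    (v : Euc d → Euc d) (hvL : ∃ K : ℝ≥0, LipschitzWith K v)
    (hvB : ∃ C : ℝ, ∀ x, ‖v x‖ ≤ C)
    (μ0 μ1 : Measure (Euc d)) [IsProbabilityMeasure μ0] [IsProbabilityMeasure μ1]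
    (h0K : IsCompact (msupport μ0)) (h1K : IsCompact (msupport μ1))
    (Φv : ℝ → Euc d → Euc d) (hΦv : IsFlow (fun x _ => v x) Φv)
    (hgeo0 : ∀ x ∈ msupport μ0, ∃ t : ℝ, 0 < t ∧ Φv t x ∈ ω)
    (hgeo1 : ∀ x ∈ msupport μ1, ∃ t : ℝ, 0 < t ∧ Φv (-t) x ∈ ω) :
    ∃ T : ℝ, 0 < T ∧
      ∃ (u : Euc d → ℝ → Euc d) (μ : ℝ → Measure (Euc d)),
        Measurable (fun q : Euc d × ℝ => u q.1 q.2) ∧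
        (∀ x t, x ∉ ω → u x t = 0) ∧
        (∀ t ∈ Icc (0:ℝ) T, IsCompact (msupport (μ t))) ∧
        IsWeakSolutionOn T (fun x t => v x + u x t) μ ∧
        μ 0 = μ0 ∧ μ T = μ1 := by
  obtain ⟨K, hK⟩ := hvL
  obtain ⟨C, hC⟩ := hvB
  obtain ⟨p, hp⟩ := hω
  obtain ⟨T₁, hT₁, F₁⟩ := Fam.compact hωo hωc hK hC hΦv hp h0K hgeo0
  have hK' : LipschitzWith K (fun x => - v x) := hK.neg
  obtain ⟨T₂, hT₂, F₂⟩ := Fam.compact hωo hωc hK' (fun x => by rw [norm_neg]; exact hC x)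
    (flow_neg hΦv) hp h1K hgeo1
  have F₂' : Fam v ω T₂ (fun _ => p) id (msupport μ1) := by
    simpa only [neg_neg] using F₂.reverse
  have G₁ := (F₁.comp (measurable_fst (α := Euc d) (β := Euc d))).mono
    (s₁ := msupport μ0 ×ˢ msupport μ1) (fun q hq => hq.1)
  have G₂ := (F₂'.comp (measurable_snd (α := Euc d) (β := Euc d))).mono
    (s₁ := msupport μ0 ×ˢ msupport μ1) (fun q hq => hq.2)
  have G : Fam v ω (T₁ + T₂) (Prod.fst : Euc d × Euc d → Euc d) Prod.snd
    (msupport μ0 ×ˢ msupport μ1) := G₁.trans hT₁ hT₂ G₂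
  have hs : ∀ᵐ q ∂(μ0.prod μ1), q ∈ msupport μ0 ×ˢ msupport μ1 := by
    have h0 : ∀ᵐ x ∂μ0, x ∈ msupport μ0 := msupport_null μ0
    have h1 : ∀ᵐ x ∂μ1, x ∈ msupport μ1 := msupport_null μ1
    exact (Measure.quasiMeasurePreserving_fst.ae h0).and (Measure.quasiMeasurePreserving_snd.ae h1)
  obtain ⟨u, μ, h1, h2, h3, h4, h5, h6⟩ :=
    G.weak hωo hK.continuous hC (add_pos hT₁ hT₂) (μ0.prod μ1) hs
  refine ⟨T₁ + T₂, add_pos hT₁ hT₂, u, μ, h1, h2, h3, h4, ?_, ?_⟩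
  · rw [h5]; simp
  · rw [h6]; simp
end
end

section
/- Let ω ⊂ ℝ^d be a nonempty open connected set and v : ℝ^d → ℝ^d a Lipschitz, uniformly bounded vector field. If two compactly supported probability measures μ⁰, μ¹ on ℝ^d satisfy the geometric condition, then there exist real numbers T₀* > 0, T₁* > 0 and a nonempty open set ω₀ whose closure is compact and contained in ω, such that: (i) for each x⁰ ∈ supp(μ⁰) there exists t⁰ ∈ [0, T₀*] with Φ_{t⁰}^v(x⁰) ∈ ω₀; and (ii) for each x¹ ∈ supp(μ¹) there exists t¹ ∈ [0, T₁*] with Φ_{−t¹}^v(x¹) ∈ ω₀. -/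
open MeasureTheory Set
open scoped ENNReal NNReal

noncomputable section

theorem aux_integrable {d : ℕ} (v : Euc d → Euc d) (hvc : Continuous v)
    (hvB : ∃ C : ℝ, ∀ x, ‖v x‖ ≤ C) (x : Euc d) (y : ℝ → Euc d)
    (hy : ∀ t, y t = x + ∫ s in (0:ℝ)..t, v (y s)) (t : ℝ) (ht : 0 ≤ t) :
    IntervalIntegrable (fun s => v (y s)) volume 0 t := by
  obtain ⟨C, hC⟩ := hvB
  by_contra hcon
  have mono : ∀ a b : ℝ, 0 ≤ a → a ≤ b → IntervalIntegrable (fun s => v (y s)) volume 0 b →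
      IntervalIntegrable (fun s => v (y s)) volume 0 a := by
    intro a b ha hab h
    refine h.mono_set ?_
    rw [uIcc_of_le ha, uIcc_of_le (ha.trans hab)]
    exact Icc_subset_Icc_right hab
  set A : Set ℝ := {s | 0 ≤ s ∧ IntervalIntegrable (fun s => v (y s)) volume 0 s} with hA
  have h0A : (0:ℝ) ∈ A := ⟨le_rfl, IntervalIntegrable.refl⟩
  have hbdd : BddAbove A := by
    refine ⟨t, fun s hs => ?_⟩
    by_contra hlt
    exact hcon (mono t s ht (not_le.1 hlt).le hs.2)
  set τ := sSup A with hτ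
  have hcont : ContinuousOn (fun s => v (y s)) (Ico 0 τ) := by
    refine hvc.comp_continuousOn ?_
    intro s hs
    obtain ⟨u, hu, hsu⟩ := exists_lt_of_lt_csSup ⟨0, h0A⟩ hs.2
    have h1 : ContinuousOn (fun b => ∫ r in (0:ℝ)..b, v (y r)) (uIcc 0 u) :=
      intervalIntegral.continuousOn_primitive_interval' hu.2 left_mem_uIcc
    rw [uIcc_of_le hu.1] at h1
    have h2 : ContinuousWithinAt y (Icc 0 u) s := by
      have h3 : ContinuousOn y (Icc 0 u) := by
        have h4 : ContinuousOn (fun b => x + ∫ r in (0:ℝ)..b, v (y r)) (Icc 0 u) :=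
          continuousOn_const.add h1
        exact h4.congr fun r _ => hy r
      exact h3 s ⟨hs.1, hsu.le⟩
    refine h2.mono_of_mem_nhdsWithin ?_
    have : Iio u ∈ nhds s := Iio_mem_nhds hsu
    filter_upwards [self_mem_nhdsWithin, mem_nhdsWithin_of_mem_nhds this] with r hr hr2
    exact ⟨hr.1, le_of_lt hr2⟩
  have hconst : ∀ s ∈ Ioi τ, v (y s) = v x := by
    intro s hs
    have h0 : 0 ≤ τ := le_csSup hbdd h0A
    have hn : ¬ IntervalIntegrable (fun s => v (y s)) volume 0 s := by
      intro h
      exact absurd (le_csSup hbdd (show s ∈ A from ⟨h0.trans (le_of_lt hs), h⟩)) (not_le.2 hs)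
    rw [hy s, intervalIntegral.integral_undef hn, add_zero]
  have m1 : AEStronglyMeasurable (fun s => v (y s)) (volume.restrict (Ico 0 τ)) :=
    hcont.aestronglyMeasurable measurableSet_Ico
  have m2 : AEStronglyMeasurable (fun s => v (y s)) (volume.restrict {τ}) := by
    rw [Measure.restrict_eq_zero.2 (measure_singleton τ)]
    exact aestronglyMeasurable_zero_measure _
  have m3 : AEStronglyMeasurable (fun s => v (y s)) (volume.restrict (Ioi τ)) := by
    have : ContinuousOn (fun s => v (y s)) (Ioi τ) :=
      (continuousOn_const (c := v x)).congr hconst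
    exact this.aestronglyMeasurable measurableSet_Ioi
  have m : AEStronglyMeasurable (fun s => v (y s)) (volume.restrict (Ioc 0 t)) := by
    refine (aestronglyMeasurable_union_iff.2
      ⟨aestronglyMeasurable_union_iff.2 ⟨m1, m2⟩, m3⟩).mono_set ?_
    intro s hs
    rcases lt_trichotomy s τ with h | h | h
    · exact Or.inl (Or.inl ⟨hs.1.le, h⟩)
    · exact Or.inl (Or.inr h)
    · exact Or.inr h
  apply hcon
  rw [intervalIntegrable_iff_integrableOn_Ioc_of_le ht]
  exact Integrable.of_bound m C (Filter.Eventually.of_forall fun s => hC _)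

theorem aux_cont {d : ℕ} (v : Euc d → Euc d) (K : ℝ≥0) (hvL : LipschitzWith K v)
    (hvB : ∃ C : ℝ, ∀ x, ‖v x‖ ≤ C) (Φ : ℝ → Euc d → Euc d)
    (hΦ : IsFlow (fun x _ => v x) Φ) (t : ℝ) (ht : 0 ≤ t) : Continuous (Φ t) := by
  have hint : ∀ x, ∀ b : ℝ, 0 ≤ b → IntervalIntegrable (fun s => v (Φ s x)) volume 0 b :=
    fun x b hb => aux_integrable v hvL.continuous hvB x (fun s => Φ s x) (fun s => hΦ x s) b hb
  have heq : ∀ x, (fun s => Φ s x) = fun b => x + ∫ r in (0:ℝ)..b, v (Φ r x) :=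
    fun x => funext (hΦ x)
  have hc : ∀ x, ∀ b : ℝ, 0 ≤ b → ContinuousOn (fun s => Φ s x) (Icc 0 b) := by
    intro x b hb
    have h1 := intervalIntegral.continuousOn_primitive_interval' (hint x b hb) left_mem_uIcc
    rw [uIcc_of_le hb] at h1
    rw [heq x]
    exact continuousOn_const.add h1
  have hd : ∀ x, ∀ s ∈ Ico 0 t,
      HasDerivWithinAt (fun s => Φ s x) (v (Φ s x)) (Ici s) s := by
    intro x s hs
    have hcv : ContinuousOn (fun s => v (Φ s x)) (Icc 0 t) :=
      hvL.continuous.comp_continuousOn (hc x t ht)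
    have hmem : Icc 0 t ∈ nhdsWithin s (Ioi s) := by
      filter_upwards [self_mem_nhdsWithin, mem_nhdsWithin_of_mem_nhds (Iio_mem_nhds hs.2)]
        with r hr hr2
      exact ⟨hs.1.trans (le_of_lt hr), le_of_lt hr2⟩
    have hcw : ContinuousWithinAt (fun s => v (Φ s x)) (Ioi s) s :=
      (hcv s ⟨hs.1, hs.2.le⟩).mono_of_mem_nhdsWithin hmem
    have := intervalIntegral.integral_hasDerivWithinAt_right (s := Ici s) (t := Ioi s)
      (hint x s hs.1)
      ⟨Icc 0 t, hmem, hcv.aestronglyMeasurable measurableSet_Icc⟩ hcw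
    rw [heq x]
    exact this.const_add x
  have h0 : ∀ x, Φ 0 x = x := fun x => by rw [hΦ x 0]; simp
  have hlip : LipschitzWith (Real.toNNReal (Real.exp (K * t))) (Φ t) := by
    refine LipschitzWith.of_dist_le_mul fun x z => ?_
    have := dist_le_of_trajectories_ODE (v := fun _ => v) (δ := dist x z) (fun _ => hvL)
      (hc x t ht) (hd x) (hc z t ht) (hd z) (by simp [h0]) t ⟨ht, le_rfl⟩
    rw [Real.coe_toNNReal _ (Real.exp_pos _).le, mul_comm]
    simpa using this
  exact hlip.continuous

theorem aux_key {d : ℕ} (ω : Set (Euc d)) (hωo : IsOpen ω)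
    (v : Euc d → Euc d) (K : ℝ≥0) (hvL : LipschitzWith K v)
    (hvB : ∃ C : ℝ, ∀ x, ‖v x‖ ≤ C) (Φ : ℝ → Euc d → Euc d)
    (hΦ : IsFlow (fun x _ => v x) Φ) (S : Set (Euc d)) (hS : IsCompact S)
    (hgeo : ∀ x ∈ S, ∃ t : ℝ, 0 < t ∧ Φ t x ∈ ω) :
    ∃ (T : ℝ) (C : Set (Euc d)), 0 < T ∧ IsCompact C ∧ C ⊆ ω ∧
      ∀ x ∈ S, ∃ t ∈ Icc (0:ℝ) T, Φ t x ∈ C := by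
  refine hS.induction_on (p := fun S => ∃ (T : ℝ) (C : Set (Euc d)), 0 < T ∧ IsCompact C ∧ C ⊆ ω ∧
      ∀ x ∈ S, ∃ t ∈ Icc (0:ℝ) T, Φ t x ∈ C) ?_ ?_ ?_ ?_
  · exact ⟨1, ∅, one_pos, isCompact_empty, empty_subset _, by simp⟩
  · rintro s t hst ⟨T, C, h1, h2, h3, h4⟩
    exact ⟨T, C, h1, h2, h3, fun x hx => h4 x (hst hx)⟩
  · rintro s t ⟨T, C, h1, h2, h3, h4⟩ ⟨T', C', h1', h2', h3', h4'⟩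
    refine ⟨max T T', C ∪ C', lt_max_of_lt_left h1, h2.union h2', union_subset h3 h3', ?_⟩
    rintro x (hx | hx)
    · obtain ⟨r, hr, hrC⟩ := h4 x hx
      exact ⟨r, ⟨hr.1, hr.2.trans (le_max_left _ _)⟩, Or.inl hrC⟩
    · obtain ⟨r, hr, hrC⟩ := h4' x hx
      exact ⟨r, ⟨hr.1, hr.2.trans (le_max_right _ _)⟩, Or.inr hrC⟩
  · intro x hx
    obtain ⟨t, ht, hxt⟩ := hgeo x hx
    obtain ⟨C, hC, hxC, hCω⟩ := exists_compact_subset hωo hxt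
    refine ⟨Φ t ⁻¹' interior C, mem_nhdsWithin_of_mem_nhds
      ((isOpen_interior.preimage (aux_cont v K hvL hvB Φ hΦ t ht.le)).mem_nhds hxC),
      t, C, ht, hC, hCω, fun z hz => ⟨t, ⟨ht.le, le_rfl⟩, interior_subset hz⟩⟩

/-- If the geometric condition holds, then it holds with uniformly bounded times
and with the target set a nonempty open set compactly contained in `ω`. -/
theorem geometric_condition_uniform
    (d : ℕ) (ω : Set (Euc d)) (hω : ω.Nonempty) (hωo : IsOpen ω) (hωc : IsConnected ω)
    (v : Euc d → Euc d) (hvL : ∃ K : ℝ≥0, LipschitzWith K v)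
    (hvB : ∃ C : ℝ, ∀ x, ‖v x‖ ≤ C)
    (μ0 μ1 : Measure (Euc d)) [IsProbabilityMeasure μ0] [IsProbabilityMeasure μ1]
    (h0K : IsCompact (msupport μ0)) (h1K : IsCompact (msupport μ1))
    (Φv : ℝ → Euc d → Euc d) (hΦv : IsFlow (fun x _ => v x) Φv)
    (hgeo0 : ∀ x ∈ msupport μ0, ∃ t : ℝ, 0 < t ∧ Φv t x ∈ ω)
    (hgeo1 : ∀ x ∈ msupport μ1, ∃ t : ℝ, 0 < t ∧ Φv (-t) x ∈ ω) :
    ∃ (T0 T1 : ℝ) (ω0 : Set (Euc d)), 0 < T0 ∧ 0 < T1 ∧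
      ω0.Nonempty ∧ IsOpen ω0 ∧ IsCompact (closure ω0) ∧ closure ω0 ⊆ ω ∧
      (∀ x ∈ msupport μ0, ∃ t ∈ Icc (0:ℝ) T0, Φv t x ∈ ω0) ∧
      (∀ x ∈ msupport μ1, ∃ t ∈ Icc (0:ℝ) T1, Φv (-t) x ∈ ω0) := by
  obtain ⟨K, hK⟩ := hvL
  obtain ⟨T0, C0, hT0, hC0, hC0ω, h0⟩ := aux_key ω hωo v K hK hvB Φv hΦv _ h0K hgeo0
  have hneg : IsFlow (fun x _ => -v x) (fun t => Φv (-t)) := by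
    intro x t
    have h1 := intervalIntegral.integral_comp_neg (a := 0) (b := t) (fun s => v (Φv s x))
    show Φv (-t) x = x + ∫ s in (0:ℝ)..t, -v (Φv (-s) x)
    rw [intervalIntegral.integral_neg, h1, hΦv x (-t), neg_zero,
      intervalIntegral.integral_symm]
  obtain ⟨T1, C1, hT1, hC1, hC1ω, h1⟩ := aux_key ω hωo (fun x => -v x) K hK.neg
    (by simpa using hvB) (fun t => Φv (-t)) hneg _ h1K hgeo1
  obtain ⟨p, hp⟩ := hω
  obtain ⟨V, hVo, hV, hVω, hVc⟩ := exists_open_between_and_isCompact_closure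
    ((hC0.union hC1).union (isCompact_singleton (x := p))) hωo
    (union_subset (union_subset hC0ω hC1ω) (singleton_subset_iff.2 hp))
  refine ⟨T0, T1, V, hT0, hT1, ⟨p, hV (Or.inr rfl)⟩, hVo, hVc, hVω, ?_, ?_⟩
  · intro x hx
    obtain ⟨t, ht, h⟩ := h0 x hx
    exact ⟨t, ht, hV (Or.inl (Or.inl h))⟩
  · intro x hx
    obtain ⟨t, ht, h⟩ := h1 x hx
    exact ⟨t, ht, hV (Or.inl (Or.inr h))⟩
end
end
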